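/- arXiv:1005.2553 — 7 statements merged into one kernel-verified Lean document; each statement's English description precedes it below -/
import Mathlib

section
/- Let n > 1 and let r = (r_1, …, r_n) ∈ ℕ^n satisfy r_1 + 2r_2 + ⋯ + n·r_n = n and |r| := r_1 + ⋯ + r_n < n. Then the number N of Dyck paths of length 2n with no returns and with ascent type r satisfies N · (n − |r| − 1)! · r_1! r_2! ⋯ r_n! = (n − 2)!. -/
/-- A Dyck path of length `2n`: a list of `2n` steps (`true` = U, `false` = D) with `n` U's
and `n` D's such that every prefix has at least as many U's as D's. -/
def IsDyckPath (n : ℕ) (l : List Bool) : Prop :=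
  l.length = 2 * n ∧ l.count true = n ∧ l.count false = n ∧
    ∀ k, (l.take k).count false ≤ (l.take k).count true

/-- The path `l` has ascent type `r = (r_1, …, r_n)`: for each `i`, the number of maximal
consecutive runs of U-steps of length `i` is `r_i`. -/
def HasAscentType (n : ℕ) (l : List Bool) (r : Fin n → ℕ) : Prop :=
  ∀ i : Fin n, ((l.splitOn false).map List.length).count (i.1 + 1) = r i

open Finset in
theorem aux_fin (s : Multiset ℕ) (Q : List ℕ → Prop) :
    {L : List ℕ | (L : Multiset ℕ) = s ∧ Q L}.Finite := by
  induction s using Quotient.inductionOn with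
  | h l =>
    apply Set.Finite.subset (List.finite_toSet l.permutations)
    rintro L ⟨h, -⟩
    have : L.Perm l := Quotient.exact h
    simpa using this

theorem aux_rec (s : Multiset ℕ) (hs : s ≠ 0) (Q : List ℕ → Prop) :
    {L : List ℕ | (L : Multiset ℕ) = s ∧ Q L}.ncard =
      ∑ x ∈ s.toFinset, {L : List ℕ | (L : Multiset ℕ) = s.erase x ∧ Q (x :: L)}.ncard := by
  classical
  have key : {L : List ℕ | (L : Multiset ℕ) = s ∧ Q L} =
      ↑(s.toFinset.biUnion fun x =>
        ((aux_fin (s.erase x) (fun L => Q (x :: L))).toFinset.image (List.cons x))) := by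
    ext L
    simp only [Set.mem_ofPred_eq, Finset.coe_biUnion, Finset.coe_image, Set.Finite.coe_toFinset,
      Set.mem_iUnion, Finset.mem_coe, Multiset.mem_toFinset, Set.mem_image, exists_prop]
    constructor
    · rintro ⟨h, hQ⟩
      cases L with
      | nil => exact absurd h.symm hs
      | cons a L =>
        refine ⟨a, ?_, L, ⟨?_, hQ⟩, rfl⟩
        · rw [← h]; simp
        · rw [← h]; simp
    · rintro ⟨x, hx, L', ⟨h, hQ⟩, rfl⟩
      refine ⟨?_, hQ⟩
      rw [← Multiset.cons_coe, h, Multiset.cons_erase hx]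
  rw [key, Set.ncard_coe_finset, Finset.card_biUnion]
  · apply Finset.sum_congr rfl
    intro x _
    rw [Finset.card_image_of_injective _ (List.cons_injective),
      Set.ncard_eq_toFinset_card _ (aux_fin (s.erase x) (fun L => Q (x :: L)))]
  · intro x _ y _ hxy
    simp only [Function.onFun]
    rw [Finset.disjoint_left]
    intro L h1 h2
    rw [Finset.mem_image] at h1 h2
    obtain ⟨L1, _, rfl⟩ := h1
    obtain ⟨L2, _, h⟩ := h2
    simp only [List.cons.injEq] at h
    exact hxy h.1.symm

def auxD (s : Multiset ℕ) : ℕ := ∏ x ∈ s.toFinset, (s.count x).factorial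

theorem auxD_superset (s : Multiset ℕ) (t : Finset ℕ) (h : s.toFinset ⊆ t) :
    auxD s = ∏ x ∈ t, (s.count x).factorial := by
  apply Finset.prod_subset h
  intro x _ hx
  rw [Multiset.mem_toFinset] at hx
  simp [Multiset.count_eq_zero_of_notMem hx]

theorem auxD_erase (s : Multiset ℕ) (x : ℕ) (hx : x ∈ s) :
    auxD s = s.count x * auxD (s.erase x) := by
  rw [auxD_superset (s.erase x) s.toFinset
    (Multiset.toFinset_subset.2 (Multiset.erase_subset _ _)), auxD]
  have hx' : x ∈ s.toFinset := by simpa using hx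
  rw [← Finset.mul_prod_erase _ _ hx', ← Finset.mul_prod_erase _ _ hx', ← mul_assoc]
  congr 1
  · rw [Multiset.count_erase_self, Nat.mul_factorial_pred]
    exact (Multiset.count_pos.2 hx).ne'
  · apply Finset.prod_congr rfl
    intro y hy
    rw [Multiset.count_erase_of_ne (Finset.ne_of_mem_erase hy)]

def auxP : ℕ → List ℕ → Prop
  | h, [] => h = 0
  | h, a :: L => 0 < h ∧ auxP (h - 1 + a) L

theorem aux_sum (s : Multiset ℕ) (g : ℕ → ℕ) :
    ∑ x ∈ s.toFinset, s.count x * g x = (s.map g).sum := by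
  rw [Finset.sum_multiset_map_count]; simp

theorem aux_K (m : ℕ) : ∀ (s : Multiset ℕ) (h : ℕ), s.card = m + 1 → s.sum + h = m + 1 →
    {L : List ℕ | (L : Multiset ℕ) = s ∧ auxP h L}.ncard * auxD s = h * m.factorial := by
  induction m with
  | zero =>
    intro s h hc hs
    obtain ⟨a, rfl⟩ := Multiset.card_eq_one.1 hc
    rw [aux_rec _ (by simp)]
    simp only [Multiset.sum_singleton] at hs
    have hd : auxD {a} = 1 := by simp [auxD]
    rw [hd]
    simp only [Multiset.toFinset_singleton, Finset.sum_singleton, auxP, Multiset.erase_singleton]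
    rcases Nat.eq_zero_or_pos h with rfl | hp
    · simp
    · obtain ⟨rfl, rfl⟩ : h = 1 ∧ a = 0 := by omega
      have : {L : List ℕ | (L : Multiset ℕ) = 0 ∧ 0 < 1 ∧ auxP (1 - 1 + 0) L} = {[]} := by
        ext L
        simp only [Set.mem_ofPred_eq, Set.mem_singleton_iff, Multiset.coe_eq_zero]
        constructor
        · exact fun h => h.1
        · rintro rfl; simp [auxP]
      rw [this]; simp
  | succ m ih =>
    intro s h hc hs
    have hs0 : s ≠ 0 := by rintro rfl; simp at hc
    rw [aux_rec _ hs0]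
    rcases Nat.eq_zero_or_pos h with rfl | hp
    · simp [auxP]
    · have h1 : ∀ x ∈ s.toFinset,
          {L : List ℕ | (L : Multiset ℕ) = s.erase x ∧ auxP h (x :: L)}.ncard * auxD s
            = (s.count x * (h - 1 + x)) * m.factorial := by
        intro x hx
        rw [Multiset.mem_toFinset] at hx
        have e1 : x + (s.erase x).sum = s.sum := by
          rw [← Multiset.sum_cons, Multiset.cons_erase hx]
        have := ih (s.erase x) (h - 1 + x)
          (by rw [Multiset.card_erase_of_mem hx, hc]; rfl) (by omega)
        rw [auxD_erase s x hx]
        simp only [auxP, hp, true_and]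
        rw [mul_left_comm, this, mul_assoc]
      rw [Finset.sum_mul, Finset.sum_congr rfl h1, ← Finset.sum_mul, aux_sum]
      rw [Multiset.sum_map_add, Multiset.map_const', Multiset.sum_replicate, Multiset.map_id', hc,
        Nat.factorial_succ, ← mul_assoc]
      congr 1
      obtain ⟨k, rfl⟩ : ∃ k, h = k + 1 := ⟨h - 1, by omega⟩
      simp only [Nat.add_sub_cancel, smul_eq_mul]
      have : s.sum = m + 1 - k := by omega
      have hk : k ≤ m + 1 := by omega
      rw [this]
      zify [hk]
      ring

def auxB : ℕ → List Bool → Prop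
  | h, [] => h = 0
  | h, true :: l => 0 < h ∧ auxB (h + 1) l
  | h, false :: l => 0 < h ∧ auxB (h - 1) l

theorem auxB_iff (l : List Bool) : ∀ h, auxB h l ↔
    (∀ k < l.length, (l.take k).count false < h + (l.take k).count true) ∧
      l.count false = h + l.count true := by
  induction l with
  | nil => intro h; simp [auxB, eq_comm]
  | cons b l ih =>
    intro h
    have hk : ∀ p : ℕ → Prop, (∀ k < (b :: l).length, p k) ↔ p 0 ∧ ∀ k < l.length, p (k + 1) := by
      intro p
      constructor
      · intro H
        exact ⟨H 0 (by simp), fun k hk => H (k+1) (by simpa using hk)⟩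
      · rintro ⟨h0, h1⟩ k hk
        cases k with
        | zero => exact h0
        | succ k => exact h1 k (by simpa using hk)
    rw [hk]
    cases b
    · simp only [auxB, ih, List.take_zero, List.take_succ_cons, List.count_nil, List.count_cons]
      simp only [add_zero, beq_self_eq_true, if_true, and_assoc]
      apply and_congr_right
      intro hp
      simp
      constructor
      · rintro ⟨h1, h2⟩
        exact ⟨fun k hk => by have := h1 k hk; omega, by omega⟩
      · rintro ⟨h1, h2⟩
        exact ⟨fun k hk => by have := h1 k hk; omega, by omega⟩
    · simp only [auxB, ih, List.take_zero, List.take_succ_cons, List.count_nil, List.count_cons]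
      simp only [add_zero, beq_self_eq_true, if_true, and_assoc]
      apply and_congr_right
      intro hp
      simp
      constructor
      · rintro ⟨h1, h2⟩
        exact ⟨fun k hk => by have := h1 k hk; omega, by omega⟩
      · rintro ⟨h1, h2⟩
        exact ⟨fun k hk => by have := h1 k hk; omega, by omega⟩

def auxF : List ℕ → List Bool
  | [] => []
  | a :: L => List.replicate a true ++ false :: auxF L

theorem auxB_block (a : ℕ) (l : List Bool) : ∀ h,
    auxB h (List.replicate a true ++ false :: l) ↔ 0 < h ∧ auxB (h - 1 + a) l := by
  induction a with
  | zero => intro h; simp [auxB]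
  | succ a ih =>
    intro h
    rw [List.replicate_succ, List.cons_append, auxB, ih]
    have : 0 < h → h + 1 - 1 + a = h - 1 + (a + 1) := by omega
    constructor
    · rintro ⟨h1, _, h2⟩
      exact ⟨h1, this h1 ▸ h2⟩
    · rintro ⟨h1, h2⟩
      exact ⟨h1, by omega, (this h1).symm ▸ h2⟩

theorem auxB_F (L : List ℕ) : ∀ h, auxB h (auxF L) ↔ auxP h L := by
  induction L with
  | nil => intro h; simp [auxB, auxF, auxP]
  | cons a L ih => intro h; rw [auxF, auxB_block, auxP, ih]

theorem auxB_exists (l : List Bool) : ∀ h, auxB h l → ∃ L, auxF L = l := by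
  induction l with
  | nil => exact fun _ _ => ⟨[], rfl⟩
  | cons b l ih =>
    intro h hB
    cases b
    · obtain ⟨L, rfl⟩ := ih _ hB.2
      exact ⟨0 :: L, rfl⟩
    · obtain ⟨L, rfl⟩ := ih _ hB.2
      cases L with
      | nil => exact absurd hB.2 (by simp [auxF, auxB])
      | cons a L => exact ⟨(a + 1) :: L, rfl⟩

theorem auxF_false (L : List ℕ) : (auxF L).count false = L.length := by
  induction L with
  | nil => rfl
  | cons a L ih => simp [auxF, ih, List.count_replicate]

theorem auxF_true (L : List ℕ) : (auxF L).count true = L.sum := by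
  induction L with
  | nil => rfl
  | cons a L ih => simp [auxF, ih, List.count_replicate]

theorem auxF_split (L : List ℕ) : ((auxF L).splitOn false).map List.length = L ++ [0] := by
  induction L with
  | nil => simp [auxF]
  | cons a L ih =>
    rw [auxF, List.splitOn_append_cons_self_of_not_mem (by simp [List.mem_replicate])]
    simp [ih]

theorem auxF_inj : Function.Injective auxF := by
  intro L L' h
  have := auxF_split L
  rw [h, auxF_split] at this
  exact (List.append_cancel_right this).symm

theorem count_len (l : List Bool) : l.count true + l.count false = l.length := by
  induction l with
  | nil => rfl
  | cons b l ih => cases b <;> simp <;> omega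

def auxQ : List ℕ → Prop
  | [] => False
  | a :: L => 0 < a ∧ auxP (a - 1) L

/-- membership, without the ascent type -/
theorem aux_path (n : ℕ) (hn : 1 < n) (l : List Bool) :
    (IsDyckPath n l ∧ ∀ k, 0 < k → k < 2 * n → (l.take k).count true ≠ (l.take k).count false) ↔
    ∃ L, auxF L = l ∧ auxQ L ∧ L.length = n ∧ L.sum = n := by
  constructor
  · rintro ⟨⟨h1, h2, h3, h4⟩, h5⟩
    cases l with
    | nil => simp at h1; omega
    | cons b l =>
      cases b
      · have := h4 1
        simp at this
      · have hB : auxB 1 l := by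
          rw [auxB_iff]
          simp at h1 h2 h3
          refine ⟨?_, by omega⟩
          intro k hk
          have a1 := h4 (k + 1)
          have a2 := h5 (k + 1) (by omega) (by omega)
          simp at a1 a2
          omega
        obtain ⟨L, rfl⟩ := auxB_exists _ _ hB
        rw [auxB_F] at hB
        cases L with
        | nil => simp [auxP] at hB
        | cons a L =>
          refine ⟨(a + 1) :: L, rfl, ?_, ?_, ?_⟩
          · simpa [auxQ, auxP] using hB
          · rw [← auxF_false, ← h3]; rfl
          · rw [← auxF_true, ← h2]; rfl
  · rintro ⟨L, rfl, hQ, hl, hs⟩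
    rw [← auxF_false] at hl
    rw [← auxF_true] at hs
    have hlen := count_len (auxF L)
    cases L with
    | nil => exact hQ.elim
    | cons a L =>
      obtain ⟨ha, hP⟩ := hQ
      obtain ⟨a, rfl⟩ : ∃ b, a = b + 1 := ⟨a - 1, by omega⟩
      have hB : auxB 1 (auxF (a :: L)) := by
        rw [auxB_F, auxP]; simpa using hP
      have e : auxF ((a + 1) :: L) = true :: auxF (a :: L) := rfl
      rw [e] at hl hs hlen ⊢
      clear e
      generalize auxF (a :: L) = l at *
      rw [auxB_iff] at hB
      obtain ⟨b1, b2⟩ := hB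
      simp at hlen hl hs
      refine ⟨⟨by simp; omega, by simp; omega, by simp; omega, ?_⟩, ?_⟩
      · intro k
        cases k with
        | zero => simp
        | succ k =>
          simp
          rcases lt_or_ge k l.length with hk | hk
          · have := b1 k hk; omega
          · rw [List.take_of_length_le hk]; omega
      · intro k hk hk2
        cases k with
        | zero => omega
        | succ k =>
          simp
          have := b1 k (by omega)
          omega

def auxS (n : ℕ) (r : Fin n → ℕ) : Multiset ℕ :=
  Multiset.replicate (n - ∑ i, r i) 0 + ∑ i : Fin n, Multiset.replicate (r i) (i.1 + 1)

theorem auxS_zero (n : ℕ) (r : Fin n → ℕ) : (auxS n r).count 0 = n - ∑ i, r i := by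
  simp [auxS, Multiset.count_sum', Multiset.count_replicate]

theorem auxS_succ (n : ℕ) (r : Fin n → ℕ) (i : Fin n) : (auxS n r).count (i.1 + 1) = r i := by
  simp [auxS, Multiset.count_sum', Multiset.count_replicate, Fin.val_inj]

theorem auxS_le (n : ℕ) (r : Fin n → ℕ) : ∀ x ∈ auxS n r, x ∈ Finset.range (n + 1) := by
  intro x hx
  rw [auxS, Multiset.mem_add, Multiset.mem_sum] at hx
  simp only [Multiset.mem_replicate] at hx
  rw [Finset.mem_range]
  rcases hx with h | ⟨i, _, h⟩
  · omega
  · have := i.2; omega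

theorem auxS_card (n : ℕ) (r : Fin n → ℕ) (hr : ∑ i, r i < n) : (auxS n r).card = n := by
  simp [auxS]; omega

theorem auxS_sum (n : ℕ) (r : Fin n → ℕ) (hrv : ∑ i, (i.1 + 1) * r i = n) :
    (auxS n r).sum = n := by
  conv_rhs => rw [← hrv]
  simp [auxS, Multiset.sum_sum, mul_comm]

theorem auxS_iff (n : ℕ) (r : Fin n → ℕ) (hrv : ∑ i, (i.1 + 1) * r i = n) (hr : ∑ i, r i < n)
    (L : List ℕ) : (L : Multiset ℕ) = auxS n r ↔
      L.length = n ∧ L.sum = n ∧ ∀ i : Fin n, L.count (i.1 + 1) = r i := by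
  constructor
  · intro h
    refine ⟨?_, ?_, ?_⟩
    · rw [← Multiset.coe_card, h, auxS_card n r hr]
    · rw [← Multiset.sum_coe, h, auxS_sum n r hrv]
    · intro i; rw [← Multiset.coe_count, h, auxS_succ]
  · rintro ⟨h1, h2, h3⟩
    have hle : ∀ x ∈ (L : Multiset ℕ), x ∈ Finset.range (n + 1) := by
      intro x hx
      rw [Multiset.mem_coe] at hx
      have := List.le_sum_of_mem hx
      rw [Finset.mem_range]; omega
    ext x
    rcases Nat.lt_or_ge n x with hx | hx
    · rw [Multiset.count_eq_zero_of_notMem, Multiset.count_eq_zero_of_notMem]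
      · intro h; have := auxS_le n r x h; rw [Finset.mem_range] at this; omega
      · intro h; have := hle x h; rw [Finset.mem_range] at this; omega
    · cases x with
      | zero =>
        have a1 := Multiset.sum_count_eq_card hle
        rw [Finset.sum_range_succ', ← Fin.sum_univ_eq_sum_range
          (fun i => Multiset.count (i + 1) (L : Multiset ℕ))] at a1
        simp only [Multiset.coe_count, h3, Multiset.coe_card, h1] at a1
        rw [auxS_zero, Multiset.coe_count]; omega
      | succ x =>
        rw [auxS_succ n r ⟨x, hx⟩, Multiset.coe_count]
        exact h3 ⟨x, hx⟩

/-- The number `N` of Dyck paths of length `2n` with no returns and ascent type `r` satisfies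
`N · (n - |r| - 1)! · r! = (n - 2)!`.  (A return is a proper nonempty prefix with equally
many U's and D's.) -/
theorem card_dyck_no_returns_of_ascent_type (n : ℕ) (hn : 1 < n) (r : Fin n → ℕ)
    (hrv : ∑ i, (i.1 + 1) * r i = n) (hr : ∑ i, r i < n) :
    Nat.card {l : List Bool // IsDyckPath n l ∧ HasAscentType n l r ∧
        ∀ k, 0 < k → k < 2 * n → (l.take k).count true ≠ (l.take k).count false} *
      (n - (∑ i, r i) - 1).factorial * ∏ i, (r i).factorial = (n - 2).factorial := by
  have hset : {l : List Bool | IsDyckPath n l ∧ HasAscentType n l r ∧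
        ∀ k, 0 < k → k < 2 * n → (l.take k).count true ≠ (l.take k).count false} =
      auxF '' {L : List ℕ | (L : Multiset ℕ) = auxS n r ∧ auxQ L} := by
    ext l
    simp only [Set.mem_ofPred_eq, Set.mem_image]
    have htype : ∀ L, HasAscentType n (auxF L) r ↔ ∀ i : Fin n, L.count (i.1 + 1) = r i := by
      intro L
      simp only [HasAscentType, auxF_split, List.count_append]
      simp
    constructor
    · rintro ⟨h1, h2, h3⟩
      obtain ⟨L, rfl, hQ, hl, hs⟩ := (aux_path n hn l).1 ⟨h1, h3⟩
      exact ⟨L, ⟨(auxS_iff n r hrv hr L).2 ⟨hl, hs, (htype L).1 h2⟩, hQ⟩, rfl⟩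
    · rintro ⟨L, ⟨h, hQ⟩, rfl⟩
      obtain ⟨hl, hs, ht⟩ := (auxS_iff n r hrv hr L).1 h
      obtain ⟨h1, h3⟩ := (aux_path n hn _).2 ⟨L, rfl, hQ, hl, hs⟩
      exact ⟨h1, (htype L).2 ht, h3⟩
  have hcard : Nat.card {l : List Bool // IsDyckPath n l ∧ HasAscentType n l r ∧
        ∀ k, 0 < k → k < 2 * n → (l.take k).count true ≠ (l.take k).count false} =
      {L : List ℕ | (L : Multiset ℕ) = auxS n r ∧ auxQ L}.ncard := by
    rw [← Set.ncard_image_of_injective _ auxF_inj, ← hset]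
    rfl
  rw [hcard]
  have hc := auxS_card n r hr
  have hs := auxS_sum n r hrv
  have hD : auxD (auxS n r) = (n - ∑ i, r i).factorial * ∏ i, (r i).factorial := by
    rw [auxD_superset _ (Finset.range (n + 1))
      (fun x hx => auxS_le n r x (Multiset.mem_toFinset.1 hx)), Finset.prod_range_succ',
      ← Fin.prod_univ_eq_prod_range (fun i => ((auxS n r).count (i + 1)).factorial), mul_comm]
    simp only [auxS_zero, auxS_succ]
  have hsum : ((auxS n r).map (fun x => x - 1)).sum = n - ∑ i, r i := by
    have e : ∑ i, (i.1 + 1) * r i = ∑ i : Fin n, i.1 * r i + ∑ i, r i := by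
      rw [← Finset.sum_add_distrib]
      exact Finset.sum_congr rfl (fun i _ => by ring)
    rw [← aux_sum, Finset.sum_subset (s₂ := Finset.range (n + 1))
      (fun x hx => auxS_le n r x (Multiset.mem_toFinset.1 hx)), Finset.sum_range_succ',
      ← Fin.sum_univ_eq_sum_range (fun i => (auxS n r).count (i + 1) * (i + 1 - 1))]
    · simp only [auxS_succ, Nat.add_sub_cancel]
      simp only [mul_comm (r _)]
      omega
    · intro x _ hx
      rw [Multiset.mem_toFinset] at hx
      simp [Multiset.count_eq_zero_of_notMem hx]
  have hs0 : auxS n r ≠ 0 := by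
    intro h; rw [h] at hc; simp at hc; omega
  have hmain : {L : List ℕ | (L : Multiset ℕ) = auxS n r ∧ auxQ L}.ncard * auxD (auxS n r) =
      (n - ∑ i, r i) * (n - 2).factorial := by
    rw [aux_rec _ hs0]
    have h1 : ∀ x ∈ (auxS n r).toFinset,
        {L : List ℕ | (L : Multiset ℕ) = (auxS n r).erase x ∧ auxQ (x :: L)}.ncard *
          auxD (auxS n r) = ((auxS n r).count x * (x - 1)) * (n - 2).factorial := by
      intro x hx
      rw [Multiset.mem_toFinset] at hx
      rcases Nat.eq_zero_or_pos x with rfl | hp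
      · simp [auxQ]
      · have e1 : x + ((auxS n r).erase x).sum = (auxS n r).sum := by
          rw [← Multiset.sum_cons, Multiset.cons_erase hx]
        have := aux_K (n - 2) ((auxS n r).erase x) (x - 1)
          (by rw [Multiset.card_erase_of_mem hx, hc]; simp only [Nat.pred_eq_sub_one]; omega)
          (by omega)
        rw [auxD_erase _ x hx]
        simp only [auxQ, hp, true_and]
        rw [mul_left_comm, this, mul_assoc]
    rw [Finset.sum_mul, Finset.sum_congr rfl h1, ← Finset.sum_mul, aux_sum, hsum]
  rw [hD] at hmain
  have hpos : 0 < n - ∑ i, r i := by omega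
  apply Nat.eq_of_mul_eq_mul_left hpos
  rw [← hmain, ← Nat.mul_factorial_pred hpos.ne']
  ring
end

section
/- Let n, m ≥ 1 and let r = (r_1, …, r_n) ∈ ℕ^n satisfy r_1 + 2r_2 + ⋯ + n·r_n = n, |r| := r_1 + ⋯ + r_n < n, and m ≤ |r| and m < n. Then the number N of noncrossing set partitions of [n] of type r with exactly m connected components satisfies N · (n − |r| − 1)! · (|r| − m)! · r_1! r_2! ⋯ r_n! = m · (n − m − 1)! · (|r| − 1)!. -/
/-- A set partition of `[n] = {1, …, n}`, encoded as a `Finpartition` of `Finset.Icc 1 n`. -/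
abbrev SetPartitionOn (n : ℕ) := Finpartition (Finset.Icc 1 n)

/-- `π` has type `r = (r_1, …, r_n)` if for each `i` the number of blocks of size `i` is `r_i`. -/
def HasType {n : ℕ} (π : SetPartitionOn n) (r : Fin n → ℕ) : Prop :=
  ∀ i : Fin n, (π.parts.filter (fun B => B.card = i.1 + 1)).card = r i

/-- `π` is noncrossing: there are no `a < b < c < d` with `a, c` in one block and
`b, d` in a different block. -/
def Noncrossing {n : ℕ} (π : SetPartitionOn n) : Prop :=
  ¬ ∃ a b c d : ℕ, a < b ∧ b < c ∧ c < d ∧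
      ∃ B ∈ π.parts, ∃ B' ∈ π.parts, B ≠ B' ∧ a ∈ B ∧ c ∈ B ∧ b ∈ B' ∧ d ∈ B'

/-- `(i, j)` is an arc of `π`: `i < j` lie in a common block with no element of that
block strictly between them. -/
def IsArc {n : ℕ} (π : SetPartitionOn n) (i j : ℕ) : Prop :=
  i < j ∧ ∃ B ∈ π.parts, i ∈ B ∧ j ∈ B ∧ ∀ k ∈ B, ¬ (i < k ∧ k < j)

/-- `π` is nonnesting: there are no arcs `(a, d)` and `(b, c)` with `a < b < c < d`. -/
def Nonnesting {n : ℕ} (π : SetPartitionOn n) : Prop :=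
  ¬ ∃ a b c d : ℕ, a < b ∧ b < c ∧ c < d ∧ IsArc π a d ∧ IsArc π b c

/-- `i ∈ {1, …, n-1}` is a cut of `π` if no block contains both an element `≤ i` and an
element `> i`. -/
def IsCut {n : ℕ} (π : SetPartitionOn n) (i : ℕ) : Prop :=
  1 ≤ i ∧ i ≤ n - 1 ∧ ∀ B ∈ π.parts, (∀ x ∈ B, x ≤ i) ∨ (∀ x ∈ B, i < x)

/-- `π` is connected if it has no cuts. -/
def Connected {n : ℕ} (π : SetPartitionOn n) : Prop := ∀ i, ¬ IsCut π i

/-- The number of cuts of `π`; `π` has exactly `m` connected components iff this is `m - 1`. -/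
noncomputable def cutCount {n : ℕ} (π : SetPartitionOn n) : ℕ := Set.ncard {i : ℕ | IsCut π i}

namespace NCP
def good : ℕ → ℕ → List ℕ → Prop
  | h, M, [] => h = 0 ∧ M = 0
  | 0, M, x :: l => 1 ≤ x ∧ 1 ≤ M ∧ good (x - 1) (M - 1) l
  | h + 1, M, x :: l => good (h + x) M l

def P (S : Multiset ℕ) : ℕ := ∏ x ∈ S.toFinset, (S.count x).factorial

theorem P_cons (x : ℕ) (S : Multiset ℕ) : P (x ::ₘ S) = (S.count x + 1) * P S := by
  have h1 : P S = ∏ y ∈ (x ::ₘ S).toFinset, (S.count y).factorial := by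
    unfold P
    apply Finset.prod_subset
    · intro y; simp; tauto
    · intro y _ hy
      have : y ∉ S := by simpa using hy
      simp [Multiset.count_eq_zero_of_notMem this]
  have hx : x ∈ (x ::ₘ S).toFinset := by simp
  rw [h1, P, ← Finset.mul_prod_erase _ _ hx, ← Finset.mul_prod_erase _ _ hx,
    Multiset.count_cons_self, Nat.factorial_succ, mul_assoc]
  congr 2
  apply Finset.prod_congr rfl
  intro y hy
  rw [Multiset.count_cons_of_ne (Finset.ne_of_mem_erase hy)]

def lf (S : Multiset ℕ) : Finset (List ℕ) := S.lists.toFinset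

theorem mem_lf (S : Multiset ℕ) (l : List ℕ) : l ∈ lf S ↔ (l : Multiset ℕ) = S := by
  rw [lf, Multiset.mem_toFinset, Multiset.mem_lists_iff]
  exact eq_comm

open Classical in
noncomputable def T (S : Multiset ℕ) (Q : List ℕ → Prop) : ℕ :=
  ((lf S).filter Q).card * P S

theorem T_zero (Q : List ℕ → Prop) (h : Q []) : T 0 Q = 1 := by
  classical
  have : (lf (0 : Multiset ℕ)).filter Q = {[]} := by
    ext l
    simp only [Finset.mem_filter, mem_lf, Finset.mem_singleton]
    constructor
    · rintro ⟨h1, -⟩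
      simpa using h1
    · rintro rfl
      exact ⟨rfl, h⟩
  have hT : T 0 Q = ((lf (0 : Multiset ℕ)).filter Q).card * P 0 := by unfold T; congr!
  rw [hT, this]
  simp [P]

theorem T_congr (S : Multiset ℕ) (Q Q' : List ℕ → Prop) (h : ∀ l, Q l ↔ Q' l) : T S Q = T S Q' := by
  have : Q = Q' := funext fun l => propext (h l)
  rw [this]

theorem T_false (S : Multiset ℕ) (Q : List ℕ → Prop) (h : ∀ l : List ℕ, (l : Multiset ℕ) = S → ¬ Q l) : T S Q = 0 := by
  classical
  unfold T
  rw [Finset.filter_eq_empty_iff.2]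
  · simp
  · intro l hl
    exact h l ((mem_lf _ _).1 hl)

theorem T_rec (S : Multiset ℕ) (hS : S ≠ 0) (Q : List ℕ → Prop) :
    T S Q = (S.map (fun x => T (S.erase x) (fun l => Q (x :: l)))).sum := by
  classical
  rw [Finset.sum_multiset_map_count]
  have key : (lf S).filter Q = S.toFinset.biUnion (fun x =>
      ((lf (S.erase x)).filter (fun l => Q (x :: l))).image (List.cons x)) := by
    ext l
    simp only [Finset.mem_filter, mem_lf, Finset.mem_biUnion, Finset.mem_image,
      Multiset.mem_toFinset]
    constructor
    · rintro ⟨h1, h2⟩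
      cases l with
      | nil => exact absurd (by simpa using h1.symm) hS
      | cons x l => exact ⟨x, by simp [← h1], l, ⟨by simp [← h1], h2⟩, rfl⟩
    · rintro ⟨x, hx, l', ⟨h1, h2⟩, rfl⟩
      refine ⟨?_, h2⟩
      rw [← Multiset.cons_coe, h1, Multiset.cons_erase hx]
  have card : ((lf S).filter Q).card = ∑ x ∈ S.toFinset,
      ((lf (S.erase x)).filter (fun l => Q (x :: l))).card := by
    rw [key, Finset.card_biUnion]
    · apply Finset.sum_congr rfl
      intro x _
      exact Finset.card_image_of_injective _ (List.cons_injective)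
    · intro x _ y _ hxy
      rw [Function.onFun, Finset.disjoint_left]
      simp only [Finset.mem_image]
      rintro l ⟨a, -, rfl⟩ ⟨b, -, hb⟩
      exact hxy (List.cons.inj hb).1.symm
  have hT : T S Q = ((lf S).filter Q).card * P S := by unfold T; congr!
  rw [hT, card, Finset.sum_mul]
  apply Finset.sum_congr rfl
  intro x hx
  have hx' : x ∈ S := by simpa using hx
  have hP : P S = S.count x * P (S.erase x) := by
    conv_lhs => rw [← Multiset.cons_erase hx', P_cons]
    congr 1
    rw [Multiset.count_erase_self]
    have := Multiset.count_pos.2 hx'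
    omega
  rw [hP, T, smul_eq_mul]
  ring_nf

/-- words with z zeros and other letters U -/
noncomputable def V (z : ℕ) (U : Multiset ℕ) (h M : ℕ) : ℕ :=
  T (Multiset.replicate z 0 + U) (good h M)

theorem V_rec (z : ℕ) (U : Multiset ℕ) (hU : ∀ k ∈ U, 1 ≤ k) (Q : List ℕ → Prop)
    (hz : z + U.card ≠ 0) : T (Multiset.replicate z 0 + U) Q =
    z * T (Multiset.replicate (z - 1) 0 + U) (fun l => Q (0 :: l)) +
    (U.map (fun x => T (Multiset.replicate z 0 + U.erase x) (fun l => Q (x :: l)))).sum := by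
  rw [T_rec _ (by intro h; apply hz; simpa using congrArg Multiset.card h)]
  rw [Multiset.map_add, Multiset.sum_add]
  congr 1
  · simp only [Multiset.map_replicate, Multiset.sum_replicate, smul_eq_mul]
    cases z with
    | zero => simp
    | succ z => simp [Multiset.replicate_succ]
  · congr 1
    apply Multiset.map_congr rfl
    intro x hx
    rw [Multiset.erase_add_right_neg]
    have := hU x hx
    intro h
    have := Multiset.eq_of_mem_replicate h
    omega

theorem V_zero_zero (z : ℕ) (U : Multiset ℕ) (hz : z + U.card ≠ 0) : V z U 0 0 = 0 := by
  apply T_false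
  intro l hl
  cases l with
  | nil => intro _; apply hz; simpa using congrArg Multiset.card hl.symm
  | cons x l => simp [good]

theorem V_zero_succ (z : ℕ) (U : Multiset ℕ) (hU : ∀ k ∈ U, 1 ≤ k) (hz : z + U.card ≠ 0) (M : ℕ) :
    V z U 0 (M + 1) = (U.map (fun x => V z (U.erase x) (x - 1) M)).sum := by
  rw [V, V_rec _ _ hU _ hz, T_false, mul_zero, zero_add]
  · congr 1
    apply Multiset.map_congr rfl
    intro x hx
    apply T_congr
    intro l
    have := hU x hx
    simp [good, this]
  · intro l _; simp [good]

theorem V_succ (z : ℕ) (U : Multiset ℕ) (hU : ∀ k ∈ U, 1 ≤ k) (h M : ℕ) :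
    V (z + 1) U (h + 1) M = (z + 1) * V z U h M +
      (U.map (fun x => V (z + 1) (U.erase x) (h + x) M)).sum := by
  rw [V, V_rec _ _ hU _ (by omega)]
  rfl

theorem V_nil (z M : ℕ) : V z 0 z M = if M = 0 then z.factorial else 0 := by
  induction z with
  | zero =>
    split_ifs with h
    · subst h
      simp only [V, Multiset.replicate_zero, add_zero]
      rw [T_zero] <;> simp [good]
    · simp only [V, Multiset.replicate_zero, add_zero]
      apply T_false
      intro l hl
      have : l = [] := by simpa using hl
      subst this
      simp [good, h]
  | succ z ih =>
    rw [V_succ _ _ (by simp), ih]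
    split_ifs <;> simp [Nat.factorial_succ]

theorem sum_map_const' (U : Multiset ℕ) (f : ℕ → ℕ) (c : ℕ) (h : ∀ x ∈ U, f x = c) :
    (U.map f).sum = U.card * c := by
  rw [Multiset.map_congr rfl h]; simp

/-- no zeros -/
theorem V_nozero (s : ℕ) : ∀ (M : ℕ) (U : Multiset ℕ), (∀ k ∈ U, k = 1) → U.card = s →
    V 0 U 0 M = if M = s then s.factorial else 0 := by
  induction s with
  | zero =>
    intro M U h1 h2
    have : U = 0 := by simpa using h2
    subst this
    rw [V_nil]
  | succ s ih =>
    intro M U h1 h2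
    cases M with
    | zero => rw [V_zero_zero _ _ (by omega)]; simp
    | succ M =>
      rw [V_zero_succ _ _ (fun k hk => (h1 k hk).ge) (by omega),
        sum_map_const' U _ (if M = s then s.factorial else 0)]
      · rw [h2]; by_cases h : M = s <;> simp [h, Nat.factorial_succ]
      · intro x hx
        rw [h1 x hx]
        apply ih
        · intro k hk; exact h1 k (Multiset.mem_of_mem_erase hk)
        · rw [Multiset.card_erase_of_mem (h1 x hx ▸ hx), h2]; rfl

theorem V_big (n : ℕ) : ∀ (z h M : ℕ) (U : Multiset ℕ), z + U.card = n → (∀ k ∈ U, 1 ≤ k) →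
    h + U.sum = z + U.card → U.card < M → V z U h M = 0 := by
  induction n with
  | zero =>
    intro z h M U h1 h2 h3 h4
    have hz : z = 0 := by omega
    have hU : U = 0 := by
      rw [← Multiset.card_eq_zero]; omega
    subst hU hz
    have : h = 0 := by simpa using h3
    subst this
    rw [V_nil, if_neg]; simp at h4; omega
  | succ n ih =>
    intro z h M U h1 h2 h3 h4
    have er : ∀ x ∈ U, (U.erase x).card + 1 = U.card ∧ (U.erase x).sum + x = U.sum := by
      intro x hx
      constructor
      · exact Multiset.card_erase_add_one hx
      · rw [add_comm]; exact Multiset.sum_erase hx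
    have er2 : ∀ x, ∀ k ∈ U.erase x, 1 ≤ k := fun x k hk => h2 k (Multiset.mem_of_mem_erase hk)
    have hs : U.card ≤ U.sum := by
      simpa using Multiset.card_nsmul_le_sum h2
    cases h with
    | zero =>
      cases M with
      | zero => omega
      | succ M =>
        rw [V_zero_succ _ _ h2 (by omega), sum_map_const' U _ 0]
        · simp
        · intro x hx
          have := er x hx
          have := h2 x hx
          apply ih _ _ _ _ _ (er2 x) <;> omega
    | succ h =>
      cases z with
      | zero => omega
      | succ z =>
        rw [V_succ _ _ h2, ih _ _ _ _ _ h2, sum_map_const' U _ 0]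
        · simp
        · intro x hx
          have := er x hx
          have := h2 x hx
          apply ih _ _ _ _ _ (er2 x) <;> omega
        all_goals omega

theorem sum_map_lin (U : Multiset ℕ) (f : ℕ → ℕ) (c a b : ℕ)
    (h : ∀ x ∈ U, f x * c = a * (x - 1) + b) (hU : ∀ k ∈ U, 1 ≤ k) :
    (U.map f).sum * c + a * U.card = a * U.sum + U.card * b := by
  induction U using Multiset.induction with
  | empty => simp
  | cons x U ih =>
    have := ih (fun y hy => h y (by simp [hy])) (fun y hy => hU y (by simp [hy]))
    have h1 := h x (by simp)
    obtain ⟨y, rfl⟩ := Nat.exists_eq_add_of_le (hU x (by simp))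
    simp only [Nat.add_sub_cancel_left] at h1
    simp only [Multiset.map_cons, Multiset.sum_cons, Multiset.card_cons]
    linear_combination this + h1

/-- closed form. `z+1` zeros, `s+1` nonzero letters, `M+d = s+1`. -/
theorem V_main (n : ℕ) : ∀ (z s h M d : ℕ) (U : Multiset ℕ), z + s = n → U.card = s + 1 →
    (∀ k ∈ U, 1 ≤ k) → h + U.sum = z + 1 + (s + 1) → M + d = s + 1 →
    V (z + 1) U h M * d.factorial =
      s.factorial * (d + z).factorial * (h * d + M * (z + 1)) := by
  induction n using Nat.strong_induction_on with
  | _ n ih =>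
  intro z s h M d U hn hc hU hsum hMd
  have er : ∀ x ∈ U, (U.erase x).card + 1 = U.card ∧ (U.erase x).sum + x = U.sum := by
    intro x hx
    constructor
    · exact Multiset.card_erase_add_one hx
    · rw [add_comm]; exact Multiset.sum_erase hx
  have er2 : ∀ x, ∀ k ∈ U.erase x, 1 ≤ k := fun x k hk => hU k (Multiset.mem_of_mem_erase hk)
  have hs : U.card ≤ U.sum := by
    simpa using Multiset.card_nsmul_le_sum hU
  cases h with
  | zero =>
    cases M with
    | zero => rw [V_zero_zero _ _ (by omega)]; simp
    | succ M =>
      rw [V_zero_succ _ _ hU (by omega)]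
      cases s with
      | zero =>
        obtain ⟨rfl, rfl⟩ : M = 0 ∧ d = 0 := by omega
        rw [sum_map_const' U _ (z + 1).factorial]
        · simp [hc, Nat.factorial_succ]; ring
        · intro x hx
          have h1 := er x hx
          have h3 : U.erase x = 0 := by rw [← Multiset.card_eq_zero]; omega
          have : x - 1 = z + 1 := by rw [h3] at h1; simp at h1; omega
          rw [h3, this, V_nil]; simp
      | succ s =>
        have := sum_map_lin U (fun x => V (z + 1) (U.erase x) (x - 1) M) d.factorial
          (s.factorial * (d + z).factorial * d) (s.factorial * (d + z).factorial * (M * (z + 1)))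
          (by
            intro x hx
            have h1 := er x hx
            have h2 := hU x hx
            have := ih (z + s) (by omega) z s (x - 1) M d (U.erase x) rfl (by omega) (er2 x)
              (by omega) (by omega)
            simp only [this]; ring) hU
        rw [hc] at this
        have hsum' : U.sum = z + 1 + (s + 1 + 1) := by omega
        have hs' : s + 1 = M + d := by omega
        rw [hsum'] at this
        rw [Nat.factorial_succ s]
        zify at this hs' ⊢
        linear_combination this - s.factorial * (d + z).factorial * (z + 1) * hs'
  | succ h =>
    rw [V_succ _ _ hU, add_mul]
    have hB : (U.map (fun x => V (z + 1) (U.erase x) (h + x) M)).sum * (d - 1).factorial =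
        if d = 0 then 0 else s.factorial * (d - 1 + z).factorial *
          ((h + 1) * (d - 1) + (z + 1) * (1 + M)) := by
      cases d with
      | zero =>
        rw [sum_map_const' U _ 0]
        · simp
        · intro x hx
          have h1 := er x hx
          have h2 := hU x hx
          apply V_big _ _ _ _ _ rfl (er2 x) <;> omega
      | succ d =>
        simp only [Nat.add_sub_cancel, Nat.succ_ne_zero, if_false]
        cases s with
        | zero =>
          obtain ⟨rfl, rfl⟩ : M = 0 ∧ d = 0 := by omega
          rw [sum_map_const' U _ (z + 1).factorial]
          · simp [hc, Nat.factorial_succ]; ring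
          · intro x hx
            have h1 := er x hx
            have h3 : U.erase x = 0 := by rw [← Multiset.card_eq_zero]; omega
            have : h + x = z + 1 := by rw [h3] at h1; simp at h1; omega
            rw [h3, this, V_nil]; simp
        | succ s =>
          have := sum_map_lin U (fun x => V (z + 1) (U.erase x) (h + x) M) d.factorial
            (s.factorial * (d + z).factorial * d)
            (s.factorial * (d + z).factorial * ((h + 1) * d + M * (z + 1)))
            (by
              intro x hx
              have h1 := er x hx
              have h2 := hU x hx
              have := ih (z + s) (by omega) z s (h + x) M d (U.erase x) rfl (by omega) (er2 x)
                (by omega) (by omega)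
              obtain ⟨y, rfl⟩ := Nat.exists_eq_add_of_le h2
              simp only [this, Nat.add_sub_cancel_left]; ring) hU
          rw [hc] at this
          have hs' : s + 1 = M + d := by omega
          rw [Nat.factorial_succ s]
          generalize (U.map (fun x => V (z + 1) (U.erase x) (h + x) M)).sum = X at *
          generalize U.sum = Y at *
          zify at this hs' hsum ⊢
          have hsum' : (Y : ℤ) = z + 1 + (s + 1 + 1) - (h + 1) := by linarith
          rw [hsum'] at this
          have hd : (d : ℤ) = s + 1 - M := by linarith
          rw [hd] at this ⊢
          linear_combination this
    cases z with
    | zero =>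
      have hh : h = 0 := by omega
      subst hh
      have hall : ∀ k ∈ U, k = 1 := by
        intro k hk
        have h1 := er k hk
        have h2 := hU k hk
        have : (U.erase k).card ≤ (U.erase k).sum := by
          simpa using Multiset.card_nsmul_le_sum (er2 k)
        omega
      rw [V_nozero (s + 1) M U hall hc]
      cases d with
      | zero =>
        simp at hB
        have : M = s + 1 := by omega
        subst this
        simp [hB, Nat.factorial_succ]
        ring
      | succ d =>
        simp at hB
        rw [if_neg (by omega), Nat.factorial_succ d]
        have hs' : s = M + d := by omega
        simp
        linear_combination (d + 1) * hB
    | succ z =>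
      have hA := ih (z + s) (by omega) z s h M d U rfl hc hU (by omega) hMd
      cases d with
      | zero =>
        simp at hB
        rw [mul_assoc, hA, hB]
        simp [Nat.factorial_succ]
        ring
      | succ d =>
        simp at hB
        rw [mul_assoc, hA]
        rw [Nat.factorial_succ d, show d + 1 + (z + 1) = (d + 1 + z) + 1 by ring,
          Nat.factorial_succ (d + 1 + z)]
        rw [show d + (z + 1) = d + 1 + z by ring] at hB
        linear_combination (d + 1) * hB
end NCP

namespace NCP
open Finset

noncomputable def pm {n : ℕ} (π : SetPartitionOn n) (x : ℕ) : ℕ :=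
  if h : (π.part x).Nonempty then (π.part x).min' h else 0

section
variable {n : ℕ} (π : SetPartitionOn n)

theorem pm_mem {x : ℕ} (hx : x ∈ Icc 1 n) : pm π x ∈ π.part x := by
  have h : (π.part x).Nonempty := by simpa using hx
  rw [pm, dif_pos h]
  exact min'_mem _ _

theorem pm_le_of_mem {x y : ℕ} (hy : y ∈ π.part x) : pm π x ≤ y := by
  have h : (π.part x).Nonempty := ⟨y, hy⟩
  rw [pm, dif_pos h]
  exact min'_le _ _ hy

theorem pm_Icc {x : ℕ} (hx : x ∈ Icc 1 n) : pm π x ∈ Icc 1 n :=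
  π.part_subset x (pm_mem π hx)

theorem pm_le {x : ℕ} (hx : x ∈ Icc 1 n) : pm π x ≤ x :=
  pm_le_of_mem π (π.mem_part hx)

theorem mem_part_pm {x y : ℕ} (hx : x ∈ Icc 1 n) : y ∈ π.part x ↔ y ∈ Icc 1 n ∧ pm π y = pm π x := by
  constructor
  · intro h
    have hy := π.part_subset x h
    refine ⟨hy, ?_⟩
    rw [π.mem_part_iff_part_eq_part hy hx] at h
    unfold pm
    simp only [h]
  · rintro ⟨hy, h⟩
    rw [π.mem_part_iff_part_eq_part hy hx]
    have h1 := pm_mem π hx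
    have h2 := pm_mem π hy
    rw [h] at h2
    have hz := pm_Icc π hx
    rw [π.mem_part_iff_part_eq_part hz hx] at h1
    rw [π.mem_part_iff_part_eq_part hz hy] at h2
    rw [← h1, ← h2]

theorem pm_pm {x : ℕ} (hx : x ∈ Icc 1 n) : pm π (pm π x) = pm π x :=
  ((mem_part_pm π hx).1 (pm_mem π hx)).2

theorem part_eq_filter {x : ℕ} (hx : x ∈ Icc 1 n) :
    π.part x = (Icc 1 n).filter (fun y => pm π y = pm π x) := by
  ext y; rw [mem_part_pm π hx, mem_filter]

theorem mem_parts_pm (B : Finset ℕ) : B ∈ π.parts ↔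
    ∃ x ∈ Icc 1 n, B = (Icc 1 n).filter (fun y => pm π y = pm π x) := by
  constructor
  · intro hB
    obtain ⟨x, hx⟩ := π.nonempty_of_mem_parts hB
    have hx' := π.le hB hx
    exact ⟨x, hx', by rw [← part_eq_filter π hx', π.part_eq_of_mem hB hx]⟩
  · rintro ⟨x, hx, rfl⟩
    rw [← part_eq_filter π hx]
    exact π.part_mem.2 hx

theorem pm_inj (π' : SetPartitionOn n) (h : ∀ x ∈ Icc 1 n, pm π x = pm π' x) : π = π' := by
  apply Finpartition.ext
  ext B
  rw [mem_parts_pm, mem_parts_pm]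
  have : ∀ x ∈ Icc 1 n, (Icc 1 n).filter (fun y => pm π y = pm π x) =
      (Icc 1 n).filter (fun y => pm π' y = pm π' x) := by
    intro x hx
    apply filter_congr
    intro y hy
    rw [h x hx, h y hy]
  constructor
  · rintro ⟨x, hx, rfl⟩; exact ⟨x, hx, this x hx⟩
  · rintro ⟨x, hx, rfl⟩; exact ⟨x, hx, (this x hx).symm⟩

theorem noncrossing_pm : Noncrossing π ↔ ∀ a ∈ Icc 1 n, ∀ b ∈ Icc 1 n, ∀ c ∈ Icc 1 n, ∀ d ∈ Icc 1 n,
    a < b → b < c → c < d → pm π a = pm π c → pm π b = pm π d → pm π a = pm π b := by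
  unfold Noncrossing
  constructor
  · intro h a ha b hb c hc d hd hab hbc hcd h1 h2
    by_contra hne
    apply h
    refine ⟨a, b, c, d, hab, hbc, hcd, π.part a, π.part_mem.2 ha, π.part b, π.part_mem.2 hb,
      ?_, π.mem_part ha, ?_, π.mem_part hb, ?_⟩
    · intro he
      apply hne
      unfold pm
      simp only [he]
    · rw [mem_part_pm π ha]; exact ⟨hc, h1.symm⟩
    · rw [mem_part_pm π hb]; exact ⟨hd, h2.symm⟩
  · rintro h ⟨a, b, c, d, hab, hbc, hcd, B, hB, B', hB', hne, ha, hc, hb, hd⟩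
    rw [mem_parts_pm] at hB hB'
    obtain ⟨x, hx, rfl⟩ := hB
    obtain ⟨y, hy, rfl⟩ := hB'
    rw [mem_filter] at ha hb hc hd
    apply hne
    have := h a ha.1 b hb.1 c hc.1 d hd.1 hab hbc hcd (ha.2.trans hc.2.symm) (hb.2.trans hd.2.symm)
    rw [← ha.2, ← hb.2, this]

theorem isCut_pm (i : ℕ) : IsCut π i ↔ 1 ≤ i ∧ i ≤ n - 1 ∧ ∀ x ∈ Icc 1 n, pm π x ≤ i → x ≤ i := by
  unfold IsCut
  refine and_congr_right fun _ => and_congr_right fun _ => ?_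
  constructor
  · intro h x hx hp
    rcases h _ (π.part_mem.2 hx) with h | h
    · exact h x (π.mem_part hx)
    · exact absurd (h _ (pm_mem π hx)) (by omega)
  · intro h B hB
    rw [mem_parts_pm] at hB
    obtain ⟨x, hx, rfl⟩ := hB
    by_cases hp : pm π x ≤ i
    · left
      intro y hy
      rw [mem_filter] at hy
      exact h y hy.1 (hy.2 ▸ hp)
    · right
      intro y hy
      rw [mem_filter] at hy
      have := pm_le π hy.1
      omega

end

/-- fiber size of p at j -/
def wd (n : ℕ) (p : ℕ → ℕ) (j : ℕ) : ℕ := ((Icc 1 n).filter (fun y => p y = j)).card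

theorem card_blocks {n : ℕ} (π : SetPartitionOn n) (k : ℕ) :
    (π.parts.filter (fun B => B.card = k + 1)).card =
      ((Icc 1 n).filter (fun j => wd n (pm π) j = k + 1)).card := by
  symm
  have key : ∀ j ∈ Icc 1 n, wd n (pm π) j = k + 1 → pm π j = j := by
    intro j _ h
    have : 0 < wd n (pm π) j := by omega
    rw [wd, card_pos] at this
    obtain ⟨y, hy⟩ := this
    rw [mem_filter] at hy
    rw [← hy.2, pm_pm π hy.1]
  apply card_bij (fun j _ => π.part j)
  · intro j hj
    rw [mem_filter] at hj ⊢
    refine ⟨π.part_mem.2 hj.1, ?_⟩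
    rw [part_eq_filter π hj.1, key j hj.1 hj.2]
    exact hj.2
  · intro j hj j' hj' he
    rw [mem_filter] at hj hj'
    rw [← key j hj.1 hj.2, ← key j' hj'.1 hj'.2]
    have he : π.part j = π.part j' := he
    unfold pm
    simp only [he]
  · intro B hB
    rw [mem_filter, mem_parts_pm] at hB
    obtain ⟨⟨x, hx, rfl⟩, hc⟩ := hB
    refine ⟨pm π x, ?_, ?_⟩
    · rw [mem_filter]
      exact ⟨pm_Icc π hx, hc⟩
    · rw [part_eq_filter π (pm_Icc π hx), pm_pm π hx]

/-- prefix sums -/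
def ps (b : ℕ → ℕ) (i : ℕ) : ℕ := ∑ j ∈ range i, b (j + 1)

theorem ps_wd (n : ℕ) (p : ℕ → ℕ) (hp : ∀ x ∈ Icc 1 n, 1 ≤ p x) (i : ℕ) :
    ps (wd n p) i = ((Icc 1 n).filter (fun x => p x ≤ i)).card := by
  rw [card_eq_sum_card_fiberwise (f := fun x => p x - 1) (t := range i)]
  · apply sum_congr rfl
    intro j hj
    unfold wd
    congr 1
    ext x
    simp only [mem_filter, mem_range] at hj ⊢
    constructor
    · rintro ⟨h1, h2⟩; exact ⟨⟨h1, by omega⟩, by omega⟩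
    · rintro ⟨⟨h1, h2⟩, h3⟩; have := hp x h1; exact ⟨h1, by omega⟩
  · intro x hx
    simp only [coe_filter, Set.mem_ofPred_eq] at hx
    have := hp x hx.1
    simp; omega

theorem ps_ge (n : ℕ) (p : ℕ → ℕ) (hp : ∀ x ∈ Icc 1 n, 1 ≤ p x ∧ p x ≤ x) (i : ℕ) (hi : i ≤ n) :
    i ≤ ps (wd n p) i := by
  rw [ps_wd n p (fun x hx => (hp x hx).1)]
  calc i = (Icc 1 i).card := by simp
    _ ≤ _ := by
      apply card_le_card
      intro x hx
      rw [mem_Icc] at hx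
      have hx' : x ∈ Icc 1 n := by rw [mem_Icc]; omega
      have := hp x hx'
      rw [mem_filter]; exact ⟨hx', by omega⟩

theorem ps_eq_iff (n : ℕ) (p : ℕ → ℕ) (hp : ∀ x ∈ Icc 1 n, 1 ≤ p x ∧ p x ≤ x) (i : ℕ) (hi : i ≤ n) :
    ps (wd n p) i = i ↔ ∀ x ∈ Icc 1 n, p x ≤ i → x ≤ i := by
  rw [ps_wd n p (fun x hx => (hp x hx).1)]
  have hsub : Icc 1 i ⊆ (Icc 1 n).filter (fun x => p x ≤ i) := by
    intro x hx
    rw [mem_Icc] at hx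
    have hx' : x ∈ Icc 1 n := by rw [mem_Icc]; omega
    have := hp x hx'
    rw [mem_filter]; exact ⟨hx', by omega⟩
  constructor
  · intro h x hx hpx
    have := eq_of_subset_of_card_le hsub (by rw [h]; simp)
    have hx2 : x ∈ Icc 1 i := by rw [this, mem_filter]; exact ⟨hx, hpx⟩
    exact (mem_Icc.1 hx2).2
  · intro h
    have : (Icc 1 n).filter (fun x => p x ≤ i) = Icc 1 i := by
      apply Subset.antisymm _ hsub
      intro x hx
      rw [mem_filter] at hx
      have := h x hx.1 hx.2
      have := mem_Icc.1 hx.1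
      rw [mem_Icc]; omega
    rw [this]; simp

theorem cut_count {n : ℕ} (hn : 1 ≤ n) (π : SetPartitionOn n) :
    (∑ i ∈ range n, if ps (wd n (pm π)) i = i then 1 else 0) = cutCount π + 1 := by
  obtain ⟨k, rfl⟩ := Nat.exists_eq_add_of_le' hn
  rw [sum_range_succ']
  have h0 : ps (wd (k + 1) (pm π)) 0 = 0 := by simp [ps]
  rw [if_pos h0]
  congr 1
  have hp : ∀ x ∈ Icc 1 (k + 1), 1 ≤ pm π x ∧ pm π x ≤ x := fun x hx =>
    ⟨(mem_Icc.1 (pm_Icc π hx)).1, pm_le π hx⟩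
  have : {i | IsCut π i} = (((range k).filter (fun i => ps (wd (k + 1) (pm π)) (i + 1) = i + 1)).image (· + 1) : Finset ℕ) := by
    ext i
    simp only [Set.mem_ofPred_eq, coe_image, Set.mem_image, mem_coe, mem_filter, mem_range]
    rw [isCut_pm]
    constructor
    · rintro ⟨h1, h2, h3⟩
      obtain ⟨j, rfl⟩ := Nat.exists_eq_add_of_le' h1
      exact ⟨j, ⟨by omega, (ps_eq_iff _ _ hp _ (by omega)).2 h3⟩, rfl⟩
    · rintro ⟨j, ⟨h1, h2⟩, rfl⟩
      exact ⟨by omega, by omega, (ps_eq_iff _ _ hp _ (by omega)).1 h2⟩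
  rw [cutCount, this, Set.ncard_coe_finset, card_image_of_injective _ (add_left_injective 1),
    card_filter]

def cnt (p : ℕ → ℕ) (x j : ℕ) : ℕ := ((Ico 1 x).filter (fun y => p y = j)).card

theorem cnt_congr (p q : ℕ → ℕ) (x j : ℕ) (h : ∀ y ∈ Ico 1 x, p y = q y) : cnt p x j = cnt q x j := by
  unfold cnt
  congr 1
  apply filter_congr
  intro y hy; rw [h y hy]

theorem cnt_succ (p : ℕ → ℕ) (x j : ℕ) (hx : 1 ≤ x) :
    cnt p (x + 1) j = cnt p x j + if p x = j then 1 else 0 := by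
  unfold cnt
  rw [← insert_Ico_right_eq_Ico_add_one hx, filter_insert]
  split_ifs
  · rw [card_insert_of_notMem]; simp
  · simp

theorem cnt_mono (p : ℕ → ℕ) (x y j : ℕ) (hx : x ≤ y) : cnt p x j ≤ cnt p y j := by
  apply card_le_card
  apply filter_subset_filter
  intro a; simp; omega

theorem wd_eq_cnt (n : ℕ) (p : ℕ → ℕ) (j : ℕ) : wd n p j = cnt p (n + 1) j := rfl

def Rule (n : ℕ) (b p : ℕ → ℕ) : Prop := ∀ x ∈ Icc 1 n, 1 ≤ p x ∧ p x ≤ x ∧ (0 < b x → p x = x) ∧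
  cnt p x (p x) < b (p x) ∧ (b x = 0 → ∀ j, 1 ≤ j → j < x → cnt p x j < b j → j ≤ p x)

theorem rule_unique (n : ℕ) (b p q : ℕ → ℕ) (hp : Rule n b p) (hq : Rule n b q) :
    ∀ x, x ∈ Icc 1 n → p x = q x := by
  intro x
  induction x using Nat.strong_induction_on with
  | _ x ih =>
  intro hx
  have hx' := mem_Icc.1 hx
  have hc : ∀ j, cnt p x j = cnt q x j := fun j => cnt_congr _ _ _ _ (by
    intro y hy
    rw [mem_Ico] at hy
    exact ih y hy.2 (by rw [mem_Icc]; omega))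
  obtain ⟨p1, p2, p3, p4, p5⟩ := hp x hx
  obtain ⟨q1, q2, q3, q4, q5⟩ := hq x hx
  rcases Nat.eq_zero_or_pos (b x) with h0 | h0
  · have hpx : p x ≠ x := by intro h; rw [h, h0] at p4; omega
    have hqx : q x ≠ x := by intro h; rw [h, h0] at q4; omega
    apply le_antisymm
    · exact q5 h0 _ p1 (by omega) (by rw [← hc]; exact p4)
    · exact p5 h0 _ q1 (by omega) (by rw [hc]; exact q4)
  · rw [p3 h0, q3 h0]

theorem rule_pm {n : ℕ} (π : SetPartitionOn n) (hπ : Noncrossing π) : Rule n (wd n (pm π)) (pm π) := by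
  rw [noncrossing_pm] at hπ
  intro x hx
  refine ⟨(mem_Icc.1 (pm_Icc π hx)).1, pm_le π hx, ?_, ?_, ?_⟩
  · intro h
    rw [wd, card_pos] at h
    obtain ⟨y, hy⟩ := h
    rw [mem_filter] at hy
    rw [← hy.2, pm_pm π hy.1]
  · rw [wd_eq_cnt]
    have h1 := cnt_succ (pm π) x (pm π x) (mem_Icc.1 hx).1
    rw [if_pos rfl] at h1
    have := cnt_mono (pm π) (x + 1) (n + 1) (pm π x) (by have := mem_Icc.1 hx; omega)
    omega
  · intro h0 j hj1 hjx hc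
    have hx' := mem_Icc.1 hx
    have : ∃ y ∈ Icc 1 n, x ≤ y ∧ pm π y = j := by
      by_contra hno
      push Not at hno
      have : wd n (pm π) j ≤ cnt (pm π) x j := by
        apply card_le_card
        intro y hy
        rw [mem_filter] at hy ⊢
        refine ⟨?_, hy.2⟩
        have := mem_Icc.1 hy.1
        rw [mem_Ico]
        refine ⟨this.1, ?_⟩
        by_contra hxy
        exact hno y hy.1 (by omega) hy.2
      omega
    obtain ⟨y, hy, hxy, rfl⟩ := this
    rcases Nat.eq_or_lt_of_le hxy with rfl | hxy
    · exact le_rfl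
    · by_contra hlt
      push Not at hlt
      have := hπ (pm π x) (pm_Icc π hx) (pm π y) (pm_Icc π hy) x hx y hy hlt hjx hxy
        (pm_pm π hx) (pm_pm π hy)
      rw [pm_pm π hx, pm_pm π hy] at this
      omega

/-- existence -/
theorem rule_exists (n : ℕ) (b : ℕ → ℕ) (hb : ∀ i ≤ n, i ≤ ps b i) (k : ℕ) (hk : k ≤ n) :
    ∃ p, Rule k b p ∧ ∀ j, 1 ≤ j → cnt p (k + 1) j ≤ b j := by
  induction k with
  | zero => exact ⟨id, by intro x hx; simp at hx, by simp [cnt]⟩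
  | succ k ih =>
    obtain ⟨p, h1, h2⟩ := ih (by omega)
    have hz : cnt p (k + 1) (k + 1) = 0 := by
      rw [cnt, card_eq_zero, filter_eq_empty_iff]
      intro y hy
      rw [mem_Ico] at hy
      have := h1 y (by rw [mem_Icc]; omega)
      omega
    -- choose value
    have hv : ∃ v, 1 ≤ v ∧ v ≤ k + 1 ∧ (0 < b (k + 1) → v = k + 1) ∧ cnt p (k + 1) v < b v ∧
        (b (k + 1) = 0 → ∀ j, 1 ≤ j → j < k + 1 → cnt p (k + 1) j < b j → j ≤ v) := by
      rcases Nat.eq_zero_or_pos (b (k + 1)) with h0 | h0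
      · have hne : ((Icc 1 k).filter (fun j => cnt p (k + 1) j < b j)).Nonempty := by
          by_contra hno
          rw [not_nonempty_iff_eq_empty, filter_eq_empty_iff] at hno
          have hle : ps b (k + 1) ≤ ps (wd k p) k := by
            rw [ps, sum_range_succ, h0, add_zero]
            apply sum_le_sum
            intro j hj
            rw [mem_range] at hj
            have := hno (x := j + 1) (by rw [mem_Icc]; omega)
            rw [wd_eq_cnt]; omega
          have h3 := hb (k + 1) hk
          rw [ps_wd k p (fun x hx => (h1 x hx).1)] at hle
          have := card_filter_le (Icc 1 k) (fun x => p x ≤ k)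
          simp at this
          omega
        refine ⟨((Icc 1 k).filter (fun j => cnt p (k + 1) j < b j)).max' hne, ?_, ?_, ?_, ?_, ?_⟩
        · have := max'_mem _ hne
          rw [mem_filter, mem_Icc] at this
          exact this.1.1
        · have := max'_mem _ hne
          rw [mem_filter, mem_Icc] at this
          omega
        · intro; omega
        · have := max'_mem _ hne
          rw [mem_filter, mem_Icc] at this
          exact this.2
        · intro _ j hj1 hj2 hj3
          apply le_max'
          rw [mem_filter, mem_Icc]
          exact ⟨by omega, hj3⟩
      · exact ⟨k + 1, by omega, le_rfl, fun _ => rfl, by omega, fun h => by omega⟩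
    obtain ⟨v, v1, v2, v3, v4, v5⟩ := hv
    have hup : ∀ y, y ≠ k + 1 → Function.update p (k + 1) v y = p y := fun y hy => by
      simp [Function.update, hy]
    have hself : Function.update p (k + 1) v (k + 1) = v := by simp
    have hcnt : ∀ x ≤ k + 1, ∀ j, cnt (Function.update p (k + 1) v) x j = cnt p x j := by
      intro x hx j
      apply cnt_congr
      intro y hy
      rw [mem_Ico] at hy
      exact hup y (by omega)
    refine ⟨Function.update p (k + 1) v, ?_, ?_⟩
    · intro x hx
      rw [mem_Icc] at hx
      by_cases hxk : x = k + 1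
      · subst hxk
        rw [hself]
        refine ⟨v1, v2, v3, ?_, ?_⟩
        · rw [hcnt _ le_rfl]; exact v4
        · intro h0 j hj1 hj2 hj3
          rw [hcnt _ le_rfl] at hj3
          exact v5 h0 j hj1 hj2 hj3
      · rw [hup x hxk]
        have := h1 x (by rw [mem_Icc]; omega)
        simp only [hcnt x hx.2]
        exact this
    · intro j hj
      rw [cnt_succ _ _ _ (by omega), hself, hcnt _ le_rfl]
      split_ifs with h
      · rw [← h]; omega
      · exact h2 j hj

theorem exists_partition (n : ℕ) (b : ℕ → ℕ) (hb : ∀ i ≤ n, i ≤ ps b i) (hbn : ps b n = n) :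
    ∃ π : SetPartitionOn n, Noncrossing π ∧ ∀ j ∈ Icc 1 n, wd n (pm π) j = b j := by
  obtain ⟨p, hp, hc⟩ := rule_exists n b hb n le_rfl
  have hI : ∀ x ∈ Icc 1 n, p x ∈ Icc 1 n := by
    intro x hx
    have := hp x hx
    rw [mem_Icc] at *; omega
  have hpp : ∀ x ∈ Icc 1 n, p (p x) = p x := by
    intro x hx
    have h1 := hp x hx
    exact (hp (p x) (hI x hx)).2.2.1 (by omega)
  let F : ℕ → Finset ℕ := fun x => (Icc 1 n).filter (fun y => p y = p x)
  have hF : ∀ x ∈ Icc 1 n, x ∈ F x := fun x hx => by exact mem_filter.2 ⟨hx, rfl⟩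
  let π : SetPartitionOn n := Finpartition.ofExistsUnique ((Icc 1 n).image F)
    (by
      intro B hB
      rw [mem_image] at hB
      obtain ⟨x, _, rfl⟩ := hB
      exact filter_subset _ _)
    (by
      intro a ha
      refine ⟨F a, ⟨mem_image_of_mem _ ha, hF a ha⟩, ?_⟩
      rintro B ⟨hB, haB⟩
      rw [mem_image] at hB
      obtain ⟨x, _, rfl⟩ := hB
      simp only [F, mem_filter] at haB
      simp only [F, haB.2])
    (by
      intro h
      rw [mem_image] at h
      obtain ⟨x, hx, h⟩ := h
      have := hF x hx
      rw [h] at this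
      simp at this)
  have hpart : ∀ x ∈ Icc 1 n, π.part x = F x := by
    intro x hx
    apply π.part_eq_of_mem _ (hF x hx)
    exact mem_image_of_mem _ hx
  have hpm : ∀ x ∈ Icc 1 n, pm π x = p x := by
    intro x hx
    apply le_antisymm
    · apply pm_le_of_mem
      rw [hpart x hx]
      simp only [F, mem_filter]
      exact ⟨hI x hx, hpp x hx⟩
    · have := pm_mem π hx
      rw [hpart x hx] at this
      simp only [F, mem_filter] at this
      rw [← this.2]
      exact (hp _ this.1).2.1
  have hwd : ∀ j, wd n (pm π) j = wd n p j := by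
    intro j
    unfold wd
    congr 1
    apply filter_congr
    intro y hy; rw [hpm y hy]
  have hwle : ∀ j, 1 ≤ j → wd n p j ≤ b j := hc
  have hweq : ∀ j ∈ Icc 1 n, wd n p j = b j := by
    have h1 : ps (wd n p) n = n := (ps_eq_iff n p (fun x hx => ⟨(hp x hx).1, (hp x hx).2.1⟩) n le_rfl).2
      (fun x hx _ => (mem_Icc.1 hx).2)
    have h2 : ∑ j ∈ range n, wd n p (j + 1) = ∑ j ∈ range n, b (j + 1) := by
      change ps (wd n p) n = ps b n
      rw [h1, hbn]
    rw [sum_eq_sum_iff_of_le (fun j _ => hwle (j + 1) (by omega))] at h2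
    intro j hj
    rw [mem_Icc] at hj
    obtain ⟨i, rfl⟩ := Nat.exists_eq_add_of_le' hj.1
    exact h2 i (by rw [mem_range]; omega)
  refine ⟨π, ?_, fun j hj => by rw [hwd, hweq j hj]⟩
  -- incomplete
  have hinc : ∀ x ∈ Icc 1 n, ∀ y ∈ Icc 1 n, x ≤ y → cnt p x (p y) < b (p y) := by
    intro x hx y hy hxy
    exact lt_of_le_of_lt (cnt_mono p x y _ hxy) (hp y hy).2.2.2.1
  have hzero : ∀ x ∈ Icc 1 n, p x ≠ x → b x = 0 := by
    intro x hx h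
    by_contra h0
    exact h ((hp x hx).2.2.1 (by omega))
  rw [noncrossing_pm]
  intro a ha b' hb' c hc' d hd hab hbc hcd h1 h2
  rw [hpm a ha, hpm c hc'] at h1
  rw [hpm b' hb', hpm d hd] at h2
  rw [hpm a ha, hpm b' hb']
  have ha1 := hp a ha
  have hb1 := hp b' hb'
  rcases lt_trichotomy (p a) (p b') with h | h | h
  · have := (hp c hc').2.2.2.2 (hzero c hc' (by omega)) (p b') hb1.1 (by omega)
      (by rw [h2]; exact hinc c hc' d hd hcd.le)
    omega
  · exact h
  · have := (hp b' hb').2.2.2.2 (hzero b' hb' (by omega)) (p a) ha1.1 (by omega)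
      (by rw [h1]; exact hinc b' hb' c hc' hbc.le)
    omega

theorem good_iff (l : List ℕ) : ∀ h M, good h M l ↔ (∀ i ≤ l.length, i ≤ h + (l.take i).sum) ∧
    h + l.sum = l.length ∧
    (∑ i ∈ range l.length, if h + (l.take i).sum = i then 1 else 0) = M := by
  induction l with
  | nil => intro h M; simp [good, eq_comm]
  | cons x l ih =>
    intro h M
    cases h with
    | zero =>
      simp only [good, ih, List.length_cons, sum_range_succ', List.take_succ_cons, List.sum_cons,
        List.take_zero, List.sum_nil]
      by_cases hx : 1 ≤ x
      · obtain ⟨y, rfl⟩ := Nat.exists_eq_add_of_le hx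
        have e : ∀ i, (0 + (1 + y + (l.take i).sum) = i + 1) ↔ (1 + y - 1 + (l.take i).sum = i) := by
          intro i; omega
        simp only [e]
        constructor
        · rintro ⟨_, h2, h3, h4, h5⟩
          refine ⟨?_, by omega, by rw [h5]; simp; omega⟩
          intro i hi
          cases i with
          | zero => simp
          | succ i =>
            have := h3 i (by omega)
            simp only [List.take_succ_cons, List.sum_cons]; omega
        · rintro ⟨h3, h4, h5⟩
          replace h5 : (∑ i ∈ range l.length, if 1 + y - 1 + (List.take i l).sum = i then 1 else 0) + 1 = M := h5
          refine ⟨hx, by omega, ?_, by omega, by omega⟩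
          intro i hi
          have := h3 (i + 1) (by omega)
          simp only [List.take_succ_cons, List.sum_cons] at this; omega
      · have : x = 0 := by omega
        subst this
        constructor
        · rintro ⟨h, _⟩; omega
        · rintro ⟨h, _⟩
          have := h 1 (by omega)
          simp at this
    | succ h =>
      simp only [good, ih, List.length_cons, sum_range_succ', List.take_succ_cons, List.sum_cons,
        List.take_zero, List.sum_nil]
      have e : ∀ i, (h + 1 + (x + (l.take i).sum) = i + 1) ↔ (h + x + (l.take i).sum = i) := by
        intro i; omega
      simp only [e]
      refine and_congr ?_ (and_congr (by omega) (by simp))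
      constructor
      · intro h3 i hi
        cases i with
        | zero => simp
        | succ i =>
          have := h3 i (by omega)
          simp only [List.take_succ_cons, List.sum_cons]; omega
      · intro h3 i hi
        have := h3 (i + 1) (by omega)
        simp only [List.take_succ_cons, List.sum_cons] at this; omega

def wl (n : ℕ) (b : ℕ → ℕ) : List ℕ := (List.range n).map (fun i => b (i + 1))

theorem wl_length (n : ℕ) (b : ℕ → ℕ) : (wl n b).length = n := by simp [wl]

theorem wl_take (n : ℕ) (b : ℕ → ℕ) (i : ℕ) (hi : i ≤ n) : ((wl n b).take i).sum = ps b i := by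
  rw [wl, ← List.map_take, List.take_range, min_eq_left hi, ps]
  rfl

theorem good_wl (n : ℕ) (b : ℕ → ℕ) (M : ℕ) : good 0 M (wl n b) ↔ (∀ i ≤ n, i ≤ ps b i) ∧
    ps b n = n ∧ (∑ i ∈ range n, if ps b i = i then 1 else 0) = M := by
  rw [good_iff, wl_length]
  have h1 : (wl n b).sum = ps b n := by
    rw [← wl_take n b n le_rfl, List.take_of_length_le (by rw [wl_length])]
  rw [h1]
  simp only [zero_add]
  refine and_congr ?_ (and_congr Iff.rfl ?_)
  · exact forall_congr' fun i => forall_congr' fun hi => by rw [wl_take n b i hi]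
  · rw [sum_congr rfl (g := fun i => if ps b i = i then 1 else 0)]
    intro i hi
    rw [mem_range] at hi
    rw [wl_take n b i hi.le]

theorem wl_count (n : ℕ) (b : ℕ → ℕ) (k : ℕ) :
    Multiset.count k (wl n b : Multiset ℕ) = ((Icc 1 n).filter (fun j => b j = k)).card := by
  have : (wl n b : Multiset ℕ) = (Icc 1 n).val.map b := by
    have h : Icc 1 n = (range n).image (· + 1) := by
      ext x
      simp only [mem_Icc, mem_image, mem_range]
      constructor
      · rintro ⟨h1, h2⟩; exact ⟨x - 1, by omega, by omega⟩
      · rintro ⟨a, h1, rfl⟩; omega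
    rw [h, image_val_of_injOn (fun a _ b _ h => by simpa using h), Multiset.map_map]
    rfl
  rw [this, Multiset.count_map, card_def, filter_val]
  congr 1
  apply Multiset.filter_congr
  intro x _; exact eq_comm

theorem wl_surj (n : ℕ) (l : List ℕ) (hl : l.length = n) : ∃ b, wl n b = l := by
  refine ⟨fun j => l.getD (j - 1) 0, ?_⟩
  apply List.ext_getElem
  · rw [wl_length, hl]
  · intro i h1 h2
    simp [wl, h2]

theorem wl_congr (n : ℕ) (b c : ℕ → ℕ) : wl n b = wl n c ↔ ∀ j ∈ Icc 1 n, b j = c j := by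
  unfold wl
  rw [List.map_inj_left]
  simp only [List.mem_range, mem_Icc]
  constructor
  · intro h j hj
    have := h (j - 1) (by omega)
    rwa [Nat.sub_add_cancel hj.1] at this
  · intro h a ha
    exact h (a + 1) (by omega)

def UU {n : ℕ} (r : Fin n → ℕ) : Multiset ℕ := ∑ i, Multiset.replicate (r i) (i.1 + 1)

theorem UU_card {n : ℕ} (r : Fin n → ℕ) : (UU r).card = ∑ i, r i := by simp [UU]

theorem UU_sum {n : ℕ} (r : Fin n → ℕ) : (UU r).sum = ∑ i, (i.1 + 1) * r i := by
  rw [UU, Multiset.sum_sum]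
  simp [mul_comm]

theorem UU_pos {n : ℕ} (r : Fin n → ℕ) : ∀ k ∈ UU r, 1 ≤ k ∧ k ≤ n := by
  intro k hk
  rw [UU, Multiset.mem_sum] at hk
  obtain ⟨i, _, hi⟩ := hk
  rw [Multiset.eq_of_mem_replicate hi]
  omega

theorem UU_count {n : ℕ} (r : Fin n → ℕ) (i : Fin n) : (UU r).count (i.1 + 1) = r i := by
  rw [UU, Multiset.count_sum', sum_eq_single i]
  · simp
  · intro j _ hj
    rw [Multiset.count_replicate, if_neg]
    intro h; apply hj; ext; omega
  · simp

theorem mset_ext (A B : Multiset ℕ) (hc : A.card = B.card) (h : ∀ k, A.count (k + 1) = B.count (k + 1)) :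
    A = B := by
  have h1 : A.filter (fun x => ¬ 0 = x) = B.filter (fun x => ¬ 0 = x) := by
    ext k
    rw [Multiset.count_filter, Multiset.count_filter]
    cases k with
    | zero => simp
    | succ k => simp [h k]
  have h2 := Multiset.filter_add_not (fun x => 0 = x) A
  have h3 := Multiset.filter_add_not (fun x => 0 = x) B
  rw [Multiset.filter_eq] at h2 h3
  have c2 := congrArg Multiset.card h2
  have c3 := congrArg Multiset.card h3
  rw [Multiset.card_add, Multiset.card_replicate] at c2 c3
  rw [h1] at c2
  rw [← h2, ← h3, h1]
  congr 2
  omega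

theorem hasType_iff {n : ℕ} (π : SetPartitionOn n) (r : Fin n → ℕ) (z : ℕ) (hz : z + ∑ i, r i = n) :
    HasType π r ↔ (wl n (wd n (pm π)) : Multiset ℕ) = Multiset.replicate z 0 + UU r := by
  have hc : ∀ k, Multiset.count (k + 1) (Multiset.replicate z 0 + UU r) = (UU r).count (k + 1) := by
    intro k
    rw [Multiset.count_add, Multiset.count_replicate, if_neg (by omega), zero_add]
  unfold HasType
  constructor
  · intro h
    apply mset_ext
    · rw [Multiset.card_add, UU_card, Multiset.card_replicate, Multiset.coe_card, wl_length, hz]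
    · intro k
      rw [hc, wl_count]
      by_cases hk : k < n
      · rw [UU_count r ⟨k, hk⟩, ← h ⟨k, hk⟩, card_blocks]
      · rw [Multiset.count_eq_zero_of_notMem (fun hm => by have := UU_pos r _ hm; omega),
          card_eq_zero, filter_eq_empty_iff]
        intro j _ hj
        have : wd n (pm π) j ≤ (Icc 1 n).card := card_filter_le _ _
        simp at this
        omega
  · intro h i
    rw [card_blocks, ← wl_count, h, hc, UU_count]

theorem P_UU {n : ℕ} (r : Fin n → ℕ) (z : ℕ) :
    P (Multiset.replicate z 0 + UU r) = z.factorial * ∏ i, (r i).factorial := by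
  set S := Multiset.replicate z 0 + UU r with hS
  have h1 : P S = ∏ x ∈ range (n + 1), (S.count x).factorial := by
    unfold P
    apply prod_subset
    · intro y hy
      rw [Multiset.mem_toFinset, hS, Multiset.mem_add] at hy
      rw [mem_range]
      rcases hy with hy | hy
      · rw [Multiset.eq_of_mem_replicate hy]; omega
      · have := UU_pos r y hy; omega
    · intro y _ hy
      rw [Multiset.mem_toFinset] at hy
      simp [Multiset.count_eq_zero_of_notMem hy]
  rw [h1, prod_range_succ', mul_comm]
  congr 1
  · have : (UU r).count 0 = 0 := Multiset.count_eq_zero_of_notMem (fun h => by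
      have := UU_pos r _ h; omega)
    simp [hS, this]
  · rw [prod_range]
    apply prod_congr rfl
    intro i _
    rw [hS, Multiset.count_add, UU_count, Multiset.count_replicate, if_neg (by omega), zero_add]

open Classical in
theorem card_eq (n m : ℕ) (hn : 1 ≤ n) (hm : 1 ≤ m) (r : Fin n → ℕ) (z : ℕ)
    (hz : z + ∑ i, r i = n) :
    Nat.card {π : SetPartitionOn n // Noncrossing π ∧ HasType π r ∧ cutCount π = m - 1} =
      ((lf (Multiset.replicate z 0 + UU r)).filter (good 0 m)).card := by
  have hp : ∀ π : SetPartitionOn n, ∀ x ∈ Icc 1 n, 1 ≤ pm π x ∧ pm π x ≤ x := fun π x hx =>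
    ⟨(mem_Icc.1 (pm_Icc π hx)).1, pm_le π hx⟩
  have hmem : ∀ π : SetPartitionOn n, HasType π r ∧ cutCount π = m - 1 ↔
      wl n (wd n (pm π)) ∈ (lf (Multiset.replicate z 0 + UU r)).filter (good 0 m) := by
    intro π
    rw [mem_filter, mem_lf, ← hasType_iff π r z hz, good_wl, cut_count hn]
    have h1 : ps (wd n (pm π)) n = n :=
      (ps_eq_iff n _ (hp π) n le_rfl).2 (fun x hx _ => (mem_Icc.1 hx).2)
    have h2 := ps_ge n _ (hp π)
    constructor
    · rintro ⟨h3, h4⟩; exact ⟨h3, h2, h1, by omega⟩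
    · rintro ⟨h3, -, -, h4⟩; exact ⟨h3, by omega⟩
  rw [← Nat.card_eq_finsetCard]
  let f : {π : SetPartitionOn n // Noncrossing π ∧ HasType π r ∧ cutCount π = m - 1} →
      {l // l ∈ (lf (Multiset.replicate z 0 + UU r)).filter (good 0 m)} :=
    fun π => ⟨wl n (wd n (pm π.1)), (hmem π.1).1 π.2.2⟩
  apply Nat.card_eq_of_bijective f
  constructor
  · rintro ⟨π, h1, h2⟩ ⟨π', h1', h2'⟩ he
    have he : wl n (wd n (pm π)) = wl n (wd n (pm π')) := congrArg Subtype.val he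
    rw [wl_congr] at he
    apply Subtype.ext
    apply pm_inj
    have r1 := rule_pm π h1
    have r2 := rule_pm π' h1'
    apply rule_unique n _ _ _ r1
    intro x hx
    have hx2 := r2 x hx
    rw [he x hx, he _ (pm_Icc π' hx)]
    refine ⟨hx2.1, hx2.2.1, hx2.2.2.1, hx2.2.2.2.1, ?_⟩
    intro h0 j hj1 hj2 hj3
    rw [he j (by rw [mem_Icc] at *; omega)] at hj3
    exact hx2.2.2.2.2 h0 j hj1 hj2 hj3
  · rintro ⟨l, hl⟩
    have hl' := hl
    rw [mem_filter, mem_lf] at hl'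
    have hlen : l.length = n := by
      have := congrArg Multiset.card hl'.1
      rwa [Multiset.card_add, UU_card, Multiset.card_replicate, Multiset.coe_card, hz] at this
    obtain ⟨b, rfl⟩ := wl_surj n l hlen
    have hg := (good_wl n b m).1 hl'.2
    obtain ⟨π, h1, h2⟩ := exists_partition n b hg.1 hg.2.1
    have he : wl n (wd n (pm π)) = wl n b := (wl_congr _ _ _).2 h2
    exact ⟨⟨π, h1, (hmem π).2 (by rw [he]; exact hl)⟩, Subtype.ext he⟩

end NCP

/-- The number `N` of noncrossing partitions of `[n]` of type `r` with exactly `m` connected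
components satisfies `N · (n - |r| - 1)! · (|r| - m)! · r! = m · (n - m - 1)! · (|r| - 1)!`. -/
theorem card_noncrossing_of_type_components (n m : ℕ) (hn : 1 ≤ n) (hm : 1 ≤ m)
    (r : Fin n → ℕ) (hrv : ∑ i, (i.1 + 1) * r i = n) (hr : ∑ i, r i < n)
    (hmr : m ≤ ∑ i, r i) (hmn : m < n) :
    Nat.card {π : SetPartitionOn n // Noncrossing π ∧ HasType π r ∧ cutCount π = m - 1} *
        (n - (∑ i, r i) - 1).factorial * ((∑ i, r i) - m).factorial * ∏ i, (r i).factorial =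
      m * (n - m - 1).factorial * ((∑ i, r i) - 1).factorial := by
  classical
  obtain ⟨z, hz⟩ : ∃ z, n = (z + 1) + ∑ i, r i := ⟨n - (∑ i, r i) - 1, by omega⟩
  obtain ⟨s, hs⟩ : ∃ s, ∑ i, r i = s + 1 := ⟨(∑ i, r i) - 1, by omega⟩
  obtain ⟨d, hd⟩ : ∃ d, ∑ i, r i = m + d := ⟨(∑ i, r i) - m, by omega⟩
  have h1 := NCP.card_eq n m hn hm r (z + 1) hz.symm
  have h2 := NCP.V_main (z + s) z s 0 m d (NCP.UU r) rfl (by rw [NCP.UU_card, hs])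
    (fun k hk => (NCP.UU_pos r k hk).1) (by rw [NCP.UU_sum, hrv]; omega) (by omega)
  have h3 : NCP.V (z + 1) (NCP.UU r) 0 m = Nat.card {π : SetPartitionOn n //
      Noncrossing π ∧ HasType π r ∧ cutCount π = m - 1} *
      ((z + 1).factorial * ∏ i, (r i).factorial) := by
    rw [h1, ← NCP.P_UU]
    unfold NCP.V NCP.T
    congr!
  rw [h3] at h2
  rw [show n - (∑ i, r i) - 1 = z by omega, show (∑ i, r i) - m = d by omega,
    show n - m - 1 = d + z by omega, show (∑ i, r i) - 1 = s by omega]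
  apply Nat.eq_of_mul_eq_mul_left (Nat.succ_pos z)
  rw [Nat.factorial_succ] at h2
  rw [Nat.succ_eq_add_one]
  linear_combination h2
end

section
/- Let n, m ≥ 1 and let r = (r_1, …, r_n) ∈ ℕ^n satisfy r_1 + 2r_2 + ⋯ + n·r_n = n, |r| := r_1 + ⋯ + r_n < n, and m ≤ |r| and m < n. Then the number N of nonnesting set partitions of [n] of type r with exactly m connected components satisfies N · (n − |r| − 1)! · (|r| − m)! · r_1! r_2! ⋯ r_n! = m · (n − m − 1)! · (|r| − 1)!. -/
/-- word predicate -/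
def good : ℕ → ℕ → List ℕ → Prop
  | h, v, [] => h = 0 ∧ v = 0
  | 0, v, a :: l => ∃ d w, a = d + 1 ∧ v = w + 1 ∧ good d w l
  | h + 1, v, a :: l => good (h + a) v l

open Classical in
noncomputable def cnt (R : Multiset ℕ) (p : List ℕ → Prop) : ℕ :=
  ((Multiset.lists R).toFinset.filter p).card

lemma cnt_cons (R : Multiset ℕ) (hR : R ≠ 0) (p : List ℕ → Prop) :
    cnt R p = ∑ a ∈ R.toFinset, cnt (R.erase a) (fun l => p (a :: l)) := by
  classical
  unfold cnt
  rw [← Finset.card_sigma]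
  symm
  refine Finset.card_bij (fun x _ => x.1 :: x.2) ?_ ?_ ?_
  · rintro ⟨a, l⟩ h
    simp only [Finset.mem_sigma, Multiset.mem_toFinset, Finset.mem_filter,
      Multiset.mem_lists_iff] at h ⊢
    obtain ⟨h1, h2, h3⟩ := h
    refine ⟨?_, h3⟩
    have := Multiset.cons_erase h1
    rw [← this, h2]; rfl
  · rintro ⟨a, l⟩ _ ⟨b, l'⟩ _ h
    simp only [List.cons.injEq] at h
    obtain ⟨rfl, rfl⟩ := h; rfl
  · intro l h
    simp only [Multiset.mem_toFinset, Finset.mem_filter, Multiset.mem_lists_iff] at h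
    obtain ⟨rfl, h2⟩ := h
    match l, hR, h2 with
    | [], hR, _ => exact absurd rfl hR
    | a :: l, _, h2 =>
      refine ⟨⟨a, l⟩, ?_, rfl⟩
      simp [Multiset.mem_lists_iff, h2]

lemma cnt_congr (R : Multiset ℕ) (p q : List ℕ → Prop) (h : ∀ l, p l ↔ q l) :
    cnt R p = cnt R q := by
  have : p = q := by ext l; exact h l
  rw [this]

lemma cnt_false (R : Multiset ℕ) (p : List ℕ → Prop) (h : ∀ l, ¬ p l) : cnt R p = 0 := by
  classical
  unfold cnt
  simp [h]

/-- the multiset of letters -/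
def letters (s : ℕ) (Q : Multiset ℕ) : Multiset ℕ :=
  Multiset.replicate s 0 + Q.map Nat.succ

lemma letters_erase_zero (s : ℕ) (Q : Multiset ℕ) :
    (letters (s+1) Q).erase 0 = letters s Q := by
  simp [letters, Multiset.replicate_succ]

lemma letters_erase_succ (s : ℕ) (Q : Multiset ℕ) (d : ℕ) (hd : d ∈ Q) :
    (letters s Q).erase (d+1) = letters s (Q.erase d) := by
  obtain ⟨Q, rfl⟩ := Multiset.exists_cons_of_mem hd
  simp [letters]

lemma cnt_letters (s : ℕ) (Q : Multiset ℕ) (h : s ≠ 0 ∨ Q ≠ 0) (p : List ℕ → Prop) :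
    cnt (letters s Q) p =
      (if s = 0 then 0 else cnt (letters (s-1) Q) (fun l => p (0 :: l))) +
      ∑ d ∈ Q.toFinset, cnt (letters s (Q.erase d)) (fun l => p ((d+1) :: l)) := by
  classical
  rw [cnt_cons]
  · have h1 : (letters s Q).toFinset =
        (if s = 0 then ∅ else {0}) ∪ Q.toFinset.image Nat.succ := by
      ext x
      rcases Nat.eq_zero_or_pos s with hs | hs
      · simp [letters, hs]
      · have : s ≠ 0 := by omega
        simp [letters, this, Multiset.mem_replicate]
    rw [h1, Finset.sum_union]
    · congr 1
      · rcases s with _ | s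
        · simp
        · simp [letters_erase_zero]
      · rw [Finset.sum_image (by intro a _ b _ h; exact Nat.succ.inj h)]
        apply Finset.sum_congr rfl
        intro d hd
        rw [Nat.succ_eq_add_one, letters_erase_succ _ _ _ (Multiset.mem_toFinset.1 hd)]
    · rw [Finset.disjoint_left]
      intro a ha hb
      split_ifs at ha
      · simp at ha
      · simp at ha hb; omega
  · intro h0
    rcases h with h | h
    · apply h
      have := congrArg Multiset.card h0
      simp [letters] at this; omega
    · apply h
      have := congrArg Multiset.card h0
      simp [letters] at this; exact this.2

/-- product of factorials of multiplicities -/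
noncomputable def PF (N : ℕ) (Q : Multiset ℕ) : ℕ := ∏ d ∈ Finset.range N, (Q.count d).factorial

lemma PF_erase (N : ℕ) (Q : Multiset ℕ) (d : ℕ) (hd : d ∈ Q) (hN : d < N) :
    PF N Q = Q.count d * PF N (Q.erase d) := by
  unfold PF
  rw [← Finset.mul_prod_erase _ _ (Finset.mem_range.2 hN),
    ← Finset.mul_prod_erase (a := d) _ (fun x => ((Q.erase d).count x).factorial)
      (Finset.mem_range.2 hN), ← mul_assoc]
  congr 1
  · rw [Multiset.count_erase_self]
    have := Multiset.count_pos.2 hd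
    rw [Nat.mul_factorial_pred (by omega)]
  · apply Finset.prod_congr rfl
    intro x hx
    rw [Multiset.count_erase_of_ne (Finset.ne_of_mem_erase hx)]

/-- labelled count -/
noncomputable def M (N s : ℕ) (Q : Multiset ℕ) (p : List ℕ → Prop) : ℕ :=
  cnt (letters s Q) p * s.factorial * PF N Q

lemma M_rec (N s : ℕ) (Q : Multiset ℕ) (hQ : ∀ d ∈ Q, d < N) (h : s ≠ 0 ∨ Q ≠ 0)
    (p : List ℕ → Prop) :
    M N s Q p = s * M N (s-1) Q (fun l => p (0 :: l)) +
      (Q.map (fun d => M N s (Q.erase d) (fun l => p ((d+1) :: l)))).sum := by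
  classical
  unfold M
  rw [cnt_letters _ _ h, add_mul, add_mul]
  congr 1
  · rcases s with _ | s
    · simp
    · simp [Nat.factorial_succ]; ring
  · rw [Finset.sum_multiset_map_count, Finset.sum_mul, Finset.sum_mul]
    apply Finset.sum_congr rfl
    intro d hd
    have hd := Multiset.mem_toFinset.1 hd
    rw [PF_erase N Q d hd (hQ d hd), smul_eq_mul]
    ring

lemma M_false (N s : ℕ) (Q : Multiset ℕ) (p : List ℕ → Prop) (h : ∀ l, ¬ p l) :
    M N s Q p = 0 := by
  simp [M, cnt_false _ _ h]

lemma M_nil (N : ℕ) (h v : ℕ) : M N 0 0 (good h v) = if h = 0 ∧ v = 0 then 1 else 0 := by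
  classical
  have : (Multiset.lists (0 : Multiset ℕ)) = {[]} := by
    rw [← Multiset.coe_nil, Multiset.lists_coe, List.permutations_nil]; rfl
  have h2 : letters 0 0 = 0 := by simp [letters]
  have h3 : good h v [] ↔ h = 0 ∧ v = 0 := by simp [good]
  unfold M cnt PF
  rw [h2, this]
  by_cases hc : h = 0 ∧ v = 0
  · rw [if_pos hc, Finset.filter_true_of_mem]
    · simp
    · intro x hx
      simp at hx; subst hx; exact h3.2 hc
  · rw [if_neg hc, Finset.filter_false_of_mem]
    · simp
    · intro x hx
      simp at hx; subst hx; exact fun h => hc (h3.1 h)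

lemma M_rec_succ (N s : ℕ) (Q : Multiset ℕ) (hQ : ∀ d ∈ Q, d < N) (hs : s ≠ 0 ∨ Q ≠ 0) (h v : ℕ) :
    M N s Q (good (h+1) v) = s * M N (s-1) Q (good h v) +
      (Q.map (fun d => M N s (Q.erase d) (good (h + d + 1) v))).sum := by
  rw [M_rec N s Q hQ hs]
  rfl

lemma M_rec_zero (N s : ℕ) (Q : Multiset ℕ) (hQ : ∀ d ∈ Q, d < N) (hs : s ≠ 0 ∨ Q ≠ 0) (v : ℕ) :
    M N s Q (good 0 (v+1)) = 
      (Q.map (fun d => M N s (Q.erase d) (good d v))).sum := by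
  rw [M_rec N s Q hQ hs, M_false N (s-1) Q _ (by intro l; simp [good])]
  simp [good]

lemma M_rec_zero_zero (N s : ℕ) (Q : Multiset ℕ) (hQ : ∀ d ∈ Q, d < N) (hs : s ≠ 0 ∨ Q ≠ 0) :
    M N s Q (good 0 0) = 0 := by
  rw [M_rec N s Q hQ hs, M_false N (s-1) Q _ (by intro l; simp [good])]
  simp [good, M_false]

lemma M_flat (N : ℕ) (Q : Multiset ℕ) (hQ : ∀ d ∈ Q, d < N) (hS : Q.sum = 0) (v : ℕ) :
    M N 0 Q (good 0 v) = if v = Q.card then Q.card.factorial else 0 := by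
  induction' hk : Q.card with k ih generalizing Q v
  · rw [Multiset.card_eq_zero] at hk
    subst hk
    rw [M_nil]; simp
  · have hQ0 : Q ≠ 0 := by rintro rfl; simp at hk
    rcases v with _ | v
    · rw [M_rec_zero_zero N 0 Q hQ (Or.inr hQ0)]; simp
    · rw [M_rec_zero N 0 Q hQ (Or.inr hQ0)]
      have hz : ∀ d ∈ Q, d = 0 := by
        intro d hd
        exact Multiset.sum_eq_zero_iff.1 hS d hd
      rw [Multiset.map_congr rfl (g := fun _ => if v = k then k.factorial else 0)]
      · by_cases hv : v = k
        · simp [hk, hv, Nat.factorial_succ]; ring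
        · simp [hv]
      · intro d hd
        have hd0 := hz d hd
        subst hd0
        apply ih
        · intro d hd'; exact hQ d (Multiset.mem_of_mem_erase hd')
        · rw [Multiset.sum_eq_zero_iff]
          intro d hd'; exact hz d (Multiset.mem_of_mem_erase hd')
        · rw [Multiset.card_erase_of_mem hd, hk]; rfl

lemma M_large (N s h : ℕ) (Q : Multiset ℕ) (hQ : ∀ d ∈ Q, d < N) (v : ℕ) (hv : Q.card < v) :
    M N s Q (good h v) = 0 := by
  induction' hn : Q.card + s with n ih generalizing Q v s h
  · have : Q.card = 0 := by omega
    rw [Multiset.card_eq_zero] at this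
    have : s = 0 := by omega
    subst this; subst Q
    rw [M_nil]
    simp at hv ⊢; omega
  · have hs : s ≠ 0 ∨ Q ≠ 0 := by
      by_contra hc
      push Not at hc
      obtain ⟨rfl, rfl⟩ := hc
      simp at hn
    have he : ∀ d ∈ Q, (Q.erase d).card + 1 = Q.card := fun d hd =>
      Multiset.card_erase_add_one hd
    rcases h with _ | h
    · rcases v with _ | v
      · omega
      · rw [M_rec_zero N s Q hQ hs, Multiset.map_congr rfl (g := fun _ => 0)]
        · simp
        · intro d hd
          have := he d hd
          apply ih
          · intro d hd'; exact hQ d (Multiset.mem_of_mem_erase hd')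
          · omega
          · omega
    · rw [M_rec_succ N s Q hQ hs, Multiset.map_congr rfl (g := fun _ => 0)]
      · simp only [Multiset.map_const', Multiset.sum_replicate, smul_zero, add_zero]
        rcases s with _ | s
        · simp
        · rw [Nat.add_sub_cancel, ih s h Q hQ v hv (by omega)]; simp
      · intro d hd
        have := he d hd
        apply ih
        · intro d hd'; exact hQ d (Multiset.mem_of_mem_erase hd')
        · omega
        · omega

lemma sum_affine (Q : Multiset ℕ) (A B : ℚ) :
    (Q.map (fun d : ℕ => A + B * d)).sum = A * Q.card + B * Q.sum := by
  induction Q using Multiset.induction_on with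
  | empty => simp
  | cons a Q ih => simp [ih]; ring

lemma M_formula (N t h v j : ℕ) (Q : Multiset ℕ) (hQ : ∀ d ∈ Q, d < N) (hk : Q.card = v + j)
    (hS : h + Q.sum = t + 1) :
    (M N (t+1) Q (good h v) : ℚ) * j.factorial = (j + t).factorial *
      (h * (v+j).factorial + v * Q.sum * (v+j-1).factorial) := by
  induction' hn : Q.card + t using Nat.strong_induction_on with n ih generalizing Q v t h j
  have hs : t + 1 ≠ 0 ∨ Q ≠ 0 := Or.inl (by omega)
  have he : ∀ d ∈ Q, (Q.erase d).card + 1 = Q.card := fun d hd =>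
    Multiset.card_erase_add_one hd
  have hsum : ∀ d ∈ Q, d + (Q.erase d).sum = Q.sum := fun d hd => Multiset.sum_erase hd
  have hsumq : ∀ d ∈ Q, ((Q.erase d).sum : ℚ) = Q.sum - d := fun d hd => by
    have := hsum d hd
    rw [← this]; push_cast; ring
  have hQe : ∀ d ∈ Q, ∀ e ∈ Q.erase d, e < N := fun d _ e he =>
    hQ e (Multiset.mem_of_mem_erase he)
  rcases h with _ | h
  · rcases v with _ | w
    · rw [M_rec_zero_zero N _ Q hQ hs]; simp
    · rw [M_rec_zero N _ Q hQ hs]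
      rw [Nat.cast_multiset_sum, Multiset.map_map, ← Multiset.sum_map_mul_right]
      rw [Multiset.map_congr rfl (g := fun d : ℕ =>
        ((j+t).factorial * (w * Q.sum * (w+j-1).factorial) : ℚ) +
        ((j+t).factorial * ((w+j).factorial - w * (w+j-1).factorial) : ℚ) * d)]
      · rw [sum_affine, hk]
        rcases w with _ | w
        · simp; ring
        · have e1 : w + 1 + j = (w + j) + 1 := by ring
          have e2 : w + 1 + 1 + j = (w + j + 1) + 1 := by ring
          simp only [e1, e2, Nat.add_sub_cancel, Nat.factorial_succ]
          push_cast
          ring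
      · intro d hd
        have h1 := he d hd
        have h2 := hsum d hd
        simp only [Function.comp]
        rw [ih ((Q.erase d).card + t) (by omega) t d w j (Q.erase d) (hQe d hd) (by omega)
          (by omega) rfl, hsumq d hd]
        ring
  · have hSq : (Q.sum : ℚ) = t - h := by
      have : h + Q.sum = t := by omega
      rw [← this]; push_cast; ring
    have hA : j = 0 ∧ t = 0 ∧ (M N t Q (good h v) : ℚ) = v.factorial ∨
        (t = 0 ∧ j ≠ 0 ∧ (M N t Q (good h v) : ℚ) = 0) ∨
        ∃ u, t = u + 1 ∧ (M N t Q (good h v) : ℚ) * j.factorial = (j + u).factorial *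
          (h * (v+j).factorial + v * Q.sum * (v+j-1).factorial) := by
      rcases t with _ | u
      · have h0 : h = 0 := by omega
        have hS0 : Q.sum = 0 := by omega
        subst h0
        rw [M_flat N Q hQ hS0, hk]
        rcases j with _ | j
        · left; simp
        · right; left; simp
      · right; right
        refine ⟨u, rfl, ?_⟩
        exact ih (Q.card + u) (by omega) u h v j Q hQ hk (by omega) rfl
    have hB : ((((Q.map (fun d => M N (t+1) (Q.erase d) (good (h + d + 1) v))).sum : ℕ) : ℚ)
          * j.factorial) = if j = 0 then (0 : ℚ) else (j : ℚ) * ((j - 1 + t).factorial *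
          (((h+1) * (v+j) + Q.sum) * (v+j-1).factorial + v * Q.sum * (v + j - 1).factorial)) := by
      rcases j with _ | i
      · rw [Multiset.map_congr rfl (g := fun d : ℕ => 0)]
        · simp
        · intro d hd
          have := he d hd
          exact M_large _ _ _ _ (hQe d hd) _ (by omega)
      · rw [if_neg (by omega), Nat.factorial_succ, mul_comm (i+1), Nat.cast_mul, ← mul_assoc,
          mul_comm _ ((i+1 : ℕ) : ℚ)]
        congr 1
        rw [Nat.cast_multiset_sum, Multiset.map_map, ← Multiset.sum_map_mul_right]
        rw [Multiset.map_congr rfl (g := fun d : ℕ =>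
          ((i+t).factorial * ((h+1) * (v+i).factorial + v * Q.sum * (v+i-1).factorial) : ℚ) +
          ((i+t).factorial * ((v+i).factorial - v * (v+i-1).factorial) : ℚ) * d)]
        · rw [sum_affine, hk]
          generalize (Q.sum : ℚ) = S
          rcases v with _ | w
          · simp only [Nat.zero_add, Nat.add_sub_cancel, Nat.factorial_succ, Nat.cast_zero]; push_cast; ring
          · have e1 : w + 1 + i = (w + i) + 1 := by ring
            have e2 : w + 1 + (i + 1) = (w + i + 1) + 1 := by ring
            simp only [e1, e2, Nat.add_sub_cancel, Nat.factorial_succ]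
            push_cast
            ring
        · intro d hd
          have h1 := he d hd
          have h2 := hsum d hd
          simp only [Function.comp]
          rw [ih ((Q.erase d).card + t) (by omega) t (h+d+1) v i (Q.erase d) (hQe d hd) (by omega)
            (by omega) rfl, hsumq d hd]
          push_cast
          ring
    rw [M_rec_succ N _ Q hQ hs, Nat.add_sub_cancel]
    rw [Nat.cast_add, add_mul, hB, Nat.cast_mul, mul_assoc]
    rcases hA with ⟨rfl, rfl, hA⟩ | ⟨rfl, hj, hA⟩ | ⟨u, rfl, hA⟩
    · have h0 : h = 0 := by omega
      have hS0 : Q.sum = 0 := by omega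
      rw [hA]; simp [h0, hS0]
    · have h0 : h = 0 := by omega
      have hS0 : Q.sum = 0 := by omega
      rw [hA, if_neg hj, hS0, h0]
      obtain ⟨i, rfl⟩ := Nat.exists_eq_succ_of_ne_zero hj
      have e2 : v + (i + 1) = (v + i) + 1 := by ring
      simp only [Nat.succ_eq_add_one, e2, Nat.add_sub_cancel, Nat.factorial_succ]
      push_cast
      ring
    · rw [hA, hSq]
      rcases j with _ | i
      · rcases v with _ | w
        · have : h = u + 1 := by
            have : Q = 0 := by rw [← Multiset.card_eq_zero, hk]
            subst this; simp at hS; omega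
          subst this
          simp [Nat.factorial_succ]; ring
        · simp [Nat.factorial_succ]; ring
      · rw [if_neg (by omega)]
        have e2 : v + (i + 1) = (v + i) + 1 := by ring
        have e3 : i + 1 + (u + 1) = (i + u + 1) + 1 := by ring
        have e4 : i + (u + 1) = i + u + 1 := by ring
        have e5 : i + 1 + u = i + u + 1 := by ring
        simp only [e2, e3, e4, e5, Nat.add_sub_cancel, Nat.factorial_succ]
        push_cast
        ring

lemma good_iff (l : List ℕ) : ∀ h v : ℕ, good h v l ↔
    (∀ i ≤ l.length, i ≤ h + (l.take i).sum) ∧ h + l.sum = l.length ∧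
    ((Finset.range (l.length + 1)).filter (fun i => h + (l.take i).sum = i)).card = v + 1 := by
  induction l with
  | nil =>
    intro h v
    simp only [good, List.length_nil, List.sum_nil, List.take_nil, Nat.zero_add]
    constructor
    · rintro ⟨rfl, rfl⟩
      refine ⟨by omega, by omega, by decide⟩
    · rintro ⟨_, h2, h3⟩
      have : h = 0 := by omega
      subst this
      refine ⟨rfl, ?_⟩
      have : (Finset.filter (fun i => 0 + 0 = i) (Finset.range 1)).card = 1 := by decide
      simp only [Nat.add_zero] at *
      omega
  | cons a l ih =>
    intro h v
    have key : ∀ g, g + 1 = h + a → ((∀ i ≤ (a :: l).length, i ≤ h + ((a::l).take i).sum) ∧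
        h + (a::l).sum = (a::l).length ↔
          (∀ i ≤ l.length, i ≤ g + (l.take i).sum) ∧ g + l.sum = l.length) := by
      intro g hg
      simp only [List.length_cons, List.sum_cons]
      refine and_congr ?_ (by omega)
      constructor
      · intro H i hi
        have := H (i+1) (by omega)
        simp only [List.take_succ_cons, List.sum_cons] at this
        omega
      · intro H i hi
        rcases i with _ | i
        · omega
        · have := H i (by omega)
          simp only [List.take_succ_cons, List.sum_cons]
          omega
    have key2 : ∀ g, g + 1 = h + a →
        ((Finset.range ((a::l).length + 1)).filter (fun i => h + ((a::l).take i).sum = i)).card =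
        (if h = 0 then 1 else 0) +
        ((Finset.range (l.length + 1)).filter (fun i => g + (l.take i).sum = i)).card := by
      intro g hg
      rw [Finset.card_filter, List.length_cons, Finset.sum_range_succ' _ (l.length + 1), add_comm]
      congr 1
      · rw [Finset.card_filter]
        apply Finset.sum_congr rfl
        intro i _
        simp only [List.take_succ_cons, List.sum_cons]
        congr 1
        apply propext
        omega
    rw [← and_assoc]
    rcases h with _ | h
    · constructor
      · rintro ⟨d, w, rfl, rfl, hg⟩
        rw [key d (by omega), key2 d (by omega), if_pos rfl]
        obtain ⟨h1, h2, h3⟩ := (ih d w).1 hg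
        exact ⟨⟨h1, h2⟩, by omega⟩
      · rintro ⟨h1, h2⟩
        have ha : a ≠ 0 := by
          rintro rfl
          have := h1.1 1 (by simp)
          simp at this
        obtain ⟨d, rfl⟩ := Nat.exists_eq_succ_of_ne_zero ha
        rw [key d (by omega)] at h1
        rw [key2 d (by omega), if_pos rfl] at h2
        have hpos : 0 < ((Finset.range (l.length + 1)).filter
            (fun i => d + (l.take i).sum = i)).card := by
          rw [Finset.card_pos]
          refine ⟨l.length, ?_⟩
          simp [h1.2]
        refine ⟨d, v - 1, rfl, by omega, (ih _ _).2 ⟨h1.1, h1.2, by omega⟩⟩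
    · rw [key (h + a) (by omega), key2 (h + a) (by omega), if_neg (by omega), Nat.zero_add]
      simp only [good]
      rw [ih, and_assoc]

/-- block-min function -/
def IsB (n : ℕ) (b : ℕ → ℕ) : Prop :=
  ∀ y, 1 ≤ y → y ≤ n → 1 ≤ b y ∧ b y ≤ y ∧ b (b y) = b y

def ArcB (n : ℕ) (b : ℕ → ℕ) (i j : ℕ) : Prop :=
  i < j ∧ 1 ≤ i ∧ j ≤ n ∧ b i = b j ∧ ∀ k, i < k → k < j → b k ≠ b i

def NN (n : ℕ) (b : ℕ → ℕ) : Prop :=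
  ∀ a p c d : ℕ, a < p → p < c → c < d → ArcB n b a d → ¬ ArcB n b p c

/-- partial class sizes -/
def cl (b : ℕ → ℕ) (i x : ℕ) : ℕ := ((Finset.Icc 1 i).filter (fun z => b z = x)).card

lemma cl_ne_zero {n : ℕ} {b : ℕ → ℕ} (hb : IsB n b) {x : ℕ} (h1 : 1 ≤ x) (hx : x ≤ n) :
    cl b n x ≠ 0 ↔ b x = x := by
  unfold cl
  rw [← Nat.pos_iff_ne_zero, Finset.card_pos]
  constructor
  · rintro ⟨y, hy⟩
    simp only [Finset.mem_filter, Finset.mem_Icc] at hy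
    have := (hb y hy.1.1 hy.1.2).2.2
    rw [hy.2] at this; exact this
  · intro h
    exact ⟨x, by simp [h, h1, hx]⟩

lemma cl_succ (b : ℕ → ℕ) (i x : ℕ) : cl b (i+1) x = cl b i x + if b (i+1) = x then 1 else 0 := by
  unfold cl
  have : Finset.Icc 1 (i+1) = insert (i+1) (Finset.Icc 1 i) := by
    ext z; simp only [Finset.mem_insert, Finset.mem_Icc]; omega
  rw [this, Finset.filter_insert]
  split_ifs
  · rw [Finset.card_insert_of_notMem]
    simp
  · rfl

lemma cl_congr (b b' : ℕ → ℕ) (i x : ℕ) (h : ∀ z, 1 ≤ z → z ≤ i → b z = b' z) :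
    cl b i x = cl b' i x := by
  unfold cl
  congr 1
  apply Finset.filter_congr
  intro z hz
  rw [Finset.mem_Icc] at hz
  rw [h z hz.1 hz.2]

lemma cl_mono (b : ℕ → ℕ) {i j : ℕ} (h : i ≤ j) (x : ℕ) : cl b i x ≤ cl b j x := by
  unfold cl
  apply Finset.card_le_card
  apply Finset.filter_subset_filter
  exact Finset.Icc_subset_Icc_right h

lemma cl_lt (b : ℕ → ℕ) {i j y : ℕ} (h : i < y) (h2 : y ≤ j) (x : ℕ) (hy : b y = x) :
    cl b i x < cl b j x := by
  obtain ⟨y, rfl⟩ : ∃ y', y = y' + 1 := ⟨y - 1, by omega⟩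
  have h1 := cl_mono b (show i ≤ y by omega) x
  have h3 := cl_mono b h2 x
  rw [cl_succ, if_pos hy] at h3
  omega

lemma exists_of_cl_lt (b : ℕ → ℕ) {i j : ℕ} (x : ℕ) (h : cl b i x < cl b j x) :
    ∃ y, i < y ∧ y ≤ j ∧ b y = x := by
  by_contra hc
  push Not at hc
  apply absurd h
  rw [not_lt]
  unfold cl
  apply Finset.card_le_card
  intro z hz
  simp only [Finset.mem_filter, Finset.mem_Icc] at hz ⊢
  refine ⟨⟨hz.1.1, ?_⟩, hz.2⟩
  by_contra h3
  exact hc z (by omega) hz.1.2 hz.2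

lemma sum_cl (n i j : ℕ) (b : ℕ → ℕ) (hb : IsB n b) (hj : j ≤ n) :
    ∑ x ∈ Finset.Icc 1 i, cl b j x = ((Finset.Icc 1 j).filter (fun y => b y ≤ i)).card := by
  unfold cl
  rw [Finset.card_eq_sum_card_fiberwise (f := b) (t := Finset.Icc 1 i)]
  · apply Finset.sum_congr rfl
    intro x hx
    rw [Finset.mem_Icc] at hx
    congr 1
    ext z
    simp only [Finset.mem_filter, Finset.mem_Icc]
    constructor
    · rintro ⟨h1, h2⟩; exact ⟨⟨h1, by omega⟩, h2⟩
    · rintro ⟨⟨h1, _⟩, h2⟩; exact ⟨h1, h2⟩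
  · intro y hy
    simp only [Finset.coe_filter, Finset.mem_Icc, Set.mem_ofPred_eq] at hy
    simp only [Finset.coe_Icc, Set.mem_Icc]
    exact ⟨(hb y hy.1.1 (by omega)).1, hy.2⟩

/-- predecessor in class -/
lemma exists_pred {n : ℕ} {b : ℕ → ℕ} (hb : IsB n b) {y : ℕ} (h1 : 1 ≤ y) (hy : y ≤ n)
    (hne : b y ≠ y) : ∃ p, 1 ≤ p ∧ p < y ∧ b p = b y ∧ ∀ z, p < z → z < y → b z ≠ b y := by
  classical
  have hb' := hb y h1 hy
  let T := (Finset.Ico 1 y).filter (fun z => b z = b y)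
  have hT : T.Nonempty := ⟨b y, by simp only [T, Finset.mem_filter, Finset.mem_Ico]; omega⟩
  have hm := T.max'_mem hT
  have hM : ∀ z ∈ T, z ≤ T.max' hT := fun z hz => T.le_max' z hz
  generalize T.max' hT = p at hm hM
  simp only [T, Finset.mem_filter, Finset.mem_Ico] at hm hM
  refine ⟨p, hm.1.1, hm.1.2, hm.2, ?_⟩
  intro z hz hzy hbz
  have := hM z ⟨⟨by omega, hzy⟩, hbz⟩
  omega

lemma inj_aux {n : ℕ} {b b' : ℕ → ℕ} (hnn : NN n b')
    (hW : ∀ x, 1 ≤ x → x ≤ n → cl b n x = cl b' n x) {y : ℕ} (hy : y ≤ n)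
    (hb : IsB n b)
    (ih : ∀ z, 1 ≤ z → z < y → b z = b' z) (hne : b y ≠ b' y) {p p' : ℕ}
    (hp1 : 1 ≤ p) (hp : p < p') (hp' : p' < y)
    (h1 : b p = b y) (h2 : ∀ z, p < z → z < y → b z ≠ b y)
    (h1' : b' p' = b' y) (h2' : ∀ z, p' < z → z < y → b' z ≠ b' y) : False := by
  classical
  have hc := hb y (by omega) hy
  have e1 : cl b' (y-1) (b y) < cl b' n (b y) := by
    rw [← hW (b y) hc.1 (by omega), ← cl_congr b b' (y-1) (b y) (fun z h h' => ih z h (by omega))]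
    exact cl_lt b (show y - 1 < y by omega) hy _ rfl
  have hex := exists_of_cl_lt b' _ e1
  have hq := Nat.find_spec hex
  have hmin := fun z => Nat.find_min hex (m := z)
  set q := Nat.find hex
  obtain ⟨q1, q2, q3⟩ := hq
  have hqy : q ≠ y := by intro h; rw [h] at q3; exact hne q3.symm
  have hbp : b' p = b y := by rw [← ih p hp1 (by omega), h1]
  refine hnn p p' y q hp hp' (by omega) ⟨by omega, hp1, q2, by rw [hbp, q3], ?_⟩
    ⟨hp', by omega, hy, h1', ?_⟩
  · intro z hz1 hz2 hz3
    rw [hbp] at hz3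
    rcases lt_trichotomy z y with h | h | h
    · exact h2 z hz1 h (by rw [ih z (by omega) h, hz3])
    · subst h; exact hne hz3.symm
    · exact hmin z hz2 ⟨by omega, by omega, hz3⟩
  · intro z hz1 hz2
    rw [h1']; exact h2' z hz1 hz2

lemma inj_B {n : ℕ} {b b' : ℕ → ℕ} (hb : IsB n b) (hb' : IsB n b') (hn : NN n b) (hn' : NN n b')
    (hW : ∀ x, 1 ≤ x → x ≤ n → cl b n x = cl b' n x) :
    ∀ y, 1 ≤ y → y ≤ n → b y = b' y := by
  intro y
  induction' y using Nat.strong_induction_on with y ih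
  intro h1 hy
  by_contra hne
  have e1 := cl_ne_zero hb h1 hy
  have e2 := cl_ne_zero hb' h1 hy
  rw [hW y h1 hy, e2] at e1
  by_cases hby : b y = y
  · rw [hby, e1.2 hby] at hne; exact hne rfl
  · have hby' : b' y ≠ y := fun h => hby (e1.1 h)
    obtain ⟨p, p1, p2, p3, p4⟩ := exists_pred hb h1 hy hby
    obtain ⟨q, q1, q2, q3, q4⟩ := exists_pred hb' h1 hy hby'
    rcases lt_trichotomy p q with h | h | h
    · exact inj_aux hn' hW hy hb (fun z hz hz' => ih z hz' hz (by omega)) hne p1 h q2 p3 p4 q3 q4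
    · subst h
      have := ih p p2 p1 (by omega)
      rw [p3, q3] at this; exact hne this
    · exact inj_aux hn (fun x a c => (hW x a c).symm) hy hb'
        (fun z hz hz' => (ih z hz' hz (by omega)).symm) (Ne.symm hne) q1 h p2 q3 q4 p3 p4

/-- partial state -/
def St (w : ℕ → ℕ) (i : ℕ) (b : ℕ → ℕ) : Prop :=
  IsB i b ∧ (∀ y, 1 ≤ y → y ≤ i → (b y = y ↔ w y ≠ 0)) ∧
      (∀ x, 1 ≤ x → x ≤ i → cl b i x ≤ w x) ∧
      (∀ p p' q, 1 ≤ p → p < p' → p' < q → q ≤ i → b p' = b q →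
        (∀ z, p' < z → z < q → b z ≠ b p') → (∀ z, p < z → z < q → b z ≠ b p) →
        cl b q (b p) = w (b p))

lemma St_step (w : ℕ → ℕ) (i c : ℕ) (b : ℕ → ℕ) (hS : St w i b)
    (hc : c = i + 1 ∧ w (i+1) ≠ 0 ∨ (w (i+1) = 0 ∧ 1 ≤ c ∧ c ≤ i ∧ b c = c ∧
        cl b i c < w c ∧ ∀ p p', 1 ≤ p → p < p' → p' < i + 1 → b p' = c →
          (∀ z, p' < z → z < i+1 → b z ≠ b p') → (∀ z, p < z → z < i+1 → b z ≠ b p) →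
          cl b i (b p) = w (b p))) :
    St w (i+1) (Function.update b (i+1) c) := by
  obtain ⟨hB, h2, h3, h4⟩ := hS
  set b' := Function.update b (i+1) c with hb'
  have e1 : b' (i+1) = c := by simp [b']
  have e2 : ∀ z, z ≤ i → b' z = b z := by
    intro z hz
    simp only [b']
    rw [Function.update_of_ne (by omega)]
  have ecl : ∀ q x, q ≤ i → cl b' q x = cl b q x := fun q x hq =>
    cl_congr _ _ _ _ (fun z _ hz => e2 z (by omega))
  have hle : ∀ z, 1 ≤ z → z ≤ i → b z ≤ i := fun z a d => by have := hB z a d; omega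
  refine ⟨?_, ?_, ?_, ?_⟩
  · intro y h1 hy
    rcases Nat.lt_or_ge i y with h | h
    · obtain rfl : y = i + 1 := by omega
      rw [e1]
      rcases hc with ⟨hc, _⟩ | ⟨_, c1, c2, c3, _⟩
      · rw [hc, e1]; omega
      · rw [e2 c c2]; omega
    · have := hB y h1 h
      rw [e2 y h, e2 (b y) (by omega)]
      exact this
  · intro y h1 hy
    rcases Nat.lt_or_ge i y with h | h
    · obtain rfl : y = i + 1 := by omega
      rw [e1]
      rcases hc with ⟨hc, hc'⟩ | ⟨c0, c1, c2, c3, _⟩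
      · simp [hc, hc']
      · simp [c0]; omega
    · rw [e2 y h]; exact h2 y h1 h
  · intro x h1 hx
    rw [cl_succ, e1, ecl i x le_rfl]
    rcases Nat.lt_or_ge i x with h | h
    · obtain rfl : x = i + 1 := by omega
      have h0 : cl b i (i+1) = 0 := by
        unfold cl
        rw [Finset.card_eq_zero, Finset.filter_eq_empty_iff]
        intro z hz
        rw [Finset.mem_Icc] at hz
        have := hle z hz.1 hz.2
        omega
      rw [h0]
      rcases hc with ⟨hc, hc'⟩ | ⟨c0, c1, c2, c3, _⟩
      · simp [hc]; omega
      · rw [if_neg (by omega)]; omega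
    · have := h3 x h1 h
      split_ifs with hx'
      · subst hx'
        rcases hc with ⟨hc, hc'⟩ | ⟨c0, c1, c2, c3, c4, _⟩
        · omega
        · omega
      · omega
  · intro p p' q hp1 hp hp' hq hbq hz hz'
    rcases Nat.lt_or_ge i q with h | h
    · obtain rfl : q = i + 1 := by omega
      rw [e1, e2 p' (by omega)] at hbq
      have g1 : ∀ z, p' < z → z < i + 1 → b z ≠ b p' := by
        intro z a d
        have := hz z a d
        rwa [e2 z (by omega), e2 p' (by omega)] at this
      have g2 : ∀ z, p < z → z < i + 1 → b z ≠ b p := by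
        intro z a d
        have := hz' z a d
        rwa [e2 z (by omega), e2 p (by omega)] at this
      rw [cl_succ, e1, e2 p (by omega), ecl i _ le_rfl]
      rcases hc with ⟨hc, hc'⟩ | ⟨c0, c1, c2, c3, c4, c5⟩
      · have := hle p' (by omega) (by omega)
        omega
      · rw [if_neg, c5 p p' hp1 hp hp' hbq g1 g2]
        · rfl
        · rw [← hbq]; exact g2 p' hp hp'
    · rw [ecl q _ h, e2 p (by omega)]
      rw [e2 p' (by omega), e2 q h] at hbq
      apply h4 p p' q hp1 hp hp' h hbq
      · intro z a d
        have := hz z a d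
        rwa [e2 z (by omega), e2 p' (by omega)] at this
      · intro z a d
        have := hz' z a d
        rwa [e2 z (by omega), e2 p (by omega)] at this

lemma surj_aux (n : ℕ) (w : ℕ → ℕ) (hw : ∀ i, i ≤ n → i ≤ ∑ x ∈ Finset.Icc 1 i, w x) :
    ∀ i, i ≤ n → ∃ b : ℕ → ℕ, St w i b := by
  classical
  intro i
  induction' i with i ih
  · intro _
    exact ⟨id, by intro y; omega, by intro y; omega, by intro y; omega, by intros; omega⟩
  · intro hi
    obtain ⟨b, hS⟩ := ih (by omega)
    obtain ⟨hB, h2, h3, h4⟩ := id hS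
    by_cases hw0 : w (i+1) = 0
    · have hlt : ∃ x ∈ Finset.Icc 1 i, cl b i x < w x := by
        apply Finset.exists_lt_of_sum_lt
        rw [sum_cl i i i b hB le_rfl, Finset.filter_true_of_mem]
        · have := hw (i+1) hi
          rw [Finset.sum_Icc_succ_top (by omega), hw0] at this
          simp; omega
        · intro y hy
          rw [Finset.mem_Icc] at hy
          have := hB y hy.1 hy.2
          omega
      obtain ⟨x, hx, hxlt⟩ := hlt
      rw [Finset.mem_Icc] at hx
      have hbx : b x = x := (h2 x hx.1 hx.2).2 (by omega)
      let C := (Finset.Icc 1 i).filter (fun z => b z = x)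
      have hC : C.Nonempty := ⟨x, by simp [C, hx, hbx]⟩
      have hex : ∃ p, (1 ≤ p ∧ p ≤ i) ∧ (∀ z, p < z → z ≤ i → b z ≠ b p) ∧
          cl b i (b p) < w (b p) := by
        have hm := C.max'_mem hC
        have hM : ∀ z ∈ C, z ≤ C.max' hC := fun z hz => C.le_max' z hz
        generalize C.max' hC = p at hm hM
        simp only [C, Finset.mem_filter, Finset.mem_Icc] at hm hM
        refine ⟨p, hm.1, ?_, by rw [hm.2]; exact hxlt⟩
        intro z hz hzi hbz
        have := hM z ⟨⟨by omega, hzi⟩, by rw [hbz, hm.2]⟩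
        omega
      have hp := Nat.find_spec hex
      have hmin := fun z => Nat.find_min hex (m := z)
      generalize Nat.find hex = p0 at hp hmin
      obtain ⟨⟨p1, p2⟩, p3, p4⟩ := hp
      have hbp := hB p0 p1 p2
      refine ⟨_, St_step w i (b p0) b hS (Or.inr ⟨hw0, hbp.1, by omega, hbp.2.2, p4, ?_⟩)⟩
      intro p p' hp1 hpp hp' hb1 hz hz'
      have hp0 : p' = p0 := by
        rcases lt_trichotomy p' p0 with h | h | h
        · exact absurd hb1.symm (hz p0 h (by omega))
        · exact h
        · exact absurd hb1 (p3 p' h (by omega))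
      subst hp0
      have hbb := hB p hp1 (by omega)
      have h5 := h3 (b p) hbb.1 (by omega)
      by_contra hne
      exact hmin p hpp ⟨⟨hp1, by omega⟩, fun z a d => hz' z a (by omega), by omega⟩
    · exact ⟨_, St_step w i (i+1) b hS (Or.inl ⟨rfl, hw0⟩)⟩

lemma surj_B (n : ℕ) (w : ℕ → ℕ) (hw : ∀ i, i ≤ n → i ≤ ∑ x ∈ Finset.Icc 1 i, w x)
    (hn : ∑ x ∈ Finset.Icc 1 n, w x = n) :
    ∃ b : ℕ → ℕ, IsB n b ∧ NN n b ∧ ∀ x, 1 ≤ x → x ≤ n → cl b n x = w x := by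
  obtain ⟨b, hB, h2, h3, h4⟩ := surj_aux n w hw n le_rfl
  have heq : ∀ x ∈ Finset.Icc 1 n, cl b n x = w x := by
    rw [← Finset.sum_eq_sum_iff_of_le]
    · rw [hn, sum_cl n n n b hB le_rfl, Finset.filter_true_of_mem]
      · simp
      · intro y hy
        rw [Finset.mem_Icc] at hy
        have := hB y hy.1 hy.2
        omega
    · intro x hx
      rw [Finset.mem_Icc] at hx
      exact h3 x hx.1 hx.2
  refine ⟨b, hB, ?_, fun x a c => heq x (Finset.mem_Icc.2 ⟨a, c⟩)⟩
  rintro a p c d hap hpc hcd ⟨_, a1, d1, had, had'⟩ ⟨_, _, _, hpc', hpc''⟩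
  have := h4 a p c a1 hap hpc (by omega) hpc' hpc'' (fun z h h' => had' z h (by omega))
  have hba := hB a a1 (by omega)
  rw [← heq (b a) (Finset.mem_Icc.2 ⟨hba.1, by omega⟩)] at this
  have h5 := cl_lt b hcd d1 (b a) had.symm
  omega

/-- block minimum -/
noncomputable def bm {n : ℕ} (π : SetPartitionOn n) (y : ℕ) : ℕ := sInf (π.part y : Set ℕ)

lemma bm_mem {n : ℕ} (π : SetPartitionOn n) {y : ℕ} (h1 : 1 ≤ y) (hy : y ≤ n) :
    bm π y ∈ π.part y := by
  have : (π.part y : Set ℕ).Nonempty := by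
    rw [Finset.coe_nonempty, Finpartition.part_nonempty, Finset.mem_Icc]
    exact ⟨h1, hy⟩
  exact_mod_cast Nat.sInf_mem this

lemma bm_le {n : ℕ} (π : SetPartitionOn n) {y z : ℕ} (h : z ∈ π.part y) :
    bm π y ≤ z := Nat.sInf_le (by exact_mod_cast h)

lemma bm_eq_iff {n : ℕ} (π : SetPartitionOn n) {x y : ℕ} (h1 : 1 ≤ x) (hx : x ≤ n)
    (h2 : 1 ≤ y) (hy : y ≤ n) : bm π x = bm π y ↔ π.part x = π.part y := by
  constructor
  · intro h
    have hx' := bm_mem π h1 hx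
    have hy' := bm_mem π h2 hy
    rw [h] at hx'
    exact π.eq_of_mem_parts (π.part_mem.2 (Finset.mem_Icc.2 ⟨h1, hx⟩))
      (π.part_mem.2 (Finset.mem_Icc.2 ⟨h2, hy⟩)) hx' hy'
  · intro h
    unfold bm; rw [h]

lemma part_eq {n : ℕ} (π : SetPartitionOn n) {y z : ℕ} (h1 : 1 ≤ y) (hy : y ≤ n)
    (h : z ∈ π.part y) : π.part z = π.part y :=
  π.part_eq_of_mem (π.part_mem.2 (Finset.mem_Icc.2 ⟨h1, hy⟩)) h

lemma bm_isB {n : ℕ} (π : SetPartitionOn n) : IsB n (bm π) := by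
  intro y h1 hy
  have hm := bm_mem π h1 hy
  have h2 := π.part_subset y hm
  rw [Finset.mem_Icc] at h2
  refine ⟨h2.1, bm_le π (π.mem_part_self.2 (Finset.mem_Icc.2 ⟨h1, hy⟩)), ?_⟩
  rw [bm_eq_iff π h2.1 h2.2 h1 hy]
  exact part_eq π h1 hy hm

lemma mem_part_iff_bm {n : ℕ} (π : SetPartitionOn n) {x y : ℕ} (h1 : 1 ≤ x) (hx : x ≤ n)
    (h2 : 1 ≤ y) (hy : y ≤ n) : x ∈ π.part y ↔ bm π x = bm π y := by
  rw [bm_eq_iff π h1 hx h2 hy,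
    π.mem_part_iff_part_eq_part (Finset.mem_Icc.2 ⟨h1, hx⟩) (Finset.mem_Icc.2 ⟨h2, hy⟩)]

lemma bm_inj {n : ℕ} (π ρ : SetPartitionOn n) (h : ∀ y, 1 ≤ y → y ≤ n → bm π y = bm ρ y) :
    π = ρ := by
  have hp : ∀ y, 1 ≤ y → y ≤ n → π.part y = ρ.part y := by
    intro y h1 hy
    ext z
    by_cases hz : z ∈ Finset.Icc 1 n
    · rw [Finset.mem_Icc] at hz
      rw [mem_part_iff_bm π hz.1 hz.2 h1 hy, mem_part_iff_bm ρ hz.1 hz.2 h1 hy, h y h1 hy,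
        h z hz.1 hz.2]
    · exact ⟨fun h => absurd (π.part_subset y h) hz, fun h => absurd (ρ.part_subset y h) hz⟩
  have key : ∀ π ρ : SetPartitionOn n, (∀ y, 1 ≤ y → y ≤ n → π.part y = ρ.part y) →
      π.parts ⊆ ρ.parts := by
    intro π ρ hp B hB
    obtain ⟨y, hy⟩ := π.nonempty_of_mem_parts hB
    have hy' := π.subset hB hy
    rw [Finset.mem_Icc] at hy'
    rw [← π.part_eq_of_mem hB hy, hp y hy'.1 hy'.2, ρ.part_mem, Finset.mem_Icc]
    exact hy'
  apply Finpartition.ext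
  exact Finset.Subset.antisymm (key π ρ hp) (key ρ π (fun y a b => (hp y a b).symm))

lemma bm_surj {n : ℕ} (b : ℕ → ℕ) (hb : IsB n b) :
    ∃ π : SetPartitionOn n, ∀ y, 1 ≤ y → y ≤ n → bm π y = b y := by
  classical
  refine ⟨Finpartition.ofSetSetoid (Setoid.ker b) (Finset.Icc 1 n), ?_⟩
  intro y h1 hy
  set π := Finpartition.ofSetSetoid (Setoid.ker b) (Finset.Icc 1 n) with hπ
  have hmem : ∀ z, z ∈ π.part y ↔ (1 ≤ z ∧ z ≤ n) ∧ b y = b z := by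
    intro z
    rw [hπ, Finpartition.mem_part_ofSetSetoid_iff_rel]
    simp [Setoid.ker, Function.onFun]
    tauto
  have hby := hb y h1 hy
  apply le_antisymm
  · apply bm_le
    rw [hmem]
    omega
  · have := bm_mem π h1 hy
    rw [hmem] at this
    rw [this.2]
    exact (hb _ this.1.1 this.1.2).2.1

lemma isArc_iff {n : ℕ} (π : SetPartitionOn n) (i j : ℕ) : IsArc π i j ↔ ArcB n (bm π) i j := by
  unfold IsArc ArcB
  constructor
  · rintro ⟨hij, B, hB, hi, hj, hk⟩
    have hi' := Finset.mem_Icc.1 (π.subset hB hi)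
    have hj' := Finset.mem_Icc.1 (π.subset hB hj)
    have hBi := π.part_eq_of_mem hB hi
    have hBj := π.part_eq_of_mem hB hj
    refine ⟨hij, hi'.1, hj'.2, ?_, ?_⟩
    · rw [bm_eq_iff π hi'.1 hi'.2 hj'.1 hj'.2, hBi, hBj]
    · intro k h1 h2 h3
      rw [← mem_part_iff_bm π (by omega) (by omega) hi'.1 hi'.2, hBi] at h3
      exact hk k h3 ⟨h1, h2⟩
  · rintro ⟨hij, h1, h2, h3, h4⟩
    refine ⟨hij, π.part i, π.part_mem.2 (Finset.mem_Icc.2 ⟨h1, by omega⟩),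
      π.mem_part_self.2 (Finset.mem_Icc.2 ⟨h1, by omega⟩), ?_, ?_⟩
    · rw [mem_part_iff_bm π (by omega) h2 h1 (by omega)]; exact h3.symm
    · rintro k hk ⟨a, c⟩
      rw [mem_part_iff_bm π (by omega) (by omega) h1 (by omega)] at hk
      exact h4 k a c hk

lemma nonnesting_iff {n : ℕ} (π : SetPartitionOn n) : Nonnesting π ↔ NN n (bm π) := by
  unfold Nonnesting NN
  simp only [isArc_iff]
  push Not
  rfl

lemma isCut_iff {n : ℕ} (π : SetPartitionOn n) (i : ℕ) : IsCut π i ↔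
    1 ≤ i ∧ i ≤ n - 1 ∧ ∀ y, 1 ≤ y → y ≤ n → bm π y ≤ i → y ≤ i := by
  unfold IsCut
  refine and_congr_right fun h1 => and_congr_right fun h2 => ?_
  constructor
  · intro H y hy1 hy2 hb
    have hy := Finset.mem_Icc.2 ⟨hy1, hy2⟩
    rcases H (π.part y) (π.part_mem.2 hy) with h | h
    · exact h y (π.mem_part_self.2 hy)
    · have := h _ (bm_mem π hy1 hy2)
      omega
  · intro H B hB
    by_contra hc
    push Not at hc
    obtain ⟨⟨x, hx, hxi⟩, ⟨z, hz, hzi⟩⟩ := hc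
    have hx' := Finset.mem_Icc.1 (π.subset hB hx)
    have := H x hx'.1 hx'.2 (by
      have : bm π x ≤ z := bm_le π (by rw [π.part_eq_of_mem hB hx]; exact hz)
      omega)
    omega

/-- the word of a partition -/
noncomputable def wd {n : ℕ} (π : SetPartitionOn n) : List ℕ :=
  (List.range n).map (fun i => cl (bm π) n (i+1))

lemma sum_map_range (f : ℕ → ℕ) (i : ℕ) :
    ((List.range i).map (fun x => f (x+1))).sum = ∑ x ∈ Finset.Icc 1 i, f x := by
  induction' i with i ih
  · simp
  · rw [List.range_succ, List.map_append, List.sum_append, ih, Finset.sum_Icc_succ_top (by omega)]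
    simp

lemma sum_take_wd {n : ℕ} (π : SetPartitionOn n) (i : ℕ) (hi : i ≤ n) :
    ((wd π).take i).sum = ((Finset.Icc 1 n).filter (fun y => bm π y ≤ i)).card := by
  rw [← sum_cl n i n (bm π) (bm_isB π) le_rfl, wd, ← List.map_take, List.take_range, min_eq_left hi,
    sum_map_range (cl (bm π) n)]

lemma wd_length {n : ℕ} (π : SetPartitionOn n) : (wd π).length = n := by simp [wd]

lemma wd_heights {n : ℕ} (π : SetPartitionOn n) (i : ℕ) (hi : i ≤ n) : i ≤ ((wd π).take i).sum := by
  rw [sum_take_wd π i hi]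
  calc i = (Finset.Icc 1 i).card := by simp
    _ ≤ _ := by
      apply Finset.card_le_card
      intro y hy
      rw [Finset.mem_Icc] at hy
      have := bm_isB π y hy.1 (by omega)
      simp only [Finset.mem_filter, Finset.mem_Icc]
      omega

lemma wd_height_eq_iff {n : ℕ} (π : SetPartitionOn n) (i : ℕ) (hi : i ≤ n) :
    ((wd π).take i).sum = i ↔ ∀ y, 1 ≤ y → y ≤ n → bm π y ≤ i → y ≤ i := by
  rw [sum_take_wd π i hi]
  have hsub : Finset.Icc 1 i ⊆ (Finset.Icc 1 n).filter (fun y => bm π y ≤ i) := by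
    intro y hy
    rw [Finset.mem_Icc] at hy
    have := bm_isB π y hy.1 (by omega)
    simp only [Finset.mem_filter, Finset.mem_Icc]
    omega
  constructor
  · intro h y h1 h2 h3
    have := Finset.eq_of_subset_of_card_le hsub (by rw [h]; simp)
    have hy : y ∈ Finset.Icc 1 i := by
      rw [this]; simp only [Finset.mem_filter, Finset.mem_Icc]; exact ⟨⟨h1, h2⟩, h3⟩
    exact (Finset.mem_Icc.1 hy).2
  · intro h
    have : (Finset.Icc 1 n).filter (fun y => bm π y ≤ i) = Finset.Icc 1 i := by
      apply Finset.Subset.antisymm _ hsub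
      intro y hy
      simp only [Finset.mem_filter, Finset.mem_Icc] at hy ⊢
      exact ⟨hy.1.1, h y hy.1.1 hy.1.2 hy.2⟩
    rw [this]; simp

lemma wd_good_iff {n m : ℕ} (hn : 1 ≤ n) (hm : 1 ≤ m) (π : SetPartitionOn n) :
    good 0 m (wd π) ↔ cutCount π = m - 1 := by
  classical
  have hsum : (wd π).sum = n := by
    have := (wd_height_eq_iff π n le_rfl).2 (fun y _ h _ => h)
    rwa [List.take_of_length_le (by rw [wd_length])] at this
  rw [good_iff, wd_length]
  simp only [Nat.zero_add]
  have hset : (Finset.range (n+1)).filter (fun i => ((wd π).take i).sum = i) =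
      insert 0 (insert n ((Finset.range (n+1)).filter (fun i => IsCut π i))) := by
    ext i
    simp only [Finset.mem_filter, Finset.mem_insert, Finset.mem_range, isCut_iff]
    constructor
    · rintro ⟨h1, h2⟩
      rw [wd_height_eq_iff π i (by omega)] at h2
      by_cases h0 : i = 0
      · left; exact h0
      · by_cases h3 : i = n
        · right; left; exact h3
        · right; right; exact ⟨h1, by omega, by omega, h2⟩
    · rintro (rfl | rfl | ⟨h1, _, _, h2⟩)
      · simp
      · refine ⟨by omega, (wd_height_eq_iff π _ le_rfl).2 (fun y _ h _ => h)⟩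
      · exact ⟨h1, (wd_height_eq_iff π i (by omega)).2 h2⟩
  have hcut : cutCount π = ((Finset.range (n+1)).filter (fun i => IsCut π i)).card := by
    unfold cutCount
    rw [← Set.ncard_coe_finset]
    congr 1
    ext i
    simp only [Finset.coe_filter, Finset.mem_range, Set.mem_ofPred_eq]
    constructor
    · intro h; refine ⟨?_, h⟩
      have := h.2.1; omega
    · exact fun h => h.2
  rw [hset, Finset.card_insert_of_notMem, Finset.card_insert_of_notMem, ← hcut]
  · constructor
    · rintro ⟨_, _, h⟩; omega
    · intro h
      exact ⟨fun i hi => wd_heights π i hi, hsum, by omega⟩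
  · simp only [Finset.mem_filter, isCut_iff]; omega
  · simp only [Finset.mem_insert, Finset.mem_filter, isCut_iff]; omega

lemma fiber_eq_part {n : ℕ} (π : SetPartitionOn n) {x : ℕ} (h1 : 1 ≤ x) (hx : x ≤ n)
    (hb : bm π x = x) : cl (bm π) n x = (π.part x).card := by
  unfold cl
  congr 1
  ext z
  simp only [Finset.mem_filter]
  constructor
  · rintro ⟨hz, h⟩
    rw [Finset.mem_Icc] at hz
    rw [mem_part_iff_bm π hz.1 hz.2 h1 hx, h, hb]
  · intro h
    have hz := π.part_subset x h
    refine ⟨hz, ?_⟩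
    rw [Finset.mem_Icc] at hz
    rw [mem_part_iff_bm π hz.1 hz.2 h1 hx, hb] at h
    exact h

lemma card_type {n : ℕ} (π : SetPartitionOn n) (j : ℕ) :
    (π.parts.filter (fun B => B.card = j + 1)).card =
      ((Finset.Icc 1 n).filter (fun x => cl (bm π) n x = j + 1)).card := by
  symm
  have hfix : ∀ x, 1 ≤ x → x ≤ n → cl (bm π) n x = j + 1 → bm π x = x := fun x h1 h2 h =>
    (cl_ne_zero (bm_isB π) h1 h2).1 (by omega)
  refine Finset.card_bij (fun x _ => π.part x) ?_ ?_ ?_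
  · intro x hx
    simp only [Finset.mem_filter, Finset.mem_Icc] at hx
    have hb := hfix x hx.1.1 hx.1.2 hx.2
    rw [Finset.mem_filter, π.part_mem, ← fiber_eq_part π hx.1.1 hx.1.2 hb, Finset.mem_Icc]
    exact hx
  · intro x hx y hy h
    simp only [Finset.mem_filter, Finset.mem_Icc] at hx hy
    have hb := hfix x hx.1.1 hx.1.2 hx.2
    have hb' := hfix y hy.1.1 hy.1.2 hy.2
    rw [← bm_eq_iff π hx.1.1 hx.1.2 hy.1.1 hy.1.2, hb, hb'] at h
    exact h
  · intro B hB
    rw [Finset.mem_filter] at hB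
    obtain ⟨y, hy⟩ := π.nonempty_of_mem_parts hB.1
    have hy' := Finset.mem_Icc.1 (π.subset hB.1 hy)
    have hyB := π.part_eq_of_mem hB.1 hy
    have hm := bm_mem π hy'.1 hy'.2
    have hi := bm_isB π y hy'.1 hy'.2
    have hpe := part_eq π hy'.1 hy'.2 hm
    refine ⟨bm π y, ?_, by rw [hpe, hyB]⟩
    rw [Finset.mem_filter, fiber_eq_part π hi.1 (by omega) hi.2.2, hpe, hyB, Finset.mem_Icc]
    exact ⟨⟨hi.1, by omega⟩, hB.2⟩

lemma count_wd {n : ℕ} (π : SetPartitionOn n) (a : ℕ) :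
    (wd π).count a = ((Finset.Icc 1 n).filter (fun x => cl (bm π) n x = a)).card := by
  have : ∀ k, ((List.range k).map (fun i => cl (bm π) n (i+1))).count a =
      ((Finset.Icc 1 k).filter (fun x => cl (bm π) n x = a)).card := by
    intro k
    induction' k with k ih
    · simp
    · have : Finset.Icc 1 (k+1) = insert (k+1) (Finset.Icc 1 k) := by
        ext z; simp only [Finset.mem_insert, Finset.mem_Icc]; omega
      rw [List.range_succ, List.map_append, List.count_append, ih, this, Finset.filter_insert]
      by_cases h : cl (bm π) n (k+1) = a
      · rw [if_pos h, Finset.card_insert_of_notMem (by simp)]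
        simp [h]
      · rw [if_neg h]
        simp [h]
  exact this n

/-- the multiset of excess sizes -/
def QQ {n : ℕ} (r : Fin n → ℕ) : Multiset ℕ := ∑ i : Fin n, Multiset.replicate (r i) i.1

lemma count_QQ {n : ℕ} (r : Fin n → ℕ) (i : Fin n) : (QQ r).count i.1 = r i := by
  unfold QQ
  rw [Multiset.count_sum', Finset.sum_eq_single i]
  · simp
  · intro j _ hj
    rw [Multiset.count_replicate, if_neg]
    intro h; exact hj (Fin.ext h)
  · simp

lemma mem_QQ {n : ℕ} (r : Fin n → ℕ) (d : ℕ) (h : d ∈ QQ r) : d < n := by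
  unfold QQ at h
  rw [Multiset.mem_sum] at h
  obtain ⟨i, _, hi⟩ := h
  rw [Multiset.eq_of_mem_replicate hi]
  exact i.2

lemma card_QQ {n : ℕ} (r : Fin n → ℕ) : (QQ r).card = ∑ i, r i := by
  simp [QQ]

lemma sum_QQ {n : ℕ} (r : Fin n → ℕ) : (QQ r).sum = ∑ i, i.1 * r i := by
  unfold QQ
  rw [Multiset.sum_sum]
  simp [mul_comm]

lemma PF_QQ {n : ℕ} (r : Fin n → ℕ) : PF n (QQ r) = ∏ i, (r i).factorial := by
  unfold PF
  rw [Finset.prod_range]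
  simp [count_QQ]

lemma letters_iff {n : ℕ} (r : Fin n → ℕ) (hr : ∑ i, r i < n) (R : Multiset ℕ) (hc : R.card = n)
    (hR : ∀ a ∈ R, a ≤ n) :
    (∀ i : Fin n, R.count (i.1 + 1) = r i) ↔ R = letters (n - ∑ i, r i) (QQ r) := by
  have hcs : ∀ d s, (letters s (QQ r)).count (d+1) = (QQ r).count d := by
    intro d s
    unfold letters
    rw [Multiset.count_add, Multiset.count_replicate, if_neg (by omega),
      Multiset.count_map_eq_count' _ _ Nat.succ_injective, Nat.zero_add]
  constructor
  · intro h
    have h0 : ∀ R : Multiset ℕ, R = Multiset.replicate (R.count 0) 0 + R.filter (fun a => a ≠ 0) := by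
      intro R
      conv_lhs => rw [← Multiset.filter_add_not (fun a => a = 0) R]
      rw [Multiset.filter_eq' R 0]
    have h1 : R.filter (fun a => a ≠ 0) = 
        (letters (n - ∑ i, r i) (QQ r)).filter (fun a => a ≠ 0) := by
      ext a
      by_cases ha : a = 0
      · rw [Multiset.count_eq_zero_of_notMem, Multiset.count_eq_zero_of_notMem] <;> simp [ha]
      · rw [Multiset.count_filter_of_pos (p := fun a => a ≠ 0) ha,
          Multiset.count_filter_of_pos (p := fun a => a ≠ 0) ha]
        obtain ⟨d, rfl⟩ := Nat.exists_eq_succ_of_ne_zero ha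
        rw [Nat.succ_eq_add_one, hcs]
        by_cases hd : d < n
        · rw [h ⟨d, hd⟩, count_QQ r ⟨d, hd⟩]
        · rw [Multiset.count_eq_zero_of_notMem, Multiset.count_eq_zero_of_notMem]
          · exact fun h => hd (mem_QQ r d h)
          · intro h; have := hR _ h; omega
    have hc' : (letters (n - ∑ i, r i) (QQ r)).card = n := by
      simp [letters, card_QQ]; omega
    have e1 := congrArg Multiset.card (h0 R)
    have e2 := congrArg Multiset.card (h0 (letters (n - ∑ i, r i) (QQ r)))
    rw [hc, Multiset.card_add, Multiset.card_replicate, h1] at e1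
    rw [hc', Multiset.card_add, Multiset.card_replicate] at e2
    rw [h0 R, h0 (letters (n - ∑ i, r i) (QQ r)), h1]
    congr 2
    omega
  · intro h i
    rw [h, hcs, count_QQ]

lemma hasType_iff {n : ℕ} (r : Fin n → ℕ) (hr : ∑ i, r i < n) (π : SetPartitionOn n) :
    HasType π r ↔ (wd π : Multiset ℕ) = letters (n - ∑ i, r i) (QQ r) := by
  rw [← letters_iff r hr]
  · unfold HasType
    simp only [card_type, Multiset.coe_count, count_wd]
  · simp [wd]
  · intro a ha
    simp only [wd, Multiset.mem_coe, List.mem_map] at ha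
    obtain ⟨i, _, rfl⟩ := ha
    unfold cl
    refine (Finset.card_filter_le _ _).trans ?_
    simp

lemma ArcB_congr {n : ℕ} {b b' : ℕ → ℕ} (h : ∀ y, 1 ≤ y → y ≤ n → b y = b' y) (i j : ℕ)
    (hA : ArcB n b i j) : ArcB n b' i j := by
  obtain ⟨h1, h2, h3, h4, h5⟩ := hA
  refine ⟨h1, h2, h3, ?_, ?_⟩
  · rw [← h i h2 (by omega), ← h j (by omega) h3, h4]
  · intro k a c
    rw [← h i h2 (by omega), ← h k (by omega) (by omega)]
    exact h5 k a c

lemma list_eq_map (l : List ℕ) : l = (List.range l.length).map (fun i => l.getD i 0) := by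
  apply List.ext_getElem
  · simp
  · intro i h1 h2
    simp [h1]

lemma card_eq_cnt {n m : ℕ} (hn : 1 ≤ n) (hm : 1 ≤ m) (r : Fin n → ℕ) (hr : ∑ i, r i < n) :
    Nat.card {π : SetPartitionOn n // Nonnesting π ∧ HasType π r ∧ cutCount π = m - 1} =
      cnt (letters (n - ∑ i, r i) (QQ r)) (good 0 m) := by
  classical
  unfold cnt
  rw [← Fintype.card_coe, ← Nat.card_eq_fintype_card]
  have hmem : ∀ l : List ℕ, l ∈ (Multiset.lists (letters (n - ∑ i, r i) (QQ r))).toFinset.filter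
      (good 0 m) ↔ (l : Multiset ℕ) = letters (n - ∑ i, r i) (QQ r) ∧ good 0 m l := by
    intro l
    simp only [Finset.mem_filter, Multiset.mem_toFinset, Multiset.mem_lists_iff]
    refine and_congr_left fun _ => ?_
    exact eq_comm
  refine Nat.card_eq_of_bijective (fun π => ⟨wd π.1, (hmem _).2
    ⟨(hasType_iff r hr _).1 π.2.2.1, (wd_good_iff hn hm _).2 π.2.2.2⟩⟩) ⟨?_, ?_⟩
  · rintro ⟨π, h1, _⟩ ⟨ρ, h1', _⟩ h
    simp only [Subtype.mk.injEq] at h ⊢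
    apply bm_inj
    apply inj_B (bm_isB π) (bm_isB ρ) ((nonnesting_iff π).1 h1) ((nonnesting_iff ρ).1 h1')
    intro x hx1 hx2
    unfold wd at h
    rw [List.map_inj_left] at h
    have := h (x-1) (by rw [List.mem_range]; omega)
    rwa [Nat.sub_add_cancel hx1] at this
  · rintro ⟨l, hl⟩
    rw [hmem] at hl
    obtain ⟨hl1, hl2⟩ := hl
    have hlen : l.length = n := by
      have := congrArg Multiset.card hl1
      simp [letters, card_QQ] at this; omega
    obtain ⟨g1, g2, _⟩ := (good_iff l 0 m).1 hl2
    let w : ℕ → ℕ := fun x => l.getD (x-1) 0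
    have hlw : l = (List.range n).map (fun i => w (i+1)) := by
      have := list_eq_map l
      rw [hlen] at this
      simpa [w] using this
    have hs : ∀ i, i ≤ n → (l.take i).sum = ∑ x ∈ Finset.Icc 1 i, w x := by
      intro i hi
      conv_lhs => rw [hlw]
      rw [← List.map_take, List.take_range, min_eq_left hi, sum_map_range w]
    obtain ⟨b, hb, hnn, hcl⟩ := surj_B n w
      (fun i hi => by have := g1 i (by omega); rw [hs i hi] at this; omega)
      (by rw [← hs n le_rfl, List.take_of_length_le (by omega)]; omega)
    obtain ⟨π, hπ⟩ := bm_surj b hb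
    have hwd : wd π = l := by
      rw [hlw]
      unfold wd
      apply List.map_congr_left
      intro i hi
      rw [List.mem_range] at hi
      rw [← hcl (i+1) (by omega) (by omega)]
      exact cl_congr _ _ _ _ hπ
    refine ⟨⟨π, ?_, ?_, ?_⟩, ?_⟩
    · rw [nonnesting_iff]
      intro a p c d h1 h2 h3 h4 h5
      exact hnn a p c d h1 h2 h3 (ArcB_congr hπ _ _ h4) (ArcB_congr hπ _ _ h5)
    · rw [hasType_iff r hr, hwd, hl1]
    · rw [← wd_good_iff hn hm, hwd]; exact hl2
    · simp only [hwd]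

/-- The number `N` of nonnesting partitions of `[n]` of type `r` with exactly `m` connected
components satisfies `N · (n - |r| - 1)! · (|r| - m)! · r! = m · (n - m - 1)! · (|r| - 1)!`. -/
theorem card_nonnesting_of_type_components (n m : ℕ) (hn : 1 ≤ n) (hm : 1 ≤ m)
    (r : Fin n → ℕ) (hrv : ∑ i, (i.1 + 1) * r i = n) (hr : ∑ i, r i < n)
    (hmr : m ≤ ∑ i, r i) (hmn : m < n) :
    Nat.card {π : SetPartitionOn n // Nonnesting π ∧ HasType π r ∧ cutCount π = m - 1} *
        (n - (∑ i, r i) - 1).factorial * ((∑ i, r i) - m).factorial * ∏ i, (r i).factorial =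
      m * (n - m - 1).factorial * ((∑ i, r i) - 1).factorial := by
  rw [card_eq_cnt hn hm r hr]
  have hsum : (∑ i, r i) + (QQ r).sum = n := by
    rw [sum_QQ, ← Finset.sum_add_distrib]
    refine Eq.trans ?_ hrv
    apply Finset.sum_congr rfl
    intro i _; ring
  have hcard := card_QQ r
  set k := ∑ i, r i
  obtain ⟨t, ht⟩ : ∃ t, n = k + t + 1 := ⟨n - k - 1, by omega⟩
  obtain ⟨j, hj⟩ : ∃ j, k = m + j := ⟨k - m, by omega⟩
  have hM := M_formula n t 0 m j (QQ r) (mem_QQ r) (by omega) (by omega)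
  have e0 : n - k = t + 1 := by omega
  have e1 : n - k - 1 = t := by omega
  have e2 : k - m = j := by omega
  have e3 : n - m - 1 = j + t := by omega
  have e4 : (QQ r).sum = t + 1 := by omega
  rw [e1, e2, e3, e0]
  unfold M at hM
  rw [PF_QQ, e4, ← hj, Nat.factorial_succ] at hM
  have hM' : (t + 1) * (cnt (letters (t + 1) (QQ r)) (good 0 m) * t.factorial * j.factorial *
      ∏ i, (r i).factorial) = (t + 1) * (m * (j + t).factorial * (k - 1).factorial) := by
    have : ((((t + 1) * (cnt (letters (t + 1) (QQ r)) (good 0 m) * t.factorial * j.factorial *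
      ∏ i, (r i).factorial) : ℕ)) : ℚ) = (((t + 1) * (m * (j + t).factorial * (k - 1).factorial) : ℕ) : ℚ) := by
      push_cast at hM ⊢
      linarith
    exact_mod_cast this
  exact Nat.eq_of_mul_eq_mul_left (by omega) hM'
end

section
/- Let n, m ≥ 1 and let r = (r_1, …, r_n) ∈ ℕ^n satisfy r_1 + 2r_2 + ⋯ + n·r_n = n, |r| := r_1 + ⋯ + r_n < n, and m ≤ |r| and m < n. Then the number N of Dyck paths of length 2n with exactly m − 1 returns and with ascent type r satisfies N · (n − |r| − 1)! · (|r| − m)! · r_1! r_2! ⋯ r_n! = m · (n − m − 1)! · (|r| − 1)!. -/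
/-- The number of returns of the path `l` of length `2n`: lattice points strictly between the
endpoints where the numbers of U's and D's so far agree. -/
def returnCount (n : ℕ) (l : List Bool) : ℕ :=
  ((Finset.Ioo 0 (2 * n)).filter
    (fun k => (l.take k).count true = (l.take k).count false)).card

namespace DyckAux

/-- hitting predicate -/
def HP : List ℕ → ℕ → ℕ → Prop
  | [], h, m => h = 0 ∧ m = 0
  | a :: l, h + 1, m => HP l (h + a) m
  | _ :: _, 0, 0 => False
  | 0 :: _, 0, _ + 1 => False
  | (a + 1) :: l, 0, m + 1 => HP l a m

noncomputable def cnt (s : Multiset ℕ) (P : List ℕ → Prop) : ℕ :=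
  Nat.card {l : List ℕ // (l : Multiset ℕ) = s ∧ P l}

noncomputable def wt (s : Multiset ℕ) (P : List ℕ → Prop) : ℕ :=
  cnt s P * ∏ a ∈ s.toFinset, (s.count a).factorial

lemma finite_cnt (s : Multiset ℕ) (P : List ℕ → Prop) :
    Finite {l : List ℕ // (l : Multiset ℕ) = s ∧ P l} := by
  obtain ⟨l0, rfl⟩ := Quot.exists_rep s
  refine Set.Finite.subset (List.finite_toSet l0.permutations) ?_
  rintro l ⟨h, -⟩
  have : (l : Multiset ℕ) = (l0 : Multiset ℕ) := h
  simpa using Multiset.coe_eq_coe.1 this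

lemma cnt_rec (s : Multiset ℕ) (hs : s ≠ 0) (P : List ℕ → Prop) :
    cnt s P = ∑ a ∈ s.toFinset, cnt (s.erase a) (fun l => P (a :: l)) := by
  classical
  have := fun a : s.toFinset => finite_cnt (s.erase a) (fun l => P (a.1 :: l))
  rw [← Finset.sum_coe_sort s.toFinset (fun a => cnt (s.erase a) (fun l => P (a :: l)))]
  unfold cnt
  rw [← Nat.card_sigma]
  symm
  apply Nat.card_eq_of_bijective
    (fun x : (Σ a : s.toFinset, {l : List ℕ // (l : Multiset ℕ) = s.erase a ∧ P (a.1 :: l)}) =>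
      (⟨x.1.1 :: x.2.1, by
        obtain ⟨⟨a, ha⟩, ⟨l, hl, hp⟩⟩ := x
        refine ⟨?_, hp⟩
        simp only at hl ⊢
        rw [← Multiset.cons_coe, hl, Multiset.cons_erase (by simpa using ha)]⟩ :
        {l : List ℕ // (l : Multiset ℕ) = s ∧ P l}))
  constructor
  · rintro ⟨⟨a, ha⟩, ⟨l, hl, hp⟩⟩ ⟨⟨a', ha'⟩, ⟨l', hl', hp'⟩⟩ h
    simp only [Subtype.mk.injEq, List.cons.injEq] at h
    obtain ⟨rfl, rfl⟩ := h
    rfl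
  · rintro ⟨l, hl, hp⟩
    cases l with
    | nil => exact absurd hl.symm (by simpa using hs)
    | cons a l =>
      subst hl
      exact ⟨⟨⟨a, by simp⟩, ⟨l, by simp, hp⟩⟩, rfl⟩

lemma prod_erase (s : Multiset ℕ) (a : ℕ) (ha : a ∈ s) :
    ∏ b ∈ s.toFinset, (s.count b).factorial =
      s.count a * ∏ b ∈ (s.erase a).toFinset, ((s.erase a).count b).factorial := by
  have h1 : ∏ b ∈ (s.erase a).toFinset, ((s.erase a).count b).factorial =
      ∏ b ∈ s.toFinset, ((s.erase a).count b).factorial := by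
    apply Finset.prod_subset
    · intro b hb
      simp only [Multiset.mem_toFinset] at *
      exact Multiset.mem_of_mem_erase hb
    · intro b _ hb
      simp only [Multiset.mem_toFinset] at hb
      simp [Multiset.count_eq_zero_of_notMem hb]
  have ha' : a ∈ s.toFinset := by simpa
  rw [h1, ← Finset.mul_prod_erase _ _ ha', ← Finset.mul_prod_erase _ _ ha', ← mul_assoc]
  congr 1
  · rw [Multiset.count_erase_self, Nat.mul_factorial_pred (by
      have := Multiset.count_pos.2 ha; omega)]
  · apply Finset.prod_congr rfl
    intro b hb
    rw [Multiset.count_erase_of_ne (Finset.ne_of_mem_erase hb)]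

lemma wt_rec (s : Multiset ℕ) (hs : s ≠ 0) (P : List ℕ → Prop) :
    wt s P = (s.map fun a => wt (s.erase a) (fun l => P (a :: l))).sum := by
  rw [Finset.sum_multiset_map_count]
  unfold wt
  rw [cnt_rec s hs, Finset.sum_mul]
  apply Finset.sum_congr rfl
  intro a ha
  rw [prod_erase s a (by simpa using ha), smul_eq_mul]
  ring

lemma wt_zero (s : Multiset ℕ) (P : List ℕ → Prop) (h : ∀ l : List ℕ, (l : Multiset ℕ) = s → ¬ P l) :
    wt s P = 0 := by
  unfold wt cnt
  have : IsEmpty {l : List ℕ // (l : Multiset ℕ) = s ∧ P l} := ⟨fun ⟨l, h1, h2⟩ => h l h1 h2⟩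
  simp

noncomputable def W (s : Multiset ℕ) (h m : ℕ) : ℕ := wt s (fun l => HP l h m)

lemma W_nil : W 0 0 0 = 1 := by
  unfold W wt cnt
  have : Unique {l : List ℕ // (l : Multiset ℕ) = 0 ∧ HP l 0 0} :=
    { default := ⟨[], by simp [HP]⟩
      uniq := by
        rintro ⟨l, hl, _⟩
        simp at hl
        subst hl
        rfl }
  rw [Nat.card_unique]
  simp

lemma W_succ (s : Multiset ℕ) (hs : s ≠ 0) (h m : ℕ) :
    W s (h + 1) m = (s.map fun a => W (s.erase a) (h + a) m).sum := by
  unfold W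
  rw [wt_rec s hs]
  simp only [HP]

lemma W_zero (s : Multiset ℕ) (hs : s ≠ 0) (m : ℕ) :
    W s 0 (m + 1) = (s.map fun a => if a = 0 then 0 else W (s.erase a) (a - 1) m).sum := by
  unfold W
  rw [wt_rec s hs]
  congr 1
  apply Multiset.map_congr rfl
  intro a _
  cases a with
  | zero => simp only [if_true]; exact wt_zero _ _ (by simp [HP])
  | succ a => simp [HP]

lemma W_zero_zero (s : Multiset ℕ) (hs : s ≠ 0) : W s 0 0 = 0 := by
  apply wt_zero
  rintro l rfl
  cases l with
  | nil => simp at hs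
  | cons a l => simp [HP]

lemma HP_le (l : List ℕ) : ∀ h m, HP l h m → m + l.count 0 ≤ l.length := by
  induction l with
  | nil => intro h m; simp [HP]
  | cons a l ih =>
    intro h m hp
    have hc : l.count 0 ≤ l.length := List.count_le_length
    rcases h with _ | h
    · rcases m with _ | m
      · simp [HP] at hp
      · rcases a with _ | a
        · simp [HP] at hp
        · have := ih _ _ hp
          simp
          omega
    · have := ih _ _ hp
      rw [List.count_cons]
      simp only [List.length_cons]
      split_ifs <;> omega

lemma W_big (s : Multiset ℕ) (h m : ℕ) (hm : s.card < m + s.count 0) : W s h m = 0 := by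
  apply wt_zero
  rintro l rfl hp
  have := HP_le l h m hp
  simp at hm
  omega

lemma lemA (N : ℕ) : ∀ (s : Multiset ℕ) (h : ℕ), s.card = N + 1 → s.sum + h = N + 1 →
    W s h 0 = h * N.factorial := by
  induction N with
  | zero =>
    intro s h h1 h2
    obtain ⟨a, rfl⟩ := Multiset.card_eq_one.1 h1
    rcases h with _ | h
    · rw [W_zero_zero _ (by simp)]; simp
    · rw [W_succ _ (by simp)]
      simp at h2 ⊢
      have : h = 0 := by omega
      have : a = 0 := by omega
      subst_vars
      simp [W_nil]
  | succ N ih =>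
    intro s h h1 h2
    have hs : s ≠ 0 := by rintro rfl; simp at h1
    rcases h with _ | h
    · rw [W_zero_zero _ hs]; simp
    · rw [W_succ _ hs]
      have : (s.map fun a => W (s.erase a) (h + a) 0) = s.map fun a => (h + a) * N.factorial := by
        apply Multiset.map_congr rfl
        intro a ha
        have e1 := Multiset.cons_erase ha
        have e2 := congrArg Multiset.card e1
        have e3 := congrArg Multiset.sum e1
        simp only [Multiset.card_cons, Multiset.sum_cons] at e2 e3
        exact ih _ _ (by omega) (by omega)
      rw [this, Multiset.sum_map_mul_right, Multiset.sum_map_add]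
      simp only [Multiset.map_const', Multiset.sum_replicate, Multiset.map_id', h1, smul_eq_mul]
      have : s.sum = N + 1 - h := by omega
      have h3 : h ≤ N + 1 := by omega
      obtain ⟨d, hd⟩ := Nat.exists_eq_add_of_le h3
      have : s.sum = d := by omega
      rw [this, Nat.factorial_succ]
      have : (N + 1 + 1) * h + d = (h + 1) * (N + 1) := by rw [hd]; nlinarith
      rw [this]; ring

lemma lemC (k : ℕ) : ∀ j, W (Multiset.replicate (k + j) 1) 0 k = if j = 0 then k.factorial else 0 := by
  induction k with
  | zero =>
    intro j
    rcases j with _ | j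
    · simp [W_nil]
    · rw [W_zero_zero _ (by simp)]; simp
  | succ k ih =>
    intro j
    have e : k + 1 + j = (k + j) + 1 := by ring
    rw [e, W_zero _ (by simp)]
    simp only [Multiset.replicate_succ]
    simp [ih]
    split_ifs with hj
    · subst hj; simp [Nat.factorial_succ]; ring
    · simp

lemma all_one (t : Multiset ℕ) (h1 : ∀ b ∈ t, 1 ≤ b) (h2 : t.sum ≤ t.card) :
    t = Multiset.replicate t.card 1 := by
  induction t using Multiset.induction with
  | empty => simp
  | cons a t ih =>
    have ht : t.card ≤ t.sum := by
      have := Multiset.card_nsmul_le_sum (s := t) (a := 1) (fun b hb => h1 b (by simp [hb]))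
      simpa using this
    have ha := h1 a (by simp)
    simp at h2
    have := ih (fun b hb => h1 b (by simp [hb])) (by omega)
    have ha : a = 1 := by omega
    subst ha
    rw [Multiset.card_cons, Multiset.replicate_succ, ← this]

lemma card_le_sum (t : Multiset ℕ) (h1 : ∀ b ∈ t, 1 ≤ b) : t.card ≤ t.sum := by
  have := Multiset.card_nsmul_le_sum (s := t) (a := 1) h1
  simpa using this

lemma sum_pred (t : Multiset ℕ) (h1 : ∀ b ∈ t, 1 ≤ b) :
    (t.map fun b => b - 1).sum + t.card = t.sum := by
  induction t using Multiset.induction with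
  | empty => simp
  | cons a t ih =>
    have := ih (fun b hb => h1 b (by simp [hb]))
    have ha := h1 a (by simp)
    simp
    omega

lemma erase_facts (t : Multiset ℕ) (h1 : ∀ b ∈ t, 1 ≤ b) (b : ℕ) (hb : b ∈ t) (c : ℕ) :
    (Multiset.replicate c 0 + t).erase b = Multiset.replicate c 0 + t.erase b ∧
    (t.erase b).card + 1 = t.card ∧ (t.erase b).sum + b = t.sum ∧ ∀ x ∈ t.erase b, 1 ≤ x := by
  have e1 := Multiset.cons_erase hb
  have e2 := congrArg Multiset.card e1
  have e3 := congrArg Multiset.sum e1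
  simp only [Multiset.card_cons, Multiset.sum_cons] at e2 e3
  refine ⟨?_, e2, by omega, fun x hx => h1 x (Multiset.mem_of_mem_erase hx)⟩
  rw [Multiset.erase_add_right_pos _ hb]

/-- step with `h = 0` -/
lemma W_split_zero (c m : ℕ) (t : Multiset ℕ) (ht : ∀ b ∈ t, 1 ≤ b) :
    W (Multiset.replicate (c + 1) 0 + t) 0 (m + 1) =
      (t.map fun b => W (Multiset.replicate (c + 1) 0 + t.erase b) (b - 1) m).sum := by
  rw [W_zero _ (by simp [Multiset.replicate_succ]), Multiset.map_add, Multiset.sum_add]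
  simp only [Multiset.map_replicate, Multiset.sum_replicate, if_true, smul_zero, zero_add]
  congr 1
  apply Multiset.map_congr rfl
  intro b hb
  have := ht b hb
  rw [if_neg (by omega), (erase_facts t ht b hb (c + 1)).1]

lemma W_split_succ (c h m : ℕ) (t : Multiset ℕ) (ht : ∀ b ∈ t, 1 ≤ b) :
    W (Multiset.replicate (c + 1) 0 + t) (h + 1) m =
      (c + 1) * W (Multiset.replicate c 0 + t) h m +
      (t.map fun b => W (Multiset.replicate (c + 1) 0 + t.erase b) (h + b) m).sum := by
  rw [W_succ _ (by simp [Multiset.replicate_succ]), Multiset.map_add, Multiset.sum_add]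
  congr 1
  · simp only [Multiset.map_replicate, Multiset.sum_replicate, add_zero, smul_eq_mul]
    rw [Multiset.replicate_succ, Multiset.cons_add, Multiset.erase_cons_head]
  congr 1
  apply Multiset.map_congr rfl
  intro b hb
  rw [(erase_facts t ht b hb (c + 1)).1]

lemma lemB (N : ℕ) : ∀ (c m j h : ℕ) (t : Multiset ℕ), c + m + j = N → (∀ b ∈ t, 1 ≤ b) →
    t.card = m + 1 + j → t.sum + h = c + 1 + (m + 1 + j) →
    W (Multiset.replicate (c + 1) 0 + t) h (m + 1) * j.factorial =
      (c + j).factorial * (m + j).factorial * (h * j + (m + 1) * (c + 1)) := by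
  induction N using Nat.strong_induction_on with
  | _ N ih =>
  intro c m j h t hN ht hcard hsum
  rcases h with _ | h
  · have hp := sum_pred t ht
    have hp' : (t.map fun b => b - 1).sum = c + 1 := by omega
    rw [W_split_zero _ _ _ ht]
    rcases m with _ | m
    · have : (t.map fun b => W (Multiset.replicate (c + 1) 0 + t.erase b) (b - 1) 0) =
          t.map fun b => (b - 1) * (c + j).factorial := by
        apply Multiset.map_congr rfl
        intro b hb
        obtain ⟨-, e1, e2, -⟩ := erase_facts t ht b hb 0
        have := ht b hb
        apply lemA
        · simp; omega
        · simp; omega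
      rw [this, Multiset.sum_map_mul_right, hp']
      simp
      ring
    · rw [← Multiset.sum_map_mul_right]
      have : (t.map fun b => W (Multiset.replicate (c + 1) 0 + t.erase b) (b - 1) (m + 1) *
            j.factorial) =
          t.map fun b => (c + j).factorial * (m + j).factorial *
            ((b - 1) * j + (m + 1) * (c + 1)) := by
        apply Multiset.map_congr rfl
        intro b hb
        obtain ⟨-, e1, e2, e3⟩ := erase_facts t ht b hb 0
        have := ht b hb
        exact ih (c + m + j) (by omega) c m j _ _ rfl e3 (by omega) (by omega)
      rw [this, Multiset.sum_map_mul_left, Multiset.sum_map_add, Multiset.sum_map_mul_right, hp']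
      simp only [Multiset.map_const', Multiset.sum_replicate, smul_eq_mul, hcard]
      have : m + 1 + j = (m + j) + 1 := by ring
      rw [this, Nat.factorial_succ]
      ring
  · rw [W_split_succ _ _ _ _ ht, add_mul, ← Multiset.sum_map_mul_right]
    have hle := card_le_sum t ht
    -- the zero part
    have hz0 : c = 0 → W (Multiset.replicate c 0 + t) h (m + 1) =
        if j = 0 then (m + 1).factorial else 0 := by
      rintro rfl
      have : h = 0 := by omega
      subst this
      rw [all_one t ht (by omega), hcard]
      simpa using lemC (m + 1) j
    have hz1 : ∀ c', c = c' + 1 → W (Multiset.replicate c 0 + t) h (m + 1) * j.factorial =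
        (c' + j).factorial * (m + j).factorial * (h * j + (m + 1) * (c' + 1)) := by
      rintro c' rfl
      exact ih (c' + m + j) (by omega) c' m j h t rfl ht hcard (by omega)
    have hn0 : j = 0 → (t.map fun b => W (Multiset.replicate (c + 1) 0 + t.erase b) (h + b)
        (m + 1) * j.factorial).sum = 0 := by
      rintro rfl
      have : (t.map fun b => W (Multiset.replicate (c + 1) 0 + t.erase b) (h + b)
        (m + 1) * Nat.factorial 0) = t.map fun b => 0 := by
        apply Multiset.map_congr rfl
        intro b hb
        obtain ⟨-, e1, e2, e3⟩ := erase_facts t ht b hb 0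
        rw [W_big, zero_mul]
        simp
        omega
      rw [this]; simp
    have hn1 : ∀ j', j = j' + 1 → (t.map fun b => W (Multiset.replicate (c + 1) 0 + t.erase b)
        (h + b) (m + 1) * j.factorial).sum = (j' + 1) * ((c + j').factorial * (m + j').factorial *
          ((t.card * h + t.sum) * j' + t.card * ((m + 1) * (c + 1)))) := by
      rintro j' rfl
      have : (t.map fun b => W (Multiset.replicate (c + 1) 0 + t.erase b) (h + b)
        (m + 1) * Nat.factorial (j' + 1)) = t.map fun b => (j' + 1) * ((c + j').factorial *
          (m + j').factorial * ((h + b) * j' + (m + 1) * (c + 1))) := by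
        apply Multiset.map_congr rfl
        intro b hb
        obtain ⟨-, e1, e2, e3⟩ := erase_facts t ht b hb 0
        rw [← ih (c + m + j') (by omega) c m j' (h + b) _ rfl e3 (by omega) (by omega),
          Nat.factorial_succ]
        ring
      rw [this, Multiset.sum_map_mul_left, Multiset.sum_map_mul_left, Multiset.sum_map_add,
        Multiset.sum_map_mul_right, Multiset.sum_map_add]
      simp
    rw [mul_assoc]
    rcases c with _ | c <;> rcases j with _ | j
    · rw [hn0 rfl, hz0 rfl]
      simp [Nat.factorial_succ]
      ring
    · rw [hn1 j rfl, hz0 rfl]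
      have : h = 0 := by omega
      subst this
      have : t.sum = t.card := by omega
      rw [this, hcard, ← add_assoc m j 1, Nat.factorial_succ (m + j), ← add_assoc 0 j 1,
        Nat.factorial_succ (0 + j)]
      simp
      ring
    · rw [hn0 rfl, hz1 c rfl]
      simp [Nat.factorial_succ]
      ring
    · rw [hn1 j rfl, hz1 c rfl, hcard]
      have e1 : c + 1 + (j + 1) = (c + 1 + j) + 1 := by ring
      have e2 : c + (j + 1) = (c + 1 + j) := by ring
      rw [e1, e2, ← add_assoc m j 1, Nat.factorial_succ (m + j), Nat.factorial_succ (c + 1 + j)]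
      generalize (c + 1 + j).factorial = A
      generalize (m + j).factorial = B
      generalize t.sum = T at *
      have hs : (T : ℤ) = c + 1 + 1 + (m + 1 + (j + 1)) - (h + 1) := by
        have : ((T + (h + 1) : ℕ) : ℤ) = ((c + 1 + 1 + (m + 1 + (j + 1)) : ℕ) : ℤ) := by
          rw [hsum]
        push_cast at this
        linarith
      zify
      rw [hs]
      ring

def dz : List Bool → ℕ → ℕ → Prop
  | [], h, z => h = 0 ∧ z = 0
  | true :: l, h, z => dz l (h + 1) z
  | false :: _, 0, _ => False
  | false :: _, 1, 0 => False
  | false :: l, 1, z + 1 => dz l 0 z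
  | false :: l, h + 2, z => dz l (h + 1) z

def enc : List ℕ → List Bool
  | [] => []
  | a :: l => List.replicate a true ++ false :: enc l

lemma dz_rep (a : ℕ) (l : List Bool) : ∀ h z, dz (List.replicate a true ++ l) h z ↔ dz l (h + a) z := by
  induction a with
  | zero => simp
  | succ a ih =>
    intro h z
    rw [List.replicate_succ, List.cons_append, dz, ih]
    rw [show h + 1 + a = h + (a + 1) by ring]

lemma dz_pos (l : List Bool) : ∀ h, ¬ dz l (h + 1) 0 := by
  induction l with
  | nil => simp [dz]
  | cons b l ih =>
    intro h
    cases b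
    · rcases h with _ | h
      · simp [dz]
      · exact ih h
    · exact ih (h + 1)

lemma dz_enc (a : List ℕ) : ∀ h m, dz (enc a) h (m + if h = 0 then 0 else 1) ↔ HP a h m := by
  induction a with
  | nil => intro h m; simp [enc, dz, HP]; omega
  | cons a l ih =>
    intro h m
    rw [enc, dz_rep]
    rcases h with _ | h
    · rcases a with _ | a
      · rcases m with _ | m <;> simp [dz, HP]
      · rcases a with _ | a
        · rcases m with _ | m
          · simp [dz, HP]
          · simpa [dz, HP] using ih 0 m
        · rcases m with _ | m
          · have := dz_pos (enc l) a
            simpa [dz, HP] using this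
          · have := ih (a + 1) m
            simpa [dz, HP] using this
    · rw [HP, ← ih]
      rcases Nat.eq_zero_or_pos (h + a) with h0 | h0
      · have : h = 0 := by omega
        have : a = 0 := by omega
        subst_vars
        simp [dz]
      · obtain ⟨d, hd⟩ := Nat.exists_eq_add_of_lt h0
        have e : h + 1 + a = d + 2 := by omega
        have e' : h + a = d + 1 := by omega
        rw [e, e']
        simp [dz]

lemma dz_iff (l : List Bool) : ∀ h z, dz l h z ↔
    ((∀ k, (l.take k).count false ≤ h + (l.take k).count true) ∧
      h + l.count true = l.count false ∧
      (∑ k ∈ Finset.range l.length,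
        if h + (l.take (k + 1)).count true = (l.take (k + 1)).count false then 1 else 0) = z) := by
  induction l with
  | nil => intro h z; simp [dz]; omega
  | cons b l ih =>
    intro h z
    have key : ∀ p : ℕ → Prop, (∀ k, p k) ↔ p 0 ∧ ∀ k, p (k + 1) := by
      intro p
      constructor
      · intro hp; exact ⟨hp 0, fun k => hp _⟩
      · rintro ⟨h0, h1⟩ (_ | k)
        · exact h0
        · exact h1 k
    rw [List.length_cons, Finset.sum_range_succ', key]
    cases b
    · simp only [List.take_succ_cons, List.count_cons, List.take_zero]
      rcases h with _ | h
      · simp only [dz, false_iff]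
        rintro ⟨⟨-, h2⟩, -⟩
        have := h2 0
        simp at this
      · have e1 : ∀ x y : ℕ, (x + 1 ≤ h + 1 + y) ↔ x ≤ h + y := by intros; omega
        have e2 : ∀ x y : ℕ, (h + 1 + y = x + 1) ↔ h + y = x := by intros; omega
        rcases h with _ | h
        · rcases z with _ | z
          · simp [dz]
          · simp only [dz]
            rw [ih]
            simp [e1, e2]
        · simp only [dz]
          rw [ih]
          simp [e1, e2]
    · simp only [dz, List.take_succ_cons, List.count_cons, List.take_zero]
      rw [ih]
      simp
      simp only [Nat.add_assoc, Nat.add_comm 1]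

lemma dyck_iff (n m : ℕ) (hn : 1 ≤ n) (hm : 1 ≤ m) (l : List Bool) :
    IsDyckPath n l ∧ returnCount n l = m - 1 ↔ l.count true = n ∧ dz l 0 m := by
  have hlen : l.length = l.count true + l.count false := by
    induction l with
    | nil => simp
    | cons b l ih => cases b <;> simp only [List.length_cons, List.count_cons, ih] <;> simp <;> omega
  rw [dz_iff]
  simp only [zero_add]
  have hret : l.length = 2 * n → l.count true = l.count false →
      (∑ k ∈ Finset.range l.length,
        if (l.take (k + 1)).count true = (l.take (k + 1)).count false then 1 else 0) =
        returnCount n l + 1 := by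
    intro h1 h2
    obtain ⟨N, hN⟩ : ∃ N, 2 * n = N + 1 := ⟨2 * n - 1, by omega⟩
    unfold returnCount
    rw [Finset.card_filter, h1, hN, Finset.sum_range_succ, ← hN, ← h1, List.take_length,
      if_pos h2, Finset.range_eq_Ico,
      Finset.sum_Ico_add' (fun k => if (l.take k).count true = (l.take k).count false then 1 else 0)]
    rw [h1, hN]
    rfl
  unfold IsDyckPath
  constructor
  · rintro ⟨⟨h1, h2, h3, h4⟩, h5⟩
    refine ⟨h2, h4, by omega, ?_⟩
    rw [hret h1 (by omega)]; omega
  · rintro ⟨h1, h2, h3, h4⟩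
    have h5 : l.length = 2 * n := by omega
    rw [hret h5 h3] at h4
    exact ⟨⟨h5, h1, by omega, h2⟩, by omega⟩

lemma enc_split (a : List ℕ) : ((enc a).splitOn false).map List.length = a ++ [0] := by
  induction a with
  | nil => simp [enc]
  | cons a l ih =>
    rw [enc]
    have : ∀ a : ℕ, ((List.replicate a true ++ false :: enc l).splitOn false) =
      List.replicate a true :: (enc l).splitOn false := by
      intro a
      induction a with
      | zero => simp [List.splitOn_cons_eq_if_modifyHead]
      | succ a ih2 => simp [List.replicate_succ, List.splitOn_cons_eq_if_modifyHead, ih2]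
    rw [this]
    simp [ih]

lemma enc_inj : Function.Injective enc := by
  intro a b h
  have h1 := enc_split a
  rw [h, enc_split b] at h1
  exact (List.append_cancel_right h1).symm

lemma count_enc (a : List ℕ) : (enc a).count true = a.sum ∧ (enc a).count false = a.length := by
  induction a with
  | nil => simp [enc]
  | cons a l ih => simp [enc, ih, List.count_replicate]

lemma dz_surj (l : List Bool) : ∀ h z, dz l h z → l = [] ∨ ∃ a, enc a = l := by
  have gen : ∀ l : List Bool, (∃ a, enc a = l) ∨ ∃ a k, l = enc a ++ List.replicate (k + 1) true := by
    intro l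
    induction l with
    | nil => exact Or.inl ⟨[], rfl⟩
    | cons b l ih =>
      cases b
      · rcases ih with ⟨a, rfl⟩ | ⟨a, k, rfl⟩
        · exact Or.inl ⟨0 :: a, rfl⟩
        · exact Or.inr ⟨0 :: a, k, rfl⟩
      · rcases ih with ⟨a, rfl⟩ | ⟨a, k, rfl⟩
        · rcases a with _ | ⟨x, a⟩
          · exact Or.inr ⟨[], 0, rfl⟩
          · exact Or.inl ⟨(x + 1) :: a, rfl⟩
        · rcases a with _ | ⟨x, a⟩
          · exact Or.inr ⟨[], k + 1, rfl⟩
          · exact Or.inr ⟨(x + 1) :: a, k, rfl⟩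
  have no : ∀ (l : List Bool) h z k, ¬ dz (l ++ List.replicate (k + 1) true) h z := by
    intro l h z k hd
    rw [dz_iff] at hd
    obtain ⟨h1, h2, -⟩ := hd
    have := h1 l.length
    simp [List.count_replicate] at this h2
    omega
  intro h z hd
  rcases gen l with h1 | ⟨a, k, rfl⟩
  · exact Or.inr h1
  · exact absurd hd (no _ _ _ _)

def tt (n : ℕ) (r : Fin n → ℕ) : Multiset ℕ := ∑ i, Multiset.replicate (r i) (i.1 + 1)

lemma tt_count (n : ℕ) (r : Fin n → ℕ) (i : Fin n) : (tt n r).count (i.1 + 1) = r i := by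
  unfold tt
  rw [Multiset.count_sum']
  simp only [Multiset.count_replicate]
  rw [Finset.sum_eq_single i]
  · simp
  · intro j _ hj
    rw [if_neg]
    intro h
    exact hj (Fin.ext (by omega))
  · simp

lemma tt_mem (n : ℕ) (r : Fin n → ℕ) (x : ℕ) (hx : x ∈ tt n r) : 1 ≤ x ∧ x ≤ n := by
  unfold tt at hx
  rw [Multiset.mem_sum] at hx
  obtain ⟨i, -, hi⟩ := hx
  have := Multiset.eq_of_mem_replicate hi
  have := i.2
  omega

lemma tt_card (n : ℕ) (r : Fin n → ℕ) : (tt n r).card = ∑ i, r i := by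
  simp [tt]

lemma tt_sum (n : ℕ) (r : Fin n → ℕ) : (tt n r).sum = ∑ i, (i.1 + 1) * r i := by
  simp [tt, Multiset.sum_sum, mul_comm]

lemma type_iff (n : ℕ) (r : Fin n → ℕ) (hrv : ∑ i, (i.1 + 1) * r i = n) (hr : ∑ i, r i < n)
    (a : List ℕ) : a.sum = n ∧ a.length = n ∧ HasAscentType n (enc a) r ↔
      (a : Multiset ℕ) = Multiset.replicate (n - ∑ i, r i) 0 + tt n r := by
  unfold HasAscentType
  rw [enc_split]
  constructor
  · rintro ⟨h1, h2, h3⟩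
    have hf : (a : Multiset ℕ).filter (fun x => ¬ 0 = x) = tt n r := by
      ext x
      rw [Multiset.count_filter]
      by_cases hx : ¬ 0 = x
      · rw [if_pos hx]
        by_cases hxn : x ≤ n
        · obtain ⟨y, rfl⟩ : ∃ y, x = y + 1 := ⟨x - 1, by omega⟩
          have := h3 ⟨y, by omega⟩
          rw [tt_count n r ⟨y, by omega⟩, ← this]
          simp
        · rw [Multiset.count_eq_zero_of_notMem, Multiset.count_eq_zero_of_notMem]
          · intro h; have := tt_mem n r x h; omega
          · intro h
            have := List.le_sum_of_mem (Multiset.mem_coe.1 h)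
            omega
      · rw [if_neg hx, Multiset.count_eq_zero_of_notMem]
        intro h; have := tt_mem n r x h; omega
    have h4 := Multiset.filter_add_not (fun x => 0 = x) (a : Multiset ℕ)
    rw [hf, Multiset.filter_eq] at h4
    have h5 := congrArg Multiset.card h4
    simp [tt_card] at h5
    rw [← h4]
    congr 2
    simp
    omega
  · intro h
    have h1 := congrArg Multiset.card h
    have h2 := congrArg Multiset.sum h
    simp [tt_card, tt_sum, hrv] at h1 h2
    refine ⟨h2, by omega, fun i => ?_⟩
    have h3 := congrArg (Multiset.count (i.1 + 1)) h
    rw [Multiset.count_add, tt_count] at h3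
    simpa [Multiset.count_replicate] using h3

lemma card_eq (n m : ℕ) (hn : 1 ≤ n) (hm : 1 ≤ m)
    (r : Fin n → ℕ) (hrv : ∑ i, (i.1 + 1) * r i = n) (hr : ∑ i, r i < n) :
    Nat.card {l : List Bool // IsDyckPath n l ∧ HasAscentType n l r ∧
        returnCount n l = m - 1} =
    cnt (Multiset.replicate (n - ∑ i, r i) 0 + tt n r) (fun l => HP l 0 m) := by
  symm
  have hb : ∀ a : List ℕ, ((a : Multiset ℕ) = Multiset.replicate (n - ∑ i, r i) 0 + tt n r ∧ HP a 0 m) ↔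
      (IsDyckPath n (enc a) ∧ HasAscentType n (enc a) r ∧ returnCount n (enc a) = m - 1) := by
    intro a
    have h1 := dyck_iff n m hn hm (enc a)
    have h2 := dz_enc a 0 m
    have h3 := type_iff n r hrv hr a
    have h4 := count_enc a
    simp only [if_true, add_zero] at h2
    rw [← h3, ← h2]
    constructor
    · rintro ⟨⟨g1, g2, g3⟩, g4⟩
      have := h1.2 ⟨by omega, g4⟩
      exact ⟨this.1, g3, this.2⟩
    · rintro ⟨g1, g2, g3⟩
      have := h1.1 ⟨g1, g3⟩
      have g4 := g1.2.2.1
      exact ⟨⟨by omega, by omega, g2⟩, this.2⟩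
  apply Nat.card_eq_of_bijective
    (fun x : {l : List ℕ // (l : Multiset ℕ) = Multiset.replicate (n - ∑ i, r i) 0 + tt n r ∧ HP l 0 m} =>
      (⟨enc x.1, (hb x.1).1 x.2⟩ : {l : List Bool // IsDyckPath n l ∧ HasAscentType n l r ∧
        returnCount n l = m - 1}))
  constructor
  · rintro ⟨a, ha⟩ ⟨b, hb⟩ h
    simp only [Subtype.mk.injEq] at h ⊢
    exact enc_inj h
  · rintro ⟨l, hl⟩
    have h1 := (dyck_iff n m hn hm l).1 ⟨hl.1, hl.2.2⟩
    have : ∃ a, enc a = l := by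
      rcases dz_surj l 0 m h1.2 with rfl | h
      · exact ⟨[], rfl⟩
      · exact h
    obtain ⟨a, rfl⟩ := this
    exact ⟨⟨a, (hb a).2 hl⟩, rfl⟩

lemma prod_eq (n c : ℕ) (r : Fin n → ℕ) :
    ∏ a ∈ (Multiset.replicate c 0 + tt n r).toFinset,
      ((Multiset.replicate c 0 + tt n r).count a).factorial = c.factorial * ∏ i, (r i).factorial := by
  have h0 : (tt n r).count 0 = 0 := Multiset.count_eq_zero_of_notMem (fun h => by
    have := tt_mem n r 0 h; omega)
  have h1 : (Multiset.replicate c 0 + tt n r).toFinset ⊆ Finset.range (n + 1) := by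
    intro x hx
    simp only [Multiset.mem_toFinset, Multiset.mem_add] at hx
    rw [Finset.mem_range]
    rcases hx with hx | hx
    · have := Multiset.eq_of_mem_replicate hx; omega
    · have := tt_mem n r x hx; omega
  rw [Finset.prod_subset h1, Finset.prod_range_succ', mul_comm, Finset.prod_range]
  · congr 1
    · simp [h0]
    · apply Finset.prod_congr rfl
      intro i _
      rw [Multiset.count_add, tt_count]
      simp [Multiset.count_replicate]
  · intro x _ hx
    rw [Multiset.mem_toFinset] at hx
    rw [Multiset.count_eq_zero_of_notMem hx, Nat.factorial_zero]

end DyckAux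

open DyckAux

/-- The number `N` of Dyck paths of length `2n` with exactly `m - 1` returns and ascent type
`r` satisfies `N · (n - |r| - 1)! · (|r| - m)! · r! = m · (n - m - 1)! · (|r| - 1)!`. -/
theorem card_dyck_returns_of_ascent_type (n m : ℕ) (hn : 1 ≤ n) (hm : 1 ≤ m)
    (r : Fin n → ℕ) (hrv : ∑ i, (i.1 + 1) * r i = n) (hr : ∑ i, r i < n)
    (hmr : m ≤ ∑ i, r i) (hmn : m < n) :
    Nat.card {l : List Bool // IsDyckPath n l ∧ HasAscentType n l r ∧
        returnCount n l = m - 1} *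
        (n - (∑ i, r i) - 1).factorial * ((∑ i, r i) - m).factorial * ∏ i, (r i).factorial =
      m * (n - m - 1).factorial * ((∑ i, r i) - 1).factorial := by
  rw [card_eq n m hn hm r hrv hr]
  obtain ⟨c, hc⟩ : ∃ c, n - ∑ i, r i = c + 1 := ⟨n - (∑ i, r i) - 1, by omega⟩
  obtain ⟨j, hj⟩ := Nat.exists_eq_add_of_le hmr
  obtain ⟨m, rfl⟩ : ∃ m', m = m' + 1 := ⟨m - 1, by omega⟩
  have key := lemB _ c m j 0 (tt n r) rfl (fun b hb => (tt_mem n r b hb).1)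
    (by rw [tt_card, hj]) (by rw [tt_sum, hrv]; omega)
  unfold W wt at key
  rw [prod_eq, Nat.factorial_succ] at key
  rw [hc]
  have e1 : n - (m + 1) - 1 = c + j := by omega
  have e2 : (∑ i, r i) - 1 = m + j := by omega
  have e3 : (∑ i, r i) - (m + 1) = j := by omega
  rw [e1, e2, e3, Nat.add_sub_cancel]
  apply Nat.eq_of_mul_eq_mul_left (Nat.succ_pos c)
  rw [Nat.succ_eq_add_one]
  linear_combination key
end

section
/- Let n ≥ 1, let v = (1, 2, …, n), let m ≥ 1, and let r ∈ ℕ^n. Then, as an identity of polynomials in ℚ[x], the sum of the products A_{r^{(1)}}(x) · A_{r^{(2)}}(x) ⋯ A_{r^{(m)}}(x) over all m-tuples (r^{(1)}, …, r^{(m)}) of vectors in ℕ^n with r^{(1)} + ⋯ + r^{(m)} = r equals A_r(m·x), the composition of the polynomial A_r(x) with the polynomial m·x. -/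
open Polynomial

/-- Zeng's polynomial `A_r(x) ∈ ℚ[x]` for `v = (1, 2, …, n)`:
`A_r(x) = 1` if `r = 0`, and otherwise
`A_r(x) = (1/r!) · x · (x + r·v - 1)(x + r·v - 2) ⋯ (x + r·v - |r| + 1)`. -/
noncomputable def Apoly {n : ℕ} (r : Fin n → ℕ) : Polynomial ℚ :=
  if r = 0 then 1 else
    C (((∏ i, (r i).factorial : ℕ) : ℚ))⁻¹ *
      (X * ∏ j ∈ Finset.range ((∑ i, r i) - 1),
        (X + C (((∑ i, (i.1 + 1) * r i : ℕ) : ℚ) - 1 - (j : ℚ))))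

lemma Apoly_eval_zero {n : ℕ} (r : Fin n → ℕ) : (Apoly r).eval 0 = if r = 0 then 1 else 0 := by
  unfold Apoly
  split_ifs <;> simp

lemma Apoly_eval {n : ℕ} (r : Fin n → ℕ) (hr : r ≠ 0) (x : ℚ) :
    ((∏ i, (r i).factorial : ℕ) : ℚ) * (Apoly r).eval x =
      x * ∏ j ∈ Finset.range ((∑ i, r i) - 1),
        (x + (((∑ i, (i.1 + 1) * r i : ℕ) : ℚ) - 1 - (j : ℚ))) := by
  have h : ((∏ i, (r i).factorial : ℕ) : ℚ) ≠ 0 := by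
    exact_mod_cast Finset.prod_ne_zero_iff.mpr fun i _ => (r i).factorial_ne_zero
  unfold Apoly
  rw [if_neg hr, eval_mul, eval_C, ← mul_assoc, mul_inv_cancel₀ h, one_mul, eval_mul, eval_X,
    eval_prod]
  simp only [eval_add, eval_X, eval_C]

lemma Apoly_sub_term {n : ℕ} (q : Fin n → ℕ) (i : Fin n) (x : ℚ) :
    ((∏ a, ((q + Pi.single i 1 : Fin n → ℕ) a).factorial : ℕ) : ℚ) * (Apoly q).eval (x + (i.1 + 1)) =
      ((q i + 1 : ℕ) : ℚ) * (if ∑ a, q a = 0 then 1 else (x + (i.1 + 1)) *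
        ∏ j ∈ Finset.range ((∑ a, q a) - 1),
        (x + (((∑ a, (a.1 + 1) * (q + Pi.single i 1 : Fin n → ℕ) a : ℕ) : ℚ) - 1 - (j : ℚ)))) := by
  have h1 : (∏ a, ((q + Pi.single i 1 : Fin n → ℕ) a).factorial) = (q i + 1) * ∏ a, (q a).factorial := by
    rw [← Finset.mul_prod_erase _ _ (Finset.mem_univ i),
      ← Finset.mul_prod_erase _ (fun a => (q a).factorial) (Finset.mem_univ i), ← mul_assoc]
    congr 1
    · simp [Nat.factorial_succ]
    · refine Finset.prod_congr rfl fun a ha => ?_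
      simp [Pi.single_apply, (Finset.mem_erase.mp ha).1]
  have h2 : ∑ a, (a.1 + 1) * (q + Pi.single i 1 : Fin n → ℕ) a = (∑ a, (a.1 + 1) * q a) + (i.1 + 1) := by
    simp only [Pi.add_apply, mul_add, Finset.sum_add_distrib]
    simp [Pi.single_apply]
  have h3 : ∑ a, q a = 0 ↔ q = 0 := by
    simp [Finset.sum_eq_zero_iff, funext_iff]
  rw [h1, h2, Nat.cast_mul, mul_assoc]
  congr 1
  split_ifs with h
  · rw [h3] at h
    subst h
    simp [Apoly]
  · rw [Apoly_eval _ (fun e => h (h3.mpr e))]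
    congr 1
    refine Finset.prod_congr rfl fun j _ => ?_
    push_cast
    ring

lemma Apoly_rec {n : ℕ} (r : Fin n → ℕ) (x : ℚ) :
    (Apoly r).eval (x + 1) = (Apoly r).eval x +
      ∑ i, if 1 ≤ r i then (Apoly (r - Pi.single i 1)).eval (x + (i.1 + 1)) else 0 := by
  by_cases hr : r = 0
  · subst hr; simp [Apoly]
  have h : ((∏ i, (r i).factorial : ℕ) : ℚ) ≠ 0 := by
    exact_mod_cast Finset.prod_ne_zero_iff.mpr fun i _ => (r i).factorial_ne_zero
  apply mul_left_cancel₀ h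
  rw [mul_add, Apoly_eval _ hr, Apoly_eval _ hr, Finset.mul_sum]
  set w : ℕ := ∑ i, (i.1 + 1) * r i with hw
  set k : ℕ := ∑ i, r i with hk
  have hk0 : k ≠ 0 := by
    intro h0
    apply hr
    funext i
    exact (Finset.sum_eq_zero_iff.mp h0) i (Finset.mem_univ i)
  have key : ∀ i, ((∏ i, (r i).factorial : ℕ) : ℚ) *
      (if 1 ≤ r i then (Apoly (r - Pi.single i 1)).eval (x + (i.1 + 1)) else 0) =
      (r i : ℚ) * (if k = 1 then 1 else (x + (i.1 + 1)) *
        ∏ j ∈ Finset.range (k - 2), (x + ((w : ℚ) - 1 - (j : ℚ)))) := by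
    intro i
    split_ifs with h1 h2 h2
    all_goals try
      · have : r i = 0 := by omega
        simp [this]
    all_goals
      obtain ⟨q, hq⟩ : ∃ q : Fin n → ℕ, r = q + Pi.single i 1 := by
        refine ⟨r - Pi.single i 1, ?_⟩
        funext a
        by_cases ha : a = i
        · subst ha; simp; omega
        · simp [ha]
      have e1 : r - Pi.single i 1 = q := by rw [hq]; funext a; simp
      have e2 : r i = q i + 1 := by rw [hq]; simp
      have e3 : k = (∑ a, q a) + 1 := by
        rw [hk, hq]; simp [Finset.sum_add_distrib]
      have := Apoly_sub_term q i x
      rw [← hq, ← e2, ← hw] at this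
      rw [e1, this]
    · rw [if_pos (by omega)]
    · rw [if_neg (by omega)]
      have : k - 2 = (∑ a, q a) - 1 := by omega
      rw [this]
  rw [Finset.sum_congr rfl fun i _ => key i]
  obtain h1 | ⟨d, h1⟩ : k = 1 ∨ ∃ d, k = d + 2 := by
    rcases k with _ | _ | d
    · omega
    · simp
    · right; exact ⟨d, rfl⟩
  · simp only [h1, if_true, mul_one]
    rw [← Nat.cast_sum, ← hk, h1]
    simp
  · have h3 : k ≠ 1 := by omega
    have h4 : k - 1 = d + 1 := by omega
    have h5 : k - 2 = d := by omega
    simp only [if_neg h3, h4, h5, ← mul_assoc]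
    rw [← Finset.sum_mul]
    have h6 : ∑ i, (r i : ℚ) * (x + (i.1 + 1)) = k * x + w := by
      rw [hk, hw]; push_cast
      rw [Finset.sum_mul, ← Finset.sum_add_distrib]
      exact Finset.sum_congr rfl fun i _ => by ring
    rw [h6, Finset.prod_range_succ', Finset.prod_range_succ, h1]
    have h7 : ∏ j ∈ Finset.range d, (x + 1 + ((w : ℚ) - 1 - ((j + 1 : ℕ) : ℚ))) =
        ∏ j ∈ Finset.range d, (x + ((w : ℚ) - 1 - (j : ℚ))) :=
      Finset.prod_congr rfl fun j _ => by push_cast; ring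
    rw [h7]
    push_cast
    ring

/-- generating series -/
noncomputable def Aser (n : ℕ) (x : ℕ) : MvPowerSeries (Fin n) ℚ :=
  fun r => (Apoly (r : Fin n → ℕ)).eval (x : ℚ)

lemma coeff_Aser {n : ℕ} (x : ℕ) (r : Fin n →₀ ℕ) :
    MvPowerSeries.coeff r (Aser n x) = (Apoly (r : Fin n → ℕ)).eval (x : ℚ) := rfl

lemma Aser_zero (n : ℕ) : Aser n 0 = 1 := by
  classical
  ext r
  rw [coeff_Aser, Nat.cast_zero, Apoly_eval_zero, MvPowerSeries.coeff_one]
  simp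

lemma coeff_X_mul_aux {n : ℕ} (i : Fin n) (r : Fin n →₀ ℕ) (f : MvPowerSeries (Fin n) ℚ) :
    MvPowerSeries.coeff r (MvPowerSeries.X i * f) =
      if 1 ≤ r i then MvPowerSeries.coeff (r - Finsupp.single i 1) f else 0 := by
  classical
  rw [MvPowerSeries.X, MvPowerSeries.coeff_monomial_mul]
  simp [Finsupp.single_le_iff]

lemma Aser_succ (n x : ℕ) : Aser n (x + 1) = Aser n x +
    ∑ i : Fin n, MvPowerSeries.X i * Aser n (x + (i.1 + 1)) := by
  classical
  ext r
  rw [map_add, map_sum, coeff_Aser, coeff_Aser, Nat.cast_add, Nat.cast_one, Apoly_rec]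
  congr 1
  refine Finset.sum_congr rfl fun i _ => ?_
  rw [coeff_X_mul_aux, coeff_Aser]
  have e : (r : Fin n → ℕ) - Pi.single i 1 = ((r - Finsupp.single i 1 : Fin n →₀ ℕ) : Fin n → ℕ) := by
    funext a
    simp [Finsupp.single_apply, Pi.single_apply, eq_comm]
  rw [e]
  push_cast
  rfl

lemma Aser_mul_coeff (n : ℕ) (d : ℕ) : ∀ (x y : ℕ) (r : Fin n →₀ ℕ), r.degree = d →
    MvPowerSeries.coeff r (Aser n x * Aser n y) = MvPowerSeries.coeff r (Aser n (x + y)) := by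
  induction d using Nat.strong_induction_on with
  | _ d ih =>
    intro x y r hr
    induction x with
    | zero => rw [Aser_zero, one_mul, zero_add]
    | succ x ihx =>
      rw [Aser_succ, show x + 1 + y = (x + y) + 1 by ring, Aser_succ, add_mul, map_add, map_add, ihx,
        Finset.sum_mul, map_sum, map_sum]
      congr 1
      refine Finset.sum_congr rfl fun i _ => ?_
      rw [mul_assoc, coeff_X_mul_aux, coeff_X_mul_aux]
      split_ifs with h
      · have hle : Finsupp.single i 1 ≤ r := by simpa [Finsupp.single_le_iff] using h
        have hdeg : r.degree = (r - Finsupp.single i 1).degree + 1 := by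
          conv_lhs => rw [← tsub_add_cancel_of_le hle]
          rw [map_add, Finsupp.degree_single]
        rw [ih (r - Finsupp.single i 1).degree (by omega) _ _ _ rfl]
        rw [show x + (i.1 + 1) + y = x + y + (i.1 + 1) by ring]
      · rfl

lemma Aser_mul (n x y : ℕ) : Aser n x * Aser n y = Aser n (x + y) := by
  ext r
  exact Aser_mul_coeff n _ x y r rfl

lemma Aser_pow (n x m : ℕ) : Aser n x ^ m = Aser n (m * x) := by
  induction m with
  | zero => simp [Aser_zero]
  | succ m ih => rw [pow_succ, ih, Aser_mul]; congr 1; ring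

/-- (Raney convolution) The sum of `A_{r⁽¹⁾}(x) ⋯ A_{r⁽ᵐ⁾}(x)` over all `m`-tuples of vectors
in `ℕⁿ` summing to `r` equals `A_r(m·x)`. -/
theorem Apoly_convolution (n : ℕ) (hn : 1 ≤ n) (m : ℕ) (hm : 1 ≤ m) (r : Fin n → ℕ)
    (S : Finset (Fin m → Fin n → ℕ)) (hS : ∀ s, s ∈ S ↔ ∑ k, s k = r) :
    ∑ s ∈ S, ∏ k, Apoly (s k) = (Apoly r).comp (C (m : ℚ) * X) := by
  classical
  refine Polynomial.eq_of_infinite_eval_eq _ _ ?_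
  refine Set.Infinite.mono ?_ (Set.infinite_range_of_injective (Nat.cast_injective (R := ℚ)))
  rintro _ ⟨x, rfl⟩
  have h := congrArg (MvPowerSeries.coeff (Finsupp.equivFunOnFinite.symm r)) (Aser_pow n x m)
  rw [coeff_Aser] at h
  have hp : Aser n x ^ m = ∏ _k : Fin m, Aser n x := by simp
  rw [hp, MvPowerSeries.coeff_prod] at h
  simp only [Set.mem_setOf_eq, eval_comp, eval_mul, eval_C, eval_X]
  rw [Nat.cast_mul] at h
  refine Eq.trans ?_ (h.trans (by simp))
  rw [eval_finset_sum]
  refine Finset.sum_bij' (fun s _ => Finsupp.equivFunOnFinite.symm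
      fun k => Finsupp.equivFunOnFinite.symm (s k)) (fun l _ k => ⇑(l k)) ?_ ?_ ?_ ?_ ?_
  · intro s hs
    rw [Finset.mem_finsuppAntidiag]
    refine ⟨?_, by simp⟩
    ext a
    rw [← (hS s).mp hs]
    simp [Finsupp.finset_sum_apply]
  · intro l hl
    rw [Finset.mem_finsuppAntidiag] at hl
    rw [hS]
    funext a
    have := DFunLike.congr_fun hl.1 a
    simpa [Finsupp.finset_sum_apply] using this
  · intro s hs
    rfl
  · intro l hl
    ext k a
    rfl
  · intro s hs
    rw [eval_prod]
    rfl
end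

section
/- Let n, m, j be natural numbers with 1 ≤ m ≤ j, m < n, and j < n. Then, as integers, Σ_{k=1}^{m} (−1)^{k+1} · k · C(m, k) · C(n − k − 1, j − 1) = m · C(n − m − 1, n − j − 1), where C(a, b) denotes the binomial coefficient. -/
theorem aux_step (M : ℕ) (f : ℕ → ℤ) :
    ∑ i ∈ Finset.range (M + 2), (-1 : ℤ) ^ i * ((M + 1).choose i : ℤ) * f i =
      ∑ i ∈ Finset.range (M + 1), (-1 : ℤ) ^ i * (M.choose i : ℤ) * (f i - f (i + 1)) := by
  have h : ∑ i ∈ Finset.range (M + 1), (-1 : ℤ) ^ i * (M.choose i : ℤ) * f i =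
      ∑ i ∈ Finset.range (M + 2), (-1 : ℤ) ^ i * (M.choose i : ℤ) * f i := by
    rw [Finset.sum_range_succ _ (M + 1)]
    simp
  simp only [mul_sub, Finset.sum_sub_distrib]
  rw [h, Finset.sum_range_succ', Finset.sum_range_succ' _ (M + 1)]
  rw [add_sub_right_comm, ← Finset.sum_sub_distrib]
  simp only [Nat.choose_zero_right]
  congr 1
  apply Finset.sum_congr rfl
  intro i _
  rw [Nat.choose_succ_succ]
  push_cast
  ring

theorem aux_sum_s14 (M a : ℕ) : ∀ b : ℕ,
    ∑ i ∈ Finset.range (M + 1),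
      (-1 : ℤ) ^ i * (M.choose i : ℤ) * ((a + M - i).choose (b + M) : ℤ) = (a.choose b : ℤ) := by
  induction M with
  | zero => intro b; simp
  | succ M ih =>
    intro b
    rw [aux_step M (fun i => ((a + (M + 1) - i).choose (b + (M + 1)) : ℤ)), ← ih b]
    apply Finset.sum_congr rfl
    intro i hi
    have hi' := Finset.mem_range.mp hi
    have h1 : a + (M + 1) - i = (a + M - i) + 1 := by omega
    have h2 : a + (M + 1) - (i + 1) = a + M - i := by omega
    simp only [h1, h2]
    rw [← add_assoc b M 1, Nat.choose_succ_succ]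
    push_cast
    ring

/-- The binomial identity
`Σ_{k=1}^{m} (−1)^{k+1} k C(m,k) C(n−k−1, j−1) = m C(n−m−1, n−j−1)` for `1 ≤ m ≤ j`,
`m < n`, `j < n`. -/
theorem binomial_identity (n m j : ℕ) (hm : 1 ≤ m) (hmj : m ≤ j) (hmn : m < n)
    (hjn : j < n) :
    ∑ k ∈ Finset.Icc 1 m,
        (-1 : ℤ) ^ (k + 1) * (k : ℤ) * (m.choose k : ℤ) * ((n - k - 1).choose (j - 1) : ℤ) =
      (m : ℤ) * ((n - m - 1).choose (n - j - 1) : ℤ) := by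
  obtain ⟨M, rfl⟩ : ∃ M, m = M + 1 := ⟨m - 1, by omega⟩
  obtain ⟨b, rfl⟩ : ∃ b, j = b + M + 1 := ⟨j - (M + 1), by omega⟩
  obtain ⟨a, rfl⟩ : ∃ a, n = a + M + 2 := ⟨n - (M + 2), by omega⟩
  have e1 : a + M + 2 - (M + 1) - 1 = a := by omega
  have e2 : a + M + 2 - (b + M + 1) - 1 = a - b := by omega
  rw [e1, e2, Nat.choose_symm (by omega), ← aux_sum_s14 M a b, Finset.mul_sum,
    ← Finset.Ico_add_one_right_eq_Icc, Finset.sum_Ico_eq_sum_range]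
  apply Finset.sum_congr (by simp)
  intro i _
  have e3 : a + M + 2 - (1 + i) - 1 = a + M - i := by omega
  have e4 : b + M + 1 - 1 = b + M := by omega
  rw [e3, e4, add_comm 1 i]
  have h : ((M : ℤ) + 1) * (M.choose i : ℤ) = ((M + 1).choose (i + 1) : ℤ) * ((i : ℤ) + 1) := by
    exact_mod_cast Nat.add_one_mul_choose_eq M i
  push_cast
  linear_combination (-(-1 : ℤ) ^ i * ((a + M - i).choose (b + M) : ℤ)) * h
end

section
/- Let n, m ≥ 1, let v = (1, 2, …, n), and let r = (r_1, …, r_n) ∈ ℕ^n satisfy r·v = n, |r| < n, m ≤ |r|, and m < n. Then, as rational numbers, Σ_{k=1}^{m} (−1)^{k} · C(m, k) · A_r(−k) = m · (n − m − 1)! · (|r| − 1)! / ((n − |r| − 1)! · (|r| − m)! · r!), where A_r(−k) denotes the evaluation of the polynomial A_r(x) at x = −k and C(m, k) is a binomial coefficient. -/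
open Polynomial

theorem aux_F_succ (b : ℕ) (y : ℚ) :
    ∏ j ∈ Finset.range (b+1), (y - (j:ℚ)) = y * ∏ j ∈ Finset.range b, (y - 1 - (j:ℚ)) := by
  rw [Finset.prod_range_succ', mul_comm]
  congr 1
  · simp
  · apply Finset.prod_congr rfl
    intro j _
    push_cast
    ring

theorem aux_F_fact (b d : ℕ) :
    (d.factorial : ℚ) * ∏ j ∈ Finset.range b, (((b + d : ℕ) : ℚ) - (j:ℚ)) = ((b+d).factorial : ℚ) := by
  induction b with
  | zero => simp
  | succ b ih =>
    rw [aux_F_succ, show b + 1 + d = (b + d) + 1 by ring, Nat.factorial_succ]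
    push_cast at ih ⊢
    rw [← ih]
    simp only [add_sub_cancel_right]
    ring

theorem aux_pascal (M : ℕ) (f : ℕ → ℚ) :
    ∑ i ∈ Finset.range (M+2), (-1:ℚ)^i * ((M+1).choose i : ℚ) * f i =
    ∑ i ∈ Finset.range (M+1), (-1:ℚ)^i * (M.choose i : ℚ) * (f i - f (i+1)) := by
  have h2 : ∑ i ∈ Finset.range (M+1), (-1:ℚ)^i * (M.choose i : ℚ) * f i =
      ∑ i ∈ Finset.range (M+1), (-1:ℚ)^(i+1) * (M.choose (i+1) : ℚ) * f (i+1) + f 0 := by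
    have h := Finset.sum_range_succ (fun i => (-1:ℚ)^i * (M.choose i : ℚ) * f i) (M+1)
    rw [Finset.sum_range_succ'] at h
    simp at h
    exact h.symm
  simp only [mul_sub, Finset.sum_sub_distrib]
  rw [h2, Finset.sum_range_succ', add_sub_right_comm, ← Finset.sum_sub_distrib]
  congr 1
  · apply Finset.sum_congr rfl
    intro i _
    rw [Nat.choose_succ_succ]
    push_cast
    ring
  · simp

theorem aux_main (b M : ℕ) (y : ℚ) :
    (b.factorial : ℚ) * ∑ i ∈ Finset.range (M+1), (-1:ℚ)^i * (M.choose i : ℚ) *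
      ∏ j ∈ Finset.range (b+M), (y - (i:ℚ) - (j:ℚ)) =
    ((b+M).factorial : ℚ) * ∏ j ∈ Finset.range b, (y - (M:ℚ) - (j:ℚ)) := by
  induction M generalizing y with
  | zero => simp
  | succ M ih =>
    rw [aux_pascal M (fun i => ∏ j ∈ Finset.range (b+(M+1)), (y - (i:ℚ) - (j:ℚ)))]
    have key : ∀ i : ℕ, ∏ j ∈ Finset.range (b+(M+1)), (y - (i:ℚ) - (j:ℚ)) -
        ∏ j ∈ Finset.range (b+(M+1)), (y - ((i+1:ℕ):ℚ) - (j:ℚ)) =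
        ((b:ℚ)+M+1) * ∏ j ∈ Finset.range (b+M), ((y - 1) - (i:ℚ) - (j:ℚ)) := by
      intro i
      rw [← add_assoc, aux_F_succ, Finset.prod_range_succ]
      have e : ∀ j : ℕ, y - (i:ℚ) - 1 - (j:ℚ) = y - 1 - (i:ℚ) - j := fun j => by ring
      have e' : ∀ j : ℕ, y - ((i+1:ℕ):ℚ) - (j:ℚ) = y - 1 - (i:ℚ) - j := fun j => by
        push_cast; ring
      simp only [e, e']
      push_cast
      ring
    have h := ih (y - 1)
    simp only [key]
    have : ∀ j : ℕ, y - ((M+1:ℕ):ℚ) - (j:ℚ) = y - 1 - (M:ℚ) - j := fun j => by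
      push_cast; ring
    simp only [this]
    rw [← add_assoc, Nat.factorial_succ]
    push_cast
    rw [mul_assoc, ← h, Finset.mul_sum, Finset.mul_sum, Finset.mul_sum]
    apply Finset.sum_congr rfl
    intro i _
    ring

/-- `Σ_{k=1}^{m} (−1)^k C(m,k) A_r(−k) = m (n−m−1)! (|r|−1)! / ((n−|r|−1)! (|r|−m)! r!)`. -/
theorem Apoly_alternating_sum (n m : ℕ) (hn : 1 ≤ n) (hm : 1 ≤ m) (r : Fin n → ℕ)
    (hrv : ∑ i, (i.1 + 1) * r i = n) (hr : ∑ i, r i < n)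
    (hmr : m ≤ ∑ i, r i) (hmn : m < n) :
    ∑ k ∈ Finset.Icc 1 m, (-1 : ℚ) ^ k * (m.choose k : ℚ) * (Apoly r).eval (-(k : ℚ)) =
      ((m : ℚ) * ((n - m - 1).factorial : ℚ) * (((∑ i, r i) - 1).factorial : ℚ)) /
        (((n - (∑ i, r i) - 1).factorial : ℚ) * ((((∑ i, r i) - m).factorial : ℚ)) *
          ((∏ i, (r i).factorial : ℕ) : ℚ)) := by
  have hr0 : r ≠ 0 := by
    rintro rfl
    simp at hmr
    omega
  unfold Apoly
  rw [if_neg hr0, hrv]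
  have hR : ((∏ i, (r i).factorial : ℕ) : ℚ) ≠ 0 := by
    exact_mod_cast Finset.prod_ne_zero_iff.mpr (fun i _ => Nat.factorial_ne_zero _)
  generalize ((∏ i, (r i).factorial : ℕ) : ℚ) = R at hR ⊢
  generalize (∑ i, r i) = s at *
  obtain ⟨M, rfl⟩ : ∃ M, m = M + 1 := ⟨m - 1, by omega⟩
  obtain ⟨b, rfl⟩ : ∃ b, s = b + M + 1 := ⟨s - (M + 1), by omega⟩
  obtain ⟨d, rfl⟩ : ∃ d, n = b + M + 1 + d + 1 := ⟨n - (b + M + 1) - 1, by omega⟩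
  have e1 : b + M + 1 + d + 1 - (M + 1) - 1 = b + d := by omega
  have e2 : b + M + 1 + d + 1 - (b + M + 1) - 1 = d := by omega
  have e3 : b + M + 1 - (M + 1) = b := by omega
  have e4 : b + M + 1 - 1 = b + M := by omega
  rw [e1, e2, e3, e4]
  have h1 := aux_main b M ((b + d + M : ℕ) : ℚ)
  have h2 := aux_F_fact b d
  have e5 : ((b + d + M : ℕ) : ℚ) - (M : ℚ) = ((b + d : ℕ) : ℚ) := by push_cast; ring
  rw [e5] at h1
  have hb : (b.factorial : ℚ) ≠ 0 := by exact_mod_cast Nat.factorial_ne_zero _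
  have hd : (d.factorial : ℚ) ≠ 0 := by exact_mod_cast Nat.factorial_ne_zero _
  have h3 : ∑ k ∈ Finset.Icc 1 (M+1), (-1 : ℚ) ^ k * ((M+1).choose k : ℚ) *
      (C R⁻¹ * (X * ∏ j ∈ Finset.range (b + M),
        (X + C (((b + M + 1 + d + 1 : ℕ) : ℚ) - 1 - (j : ℚ))))).eval (-(k : ℚ)) =
      R⁻¹ * ((M + 1 : ℚ) * ∑ i ∈ Finset.range (M+1), (-1:ℚ)^i * (M.choose i : ℚ) *
      ∏ j ∈ Finset.range (b+M), (((b + d + M : ℕ) : ℚ) - (i:ℚ) - (j:ℚ))) := by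
    rw [← Finset.Ico_add_one_right_eq_Icc, Finset.sum_Ico_eq_sum_range, Finset.mul_sum,
      Finset.mul_sum, show M + 1 + 1 - 1 = M + 1 by omega]
    apply Finset.sum_congr rfl
    intro i _
    rw [add_comm 1 i]
    have hc : ((M + 1 : ℚ)) * (M.choose i : ℚ) = ((M+1).choose (i+1) : ℚ) * ((i:ℚ) + 1) := by
      exact_mod_cast Nat.add_one_mul_choose_eq M i
    simp only [eval_mul, eval_C, eval_X, eval_prod, eval_add]
    have e : ∀ j : ℕ, -((i + 1 : ℕ) : ℚ) + (((b + M + 1 + d + 1 : ℕ) : ℚ) - 1 - (j : ℚ)) =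
        ((b + d + M : ℕ) : ℚ) - (i:ℚ) - (j:ℚ) := fun j => by push_cast; ring
    simp only [e]
    generalize ∏ j ∈ Finset.range (b+M), (((b + d + M : ℕ) : ℚ) - (i:ℚ) - (j:ℚ)) = P
    push_cast
    linear_combination (-(R⁻¹ * (-1)^i * P)) * hc
  rw [h3]
  generalize ∑ i ∈ Finset.range (M+1), (-1:ℚ)^i * (M.choose i : ℚ) *
      ∏ j ∈ Finset.range (b+M), (((b + d + M : ℕ) : ℚ) - (i:ℚ) - (j:ℚ)) = S at *
  generalize ∏ j ∈ Finset.range b, (((b + d : ℕ) : ℚ) - (j:ℚ)) = Q at *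
  rw [eq_div_iff (by positivity), ← h2]
  push_cast
  have : R⁻¹ * R = 1 := inv_mul_cancel₀ hR
  linear_combination ((M + 1 : ℚ) * S * d.factorial * b.factorial) * this +
    ((M + 1 : ℚ) * d.factorial) * h1
end
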